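/- Let (u, π, v, θ) be a smooth solution of the stationary 3D tropical climate model. Suppose p ∈ [3, 9/2], q ∈ [2p′, 6], r ∈ [2p′, 6] where p′ = p/(p−1), with 1/p + 2/q ≥ 2/3, 1/p + 2/r ≥ 2/3 and 1/q + 1/r ≥ 2/3, and u ∈ L^p(ℝ³), v ∈ L^q(ℝ³), θ ∈ L^r(ℝ³). Then u = 0, v = 0 and θ = 0 identically on ℝ³. -/

import Mathlib

/-!
Testing the system against `φ u + w`, `φ v`, `φ θ`, where `φ = ψ⁶` is a power of a cutoff `ψ` at
scale `R` and `w = ∑ᵢ ∂ᵢφ Aᵢⱼ` is built from a vector potential `A` of `u`, so that `φ u + w` is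
divergence-free, removes the pressure. The dissipation inside the ball of radius `R` is then bounded
by integrals over the annulus where `∇ψ` lives: lower-order terms such as `R⁻¹ ∫ |u|³` and
`R⁻¹ ∫ |θ| |v|`, which Hölder's inequality sends to zero under the integrability assumptions, and
the terms `∫ ψ⁴ √G (|u|² + |v|²)`, where `G` controls the derivatives of `w`. The latter are handled
by Hölder's inequality if the exponent `s` of the field is at least `4`; otherwise they are
interpolated between `Lˢ` and the Sobolev bound in `L⁶`, and absorbed into the dissipation. Hence
the dissipation vanishes, the fields are constant, and integrability makes them zero.
-/

open MeasureTheory Filter Metric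

noncomputable section

abbrev R3 : Type := EuclideanSpace ℝ (Fin 3)

/-- Partial derivative of `f` in the `j`-th coordinate direction. -/
def pd (f : R3 → ℝ) (j : Fin 3) (x : R3) : ℝ :=
  fderiv ℝ f x (EuclideanSpace.single j 1)

/-- Laplacian of `f`. -/
def lap (f : R3 → ℝ) (x : R3) : ℝ := ∑ j, pd (pd f j) j x

/-- The stationary 3D tropical climate model:
`-Δu + (u·∇)u + ∇π + div(v⊗v) = 0`, `-Δv + (u·∇)v + ∇θ + (v·∇)u = 0`,
`-Δθ + u·∇θ + div v = 0`, `div u = 0`. -/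
def TCM (u v : R3 → R3) (pr θ : R3 → ℝ) : Prop :=
  (∀ i x, -lap (fun y => u y i) x + (∑ j, u x j * pd (fun y => u y i) j x)
      + pd pr i x + (∑ j, pd (fun y => v y j * v y i) j x) = 0) ∧
  (∀ i x, -lap (fun y => v y i) x + (∑ j, u x j * pd (fun y => v y i) j x)
      + pd θ i x + (∑ j, v x j * pd (fun y => u y i) j x) = 0) ∧
  (∀ x, -lap θ x + (∑ j, u x j * pd θ j x) + (∑ j, pd (fun y => v y j) j x) = 0) ∧
  (∀ x, (∑ j, pd (fun y => u y j) j x) = 0)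

open scoped ContDiff Topology

/-! ### Partial derivatives of smooth functions -/

/-- The divergence of the vector field with components `F 0, F 1, F 2`. -/
def divergence (F : Fin 3 → R3 → ℝ) (x : R3) : ℝ := ∑ i, pd (F i) i x

/-- The squared length `|∇f|²` of the gradient. -/
def gradSq (f : R3 → ℝ) (x : R3) : ℝ := ∑ j, pd f j x ^ 2

section PartialDerivatives

variable {f g : R3 → ℝ} {x : R3}

@[fun_prop]
theorem differentiableAt_of_smooth (hf : ContDiff ℝ ∞ f) (x : R3) : DifferentiableAt ℝ f x :=
  hf.differentiable (by simp) x

@[fun_prop]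
theorem contDiff_pd (hf : ContDiff ℝ ∞ f) (j : Fin 3) : ContDiff ℝ ∞ (pd f j) :=
  (hf.fderiv_right (m := ∞) (by simp)).clm_apply contDiff_const

@[fun_prop]
theorem continuous_pd (hf : ContDiff ℝ ∞ f) (j : Fin 3) : Continuous (pd f j) :=
  (contDiff_pd hf j).continuous

@[fun_prop]
theorem contDiff_lap (hf : ContDiff ℝ ∞ f) : ContDiff ℝ ∞ (lap f) := by
  unfold lap
  fun_prop

@[fun_prop]
theorem continuous_gradSq (hf : ContDiff ℝ ∞ f) : Continuous (gradSq f) := by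
  unfold gradSq
  fun_prop

theorem gradSq_nonneg (f : R3 → ℝ) (x : R3) : 0 ≤ gradSq f x :=
  Finset.sum_nonneg fun _ _ => sq_nonneg _

theorem pd_const (c : ℝ) (j : Fin 3) : pd (fun _ => c) j x = 0 := by
  simp [pd]

theorem pd_neg (f : R3 → ℝ) (j : Fin 3) : pd (fun y => -f y) j x = -pd f j x := by
  simp [pd, fderiv_fun_neg]

theorem pd_add (hf : DifferentiableAt ℝ f x) (hg : DifferentiableAt ℝ g x) (j : Fin 3) :
    pd (fun y => f y + g y) j x = pd f j x + pd g j x := by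
  simp [pd, fderiv_fun_add hf hg]

theorem pd_sub (hf : DifferentiableAt ℝ f x) (hg : DifferentiableAt ℝ g x) (j : Fin 3) :
    pd (fun y => f y - g y) j x = pd f j x - pd g j x := by
  simp [pd, fderiv_fun_sub hf hg]

theorem pd_mul (hf : DifferentiableAt ℝ f x) (hg : DifferentiableAt ℝ g x) (j : Fin 3) :
    pd (fun y => f y * g y) j x = f x * pd g j x + pd f j x * g x := by
  simp [pd, fderiv_fun_mul hf hg, mul_comm]

theorem pd_pow (hf : DifferentiableAt ℝ f x) (n : ℕ) (j : Fin 3) :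
    pd (fun y => f y ^ n) j x = n * f x ^ (n - 1) * pd f j x := by
  simp [pd, fderiv_fun_pow n hf]

theorem pd_sum {ι : Type*} {s : Finset ι} {F : ι → R3 → ℝ}
    (hF : ∀ i ∈ s, DifferentiableAt ℝ (F i) x) (j : Fin 3) :
    pd (fun y => ∑ i ∈ s, F i y) j x = ∑ i ∈ s, pd (F i) j x := by
  simp [pd, fderiv_fun_sum hF]

theorem pd_coord (i j : Fin 3) : pd (fun y => y i) j x = if i = j then 1 else 0 := by
  have h : (fun y : R3 => y i) = EuclideanSpace.proj (𝕜 := ℝ) i := rfl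
  unfold pd
  rw [h, ContinuousLinearMap.fderiv]
  simp

theorem pd_comp_smul (f : R3 → ℝ) (c : ℝ) (j : Fin 3) :
    pd (fun y => f (c • y)) j x = c * pd f j (c • x) := by
  simp [pd, fderiv_comp_smul (f := f) c]

theorem pd_comm (hf : ContDiff ℝ ∞ f) (i j : Fin 3) : pd (pd f i) j = pd (pd f j) i := by
  have hd : Differentiable ℝ (fderiv ℝ f) :=
    (hf.fderiv_right (m := ∞) (by simp)).differentiable (by simp)
  have key (a b : Fin 3) (x : R3) : pd (pd f a) b x =
      fderiv ℝ (fderiv ℝ f) x (EuclideanSpace.single b 1) (EuclideanSpace.single a 1) := by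
    unfold pd
    simp [fderiv_clm_apply (hd x) (differentiableAt_const _)]
  ext x
  have hsymm : IsSymmSndFDerivAt ℝ f x := hf.contDiffAt.isSymmSndFDerivAt (by
    simpa using WithTop.coe_le_coe.2 (le_top : (2 : ℕ∞) ≤ ⊤))
  rw [key, key, hsymm.eq]

theorem lap_pd (hf : ContDiff ℝ ∞ f) (j : Fin 3) : lap (pd f j) = pd (lap f) j := by
  ext x
  unfold lap
  rw [pd_sum (fun i _ => by fun_prop)]
  exact Finset.sum_congr rfl fun i _ => by rw [pd_comm hf j i, pd_comm (contDiff_pd hf i)]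

theorem fderiv_apply_eq_sum_pd (f : R3 → ℝ) (x y : R3) :
    fderiv ℝ f x y = ∑ j, y j * pd f j x := by
  conv_lhs => rw [← (EuclideanSpace.basisFun (Fin 3) ℝ).sum_repr y]
  simp [pd]

theorem norm_fderiv_sq_le_gradSq (f : R3 → ℝ) (x : R3) : ‖fderiv ℝ f x‖ ^ 2 ≤ gradSq f x := by
  refine Real.le_sqrt (norm_nonneg _) (gradSq_nonneg f x) |>.1 ?_
  refine ContinuousLinearMap.opNorm_le_bound _ (Real.sqrt_nonneg _) fun y => ?_
  rw [fderiv_apply_eq_sum_pd, EuclideanSpace.norm_eq, Real.norm_eq_abs, mul_comm,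
    ← Real.sqrt_mul (Finset.sum_nonneg fun _ _ => sq_nonneg _)]
  simp only [Real.norm_eq_abs, sq_abs]
  exact Real.abs_le_sqrt (Finset.sum_mul_sq_le_sq_mul_sq _ _ _)

theorem tsupport_pd_subset (f : R3 → ℝ) (j : Fin 3) : tsupport (pd f j) ⊆ tsupport f :=
  tsupport_fderiv_apply_subset ℝ _

theorem pd_eq_zero_of_notMem_tsupport (hx : x ∉ tsupport f) (j : Fin 3) : pd f j x = 0 :=
  image_eq_zero_of_notMem_tsupport fun h => hx (tsupport_pd_subset f j h)

theorem lap_eq_zero_of_notMem_tsupport (hx : x ∉ tsupport f) : lap f x = 0 :=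
  Finset.sum_eq_zero fun j _ =>
    pd_eq_zero_of_notMem_tsupport (fun h => hx (tsupport_pd_subset f j h)) j

theorem hasCompactSupport_pd (hf : HasCompactSupport f) (j : Fin 3) :
    HasCompactSupport (pd f j) :=
  hf.fderiv_apply ℝ _

theorem hasCompactSupport_sum {ι : Type*} {s : Finset ι} {F : ι → R3 → ℝ}
    (hF : ∀ i ∈ s, HasCompactSupport (F i)) : HasCompactSupport fun x => ∑ i ∈ s, F i x := by
  classical
  induction s using Finset.induction_on with
  | empty => exact HasCompactSupport.zero
  | insert a s ha ih =>
    simp only [Finset.sum_insert ha]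
    exact (hF a (by simp)).add (ih fun i hi => hF i (Finset.mem_insert_of_mem hi))

end PartialDerivatives

/-! ### Exact divergences and energy identities -/

/-- `g` is the divergence of a smooth compactly supported vector field, so that integrating
an identity modulo such functions amounts to integrating by parts. -/
def IsExactDivergence (g : R3 → ℝ) : Prop :=
  ∃ F : Fin 3 → R3 → ℝ,
    (∀ i, ContDiff ℝ ∞ (F i)) ∧ (∀ i, HasCompactSupport (F i)) ∧ ∀ x, g x = divergence F x

theorem integral_pd_eq_zero {f : R3 → ℝ} (hf : ContDiff ℝ ∞ f) (hc : HasCompactSupport f)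
    (j : Fin 3) : ∫ x, pd f j x = 0 := by
  have hf_int : Integrable f := hf.continuous.integrable_of_hasCompactSupport hc
  have hpd_int : Integrable (pd f j) :=
    (continuous_pd hf j).integrable_of_hasCompactSupport (hasCompactSupport_pd hc j)
  have h := integral_mul_fderiv_eq_neg_fderiv_mul_of_integrable (μ := (volume : Measure R3))
    (f := fun _ : R3 => (1 : ℝ)) (g := f) (v := EuclideanSpace.single j 1)
    (by simp) (by simp only [one_mul]; exact hpd_int) (by simpa only [one_mul] using hf_int)
    (fun x _ => by fun_prop) (fun x _ => by fun_prop)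
  simpa [pd] using h

namespace IsExactDivergence

variable {g h : R3 → ℝ}

theorem integrable (hg : IsExactDivergence g) : Integrable g := by
  obtain ⟨F, hF, hc, hgF⟩ := hg
  rw [funext hgF]
  exact integrable_finsetSum _ fun i _ =>
    (continuous_pd (hF i) i).integrable_of_hasCompactSupport (hasCompactSupport_pd (hc i) i)

theorem integral_eq_zero (hg : IsExactDivergence g) : ∫ x, g x = 0 := by
  obtain ⟨F, hF, hc, hgF⟩ := hg
  simp only [hgF, divergence]
  rw [integral_finsetSum _ fun i _ =>
    (continuous_pd (hF i) i).integrable_of_hasCompactSupport (hasCompactSupport_pd (hc i) i)]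
  exact Finset.sum_eq_zero fun i _ => integral_pd_eq_zero (hF i) (hc i) i

theorem sum {ι : Type*} {s : Finset ι} {G : ι → R3 → ℝ}
    (hG : ∀ i ∈ s, IsExactDivergence (G i)) : IsExactDivergence fun x => ∑ i ∈ s, G i x := by
  choose! F hF hc hGF using hG
  refine ⟨fun j x => ∑ i ∈ s, F i j x, fun j => ContDiff.sum fun i hi => hF i hi j,
    fun j => hasCompactSupport_sum fun i hi => hc i hi j, fun x => ?_⟩
  simp only [divergence]
  rw [Finset.sum_congr rfl fun j _ =>
    pd_sum (fun i hi => differentiableAt_of_smooth (hF i hi j) x) j, Finset.sum_comm]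
  exact Finset.sum_congr rfl fun i hi => hGF i hi x

theorem add (hg : IsExactDivergence g) (hh : IsExactDivergence h) :
    IsExactDivergence fun x => g x + h x := by
  have hsum : IsExactDivergence fun x => ∑ i, (![g, h] i) x :=
    sum fun i _ => by fin_cases i <;> assumption
  simpa using hsum

end IsExactDivergence

/-- The transport-diffusion operator `-Δf + (b·∇)f` common to the three equations of `TCM`. -/
def transportDiffusion (b : Fin 3 → R3 → ℝ) (f : R3 → ℝ) (x : R3) : ℝ :=
  -lap f x + ∑ j, b j x * pd f j x

section EnergyIdentities

variable {f φ w : R3 → ℝ} {b : Fin 3 → R3 → ℝ}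

theorem isExactDivergence_divergence_mul {F : Fin 3 → R3 → ℝ} (hF : ∀ i, ContDiff ℝ ∞ (F i))
    (hw : ContDiff ℝ ∞ w) (hc : ∀ i, HasCompactSupport fun x => F i x * w x) :
    IsExactDivergence fun x => divergence F x * w x + ∑ j, F j x * pd w j x := by
  refine ⟨fun i x => F i x * w x, fun i => by fun_prop, hc, fun x => ?_⟩
  simp (disch := fun_prop) only [divergence, pd_mul, Finset.sum_add_distrib, ← Finset.sum_mul]
  ring

theorem isExactDivergence_transportDiffusion_mul (hf : ContDiff ℝ ∞ f) (hw : ContDiff ℝ ∞ w)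
    (hc : HasCompactSupport w) (hb : ∀ i, ContDiff ℝ ∞ (b i)) (hdiv : ∀ x, divergence b x = 0) :
    IsExactDivergence fun x => transportDiffusion b f x * w x
      - (∑ j, pd f j x * pd w j x) + f x * ∑ j, b j x * pd w j x := by
  refine ⟨fun j x => (b j x * f x - pd f j x) * w x, fun j => by fun_prop,
    fun j => hc.mul_left, fun x => ?_⟩
  have hdivx := hdiv x
  simp (disch := fun_prop) only [divergence, transportDiffusion, lap, pd_mul, pd_sub,
    Fin.sum_univ_three] at hdivx ⊢
  linear_combination -(f x * w x) * hdivx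

theorem isExactDivergence_localEnergy (hf : ContDiff ℝ ∞ f) (hφ : ContDiff ℝ ∞ φ)
    (hc : HasCompactSupport φ) (hb : ∀ i, ContDiff ℝ ∞ (b i)) (hdiv : ∀ x, divergence b x = 0) :
    IsExactDivergence fun x => transportDiffusion b f x * (φ x * f x) - φ x * gradSq f x
      + 1 / 2 * (f x ^ 2 * (lap φ x + ∑ j, b j x * pd φ j x)) := by
  refine ⟨fun j x => φ x * ((1 / 2 * b j x * f x - pd f j x) * f x)
      + pd φ j x * (1 / 2 * f x ^ 2), fun j => by fun_prop,
    fun j => HasCompactSupport.intro hc.isCompact fun x hx => ?_, fun x => ?_⟩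
  · simp [image_eq_zero_of_notMem_tsupport hx, pd_eq_zero_of_notMem_tsupport hx]
  have hdivx := hdiv x
  simp (disch := fun_prop) only [divergence, transportDiffusion, lap, gradSq, pd_add, pd_mul,
    pd_sub, pd_pow, pd_const, Fin.sum_univ_three] at hdivx ⊢
  push_cast
  linear_combination -(1 / 2 * φ x * f x ^ 2) * hdivx

end EnergyIdentities

/-! ### Cutoff functions -/

/-- The closed annulus `R ≤ |x| ≤ 2R`. -/
def annulus (R : ℝ) : Set R3 := closedBall 0 (2 * R) \ ball 0 R

theorem isCompact_annulus (R : ℝ) : IsCompact (annulus R) :=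
  (isCompact_closedBall _ _).diff isOpen_ball

theorem annulus_subset_closedBall (R : ℝ) : annulus R ⊆ closedBall 0 (2 * R) :=
  Set.sdiff_subset

/-- `χ` is a smooth cutoff function equal to `1` on the ball of radius `a` and supported in the
ball of radius `b`. -/
structure IsCutoff (a b : ℝ) (χ : R3 → ℝ) : Prop where
  contDiff : ContDiff ℝ ∞ χ
  nonneg : ∀ x, 0 ≤ χ x
  le_one : ∀ x, χ x ≤ 1
  eq_one : ∀ x ∈ closedBall (0 : R3) a, χ x = 1
  tsupport_subset : tsupport χ ⊆ closedBall (0 : R3) b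

theorem exists_isCutoff {a b : ℝ} (ha : 0 < a) (hab : a < b) : ∃ χ, IsCutoff a b χ := by
  let f : ContDiffBump (0 : R3) := ⟨a, b, ha, hab⟩
  exact ⟨f, f.contDiff, fun _ => f.nonneg, fun _ => f.le_one,
    fun _ hx => f.one_of_mem_closedBall hx, f.tsupport_eq.subset⟩

theorem pd_congr_of_eventuallyEq {f g : R3 → ℝ} {x : R3} (h : f =ᶠ[𝓝 x] g) (j : Fin 3) :
    pd f j x = pd g j x := by
  unfold pd
  rw [h.fderiv_eq]

namespace IsCutoff

variable {a b R : ℝ} {χ : R3 → ℝ}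

theorem hasCompactSupport (h : IsCutoff a b χ) : HasCompactSupport χ :=
  (isCompact_closedBall (0 : R3) b).of_isClosed_subset (isClosed_tsupport _) h.tsupport_subset

theorem notMem_tsupport (h : IsCutoff a b χ) {x : R3} (hx : x ∉ closedBall (0 : R3) b) :
    x ∉ tsupport χ :=
  fun hx' => hx (h.tsupport_subset hx')

theorem eq_zero (h : IsCutoff a b χ) {x : R3} (hx : x ∉ closedBall (0 : R3) b) : χ x = 0 :=
  image_eq_zero_of_notMem_tsupport (h.notMem_tsupport hx)

theorem pd_eq_zero (h : IsCutoff a b χ) {x : R3} (hx : x ∉ closedBall (0 : R3) b \ ball 0 a)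
    (j : Fin 3) : pd χ j x = 0 := by
  by_cases hxb : x ∈ closedBall (0 : R3) b
  · have hxa : x ∈ ball (0 : R3) a := by_contra fun hxa => hx ⟨hxb, hxa⟩
    have hχ : χ =ᶠ[𝓝 x] fun _ => 1 := eventuallyEq_of_mem (isOpen_ball.mem_nhds hxa)
      fun y hy => h.eq_one y (ball_subset_closedBall hy)
    rw [pd_congr_of_eventuallyEq hχ, pd_const]
  · exact pd_eq_zero_of_notMem_tsupport (h.notMem_tsupport hxb) j

theorem tsupport_pd_subset (h : IsCutoff a b χ) (j : Fin 3) :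
    tsupport (pd χ j) ⊆ closedBall (0 : R3) b \ ball 0 a :=
  closure_minimal (fun _ hx => by_contra fun hx' => hx (h.pd_eq_zero hx' j))
    (isClosed_closedBall.sdiff isOpen_ball)

theorem pow (h : IsCutoff a b χ) {n : ℕ} (hn : n ≠ 0) : IsCutoff a b fun x => χ x ^ n where
  contDiff := h.contDiff.pow n
  nonneg x := pow_nonneg (h.nonneg x) n
  le_one x := pow_le_one₀ (h.nonneg x) (h.le_one x)
  eq_one x hx := by simp [h.eq_one x hx]
  tsupport_subset :=
    closure_minimal (fun x hx => by_contra fun hx' => hx (by simp [h.eq_zero hx', hn]))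
      isClosed_closedBall

theorem comp_inv_smul (h : IsCutoff a b χ) (hR : 0 < R) :
    IsCutoff (R * a) (R * b) fun x => χ (R⁻¹ • x) := by
  have hmem (c : ℝ) (x : R3) :
      R⁻¹ • x ∈ closedBall (0 : R3) c ↔ x ∈ closedBall (0 : R3) (R * c) := by
    simp [norm_smul, abs_of_pos hR, inv_mul_le_iff₀ hR]
  exact ⟨h.contDiff.comp (contDiff_const_smul _), fun x => h.nonneg _, fun x => h.le_one _,
    fun x hx => h.eq_one _ ((hmem a x).2 hx),
    closure_minimal (fun x hx => (hmem b x).1 (h.tsupport_subset (subset_tsupport _ hx)))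
      isClosed_closedBall⟩

theorem exists_abs_pd_le (h : IsCutoff a b χ) :
    ∃ K, 1 ≤ K ∧ (∀ j x, |pd χ j x| ≤ K) ∧ ∀ j k x, |pd (pd χ j) k x| ≤ K := by
  have hbdd {g : R3 → ℝ} (hg : ContDiff ℝ ∞ g) (hc : HasCompactSupport g) :
      ∃ C, ∀ x, |g x| ≤ C := hc.exists_bound_of_continuous hg.continuous
  have hχ := h.contDiff
  have hc := h.hasCompactSupport
  choose K₁ hK₁ using fun j => hbdd (contDiff_pd hχ j) (hasCompactSupport_pd hc j)
  choose K₂ hK₂ using fun j k =>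
    hbdd (contDiff_pd (contDiff_pd hχ j) k) (hasCompactSupport_pd (hasCompactSupport_pd hc j) k)
  obtain ⟨M₁, hM₁⟩ := (Set.finite_range K₁).bddAbove
  obtain ⟨M₂, hM₂⟩ := (Set.finite_range fun jk : Fin 3 × Fin 3 => K₂ jk.1 jk.2).bddAbove
  refine ⟨max 1 (max M₁ M₂), le_max_left _ _, fun j x => ?_, fun j k x => ?_⟩
  · exact (hK₁ j x).trans ((hM₁ ⟨j, rfl⟩).trans (by simp))
  · exact (hK₂ j k x).trans ((hM₂ ⟨(j, k), rfl⟩).trans (by simp))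

end IsCutoff

/-- A cutoff function between the balls of radii `R` and `2R` whose derivatives obey the bounds
dictated by scaling, with a constant `M` independent of `R`. -/
structure IsAnnularCutoff (M R : ℝ) (ψ : R3 → ℝ) : Prop extends IsCutoff R (2 * R) ψ where
  one_le : 1 ≤ M
  abs_pd_le : ∀ j x, |pd ψ j x| ≤ M * R⁻¹
  abs_pd_pd_le : ∀ j k x, |pd (pd ψ j) k x| ≤ M * R⁻¹ ^ 2

theorem exists_isAnnularCutoff : ∃ M, ∀ R : ℝ, 0 < R → ∃ ψ, IsAnnularCutoff M R ψ := by
  obtain ⟨χ, hχ⟩ := exists_isCutoff (a := 1) (b := 2) one_pos one_lt_two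
  obtain ⟨M, hM1, hM, hM'⟩ := hχ.exists_abs_pd_le
  refine ⟨M, fun R hR => ⟨fun x => χ (R⁻¹ • x), ?_, hM1, fun j x => ?_, fun j k x => ?_⟩⟩
  · simpa only [mul_one, mul_comm R 2] using hχ.comp_inv_smul hR
  · rw [pd_comp_smul, abs_mul, abs_of_pos (inv_pos.2 hR), mul_comm]
    gcongr
    exact hM j _
  · have hpd : pd (fun y => χ (R⁻¹ • y)) j = fun y => R⁻¹ * pd χ j (R⁻¹ • y) :=
      funext fun y => pd_comp_smul χ R⁻¹ j
    have hsm : ContDiff ℝ ∞ fun y : R3 => pd χ j (R⁻¹ • y) :=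
      (contDiff_pd hχ.contDiff j).comp (contDiff_const_smul _)
    rw [hpd, pd_mul (differentiableAt_const _) (differentiableAt_of_smooth hsm x), pd_const,
      zero_mul, add_zero, pd_comp_smul, ← mul_assoc, ← sq, abs_mul,
      abs_of_nonneg (by positivity), mul_comm]
    gcongr
    exact hM' j k _

namespace IsAnnularCutoff

variable {M R : ℝ} {ψ : R3 → ℝ}

theorem pow_five_le (h : IsAnnularCutoff M R ψ) (x : R3) : ψ x ^ 5 ≤ ψ x ^ 4 :=
  pow_le_pow_of_le_one (h.nonneg x) (h.le_one x) (by norm_num)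

theorem abs_pd_pow_six_le (h : IsAnnularCutoff M R ψ) (hR : 0 < R) (j : Fin 3) (x : R3) :
    |pd (fun y => ψ y ^ 6) j x| ≤ 36 * M ^ 2 * R⁻¹ * ψ x ^ 4 := by
  have hψ := h.contDiff
  have hM := h.one_le
  have hψ5 := h.pow_five_le x
  rw [pd_pow (by fun_prop), abs_mul, abs_of_nonneg (by have := h.nonneg x; positivity)]
  calc _ ≤ 6 * ψ x ^ 4 * (M * R⁻¹) := by
        push_cast
        gcongr
        exact h.abs_pd_le j x
    _ = 6 * M * (R⁻¹ * ψ x ^ 4) := by ring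
    _ ≤ 36 * M ^ 2 * (R⁻¹ * ψ x ^ 4) :=
        mul_le_mul_of_nonneg_right (by nlinarith) (by have := h.nonneg x; positivity)
    _ = _ := by ring

theorem abs_pd_pd_pow_six_le (h : IsAnnularCutoff M R ψ) (j k : Fin 3) (x : R3) :
    |pd (pd (fun y => ψ y ^ 6) j) k x| ≤ 36 * M ^ 2 * R⁻¹ ^ 2 * ψ x ^ 4 := by
  have hψ := h.contDiff
  have hM := h.one_le
  have hψ0 := h.nonneg x
  have hψ5 := h.pow_five_le x
  have hpd : pd (fun y => ψ y ^ 6) j = fun y => 6 * ψ y ^ 5 * pd ψ j y :=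
    funext fun y => by rw [pd_pow (by fun_prop)]; norm_num
  have hpd2 : pd (pd (fun y => ψ y ^ 6) j) k x =
      6 * ψ x ^ 5 * pd (pd ψ j) k x + 30 * ψ x ^ 4 * (pd ψ k x * pd ψ j x) := by
    rw [hpd]
    simp (disch := fun_prop) only [pd_mul, pd_pow, pd_const]
    push_cast
    ring
  calc |pd (pd (fun y => ψ y ^ 6) j) k x|
      ≤ 6 * ψ x ^ 5 * |pd (pd ψ j) k x| + 30 * ψ x ^ 4 * (|pd ψ k x| * |pd ψ j x|) := by
        rw [hpd2, ← abs_mul (pd ψ k x)]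
        refine (abs_add_le _ _).trans (le_of_eq ?_)
        rw [abs_mul (6 * ψ x ^ 5), abs_mul (30 * ψ x ^ 4),
          abs_of_nonneg (a := 6 * ψ x ^ 5) (by positivity),
          abs_of_nonneg (a := 30 * ψ x ^ 4) (by positivity)]
    _ ≤ 6 * ψ x ^ 4 * (M * R⁻¹ ^ 2) + 30 * ψ x ^ 4 * ((M * R⁻¹) * (M * R⁻¹)) := by
        gcongr
        · exact h.abs_pd_pd_le j k x
        · exact (abs_nonneg _).trans (h.abs_pd_le k x)
        · exact h.abs_pd_le k x
        · exact h.abs_pd_le j x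
    _ = (6 * M + 30 * M ^ 2) * (R⁻¹ ^ 2 * ψ x ^ 4) := by ring
    _ ≤ 36 * M ^ 2 * (R⁻¹ ^ 2 * ψ x ^ 4) := by
        gcongr
        nlinarith
    _ = _ := by ring

end IsAnnularCutoff

section CompactIntegrals

variable {S : Set R3} {g h : R3 → ℝ}

theorem integral_le_setIntegral_of_eq_zero (hS : IsCompact S) (hg : Continuous g)
    (hh : Continuous h) (h0 : ∀ x ∉ S, g x = 0) (hle : ∀ x ∈ S, g x ≤ h x) :
    ∫ x, g x ≤ ∫ x in S, h x := by
  rw [← setIntegral_eq_integral_of_forall_compl_eq_zero h0]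
  exact setIntegral_mono_on (hg.continuousOn.integrableOn_compact hS)
    (hh.continuousOn.integrableOn_compact hS) hS.measurableSet hle

theorem setIntegral_le_integral_of_le (hS : IsCompact S) (hg : Continuous g) (hh : Continuous h)
    (hc : HasCompactSupport h) (h0 : ∀ x, 0 ≤ h x) (hle : ∀ x ∈ S, g x ≤ h x) :
    ∫ x in S, g x ≤ ∫ x, h x :=
  (setIntegral_mono_on (hg.continuousOn.integrableOn_compact hS)
    (hh.continuousOn.integrableOn_compact hS) hS.measurableSet hle).trans
    (setIntegral_le_integral (hh.integrable_of_hasCompactSupport hc) (.of_forall h0))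

theorem setIntegral_mono_of_continuous (hS : IsCompact S) (hg : Continuous g) (hh : Continuous h)
    (hle : ∀ x ∈ S, g x ≤ h x) : ∫ x in S, g x ≤ ∫ x in S, h x :=
  setIntegral_mono_on (hg.continuousOn.integrableOn_compact hS)
    (hh.continuousOn.integrableOn_compact hS) hS.measurableSet hle

end CompactIntegrals

/-! ### The Hessian estimate -/

theorem isExactDivergence_hessian {f φ : R3 → ℝ} (hf : ContDiff ℝ ∞ f) (hφ : ContDiff ℝ ∞ φ)
    (hc : HasCompactSupport φ) :
    IsExactDivergence fun x => 1 / 2 * (gradSq f x * lap φ x) + φ x * lap f x ^ 2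
      + lap f x * (∑ j, pd φ j x * pd f j x) - φ x * ∑ j, gradSq (pd f j) x := by
  have henergy : IsExactDivergence _ := IsExactDivergence.sum (s := Finset.univ) fun j _ =>
    isExactDivergence_localEnergy (b := fun _ _ => 0) (contDiff_pd hf j) hφ hc
      (fun _ => contDiff_const) (fun x => by simp [divergence, pd_const])
  have hdiv : IsExactDivergence _ := isExactDivergence_divergence_mul
    (F := fun j x => φ x * pd f j x) (w := lap f) (fun j => by fun_prop) (by fun_prop)
    (fun j => hc.mul_right.mul_right)
  convert henergy.add hdiv using 2 with x
  have hlap : lap f x = ∑ j, pd (pd f j) j x := rfl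
  simp (disch := fun_prop) only [divergence, transportDiffusion, gradSq, pd_mul, lap_pd hf,
    Fin.sum_univ_three] at hlap ⊢
  linear_combination (φ x * lap f x) * hlap

theorem abs_sum_mul_le {a b : Fin 3 → ℝ} {K : ℝ} (ha : ∀ j, |a j| ≤ K) :
    |∑ j, a j * b j| ≤ K * ∑ j, |b j| := by
  rw [Finset.mul_sum]
  refine (Finset.abs_sum_le_sum_abs _ _).trans (Finset.sum_le_sum fun j _ => ?_)
  rw [abs_mul]
  exact mul_le_mul_of_nonneg_right (ha j) (abs_nonneg _)

theorem sum_abs_sq_le (a : Fin 3 → ℝ) : (∑ j, |a j|) ^ 2 ≤ 3 * ∑ j, a j ^ 2 := by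
  simpa using sq_sum_le_card_mul_sum_sq (s := Finset.univ) (f := fun j => |a j|)

theorem abs_lap_le {f : R3 → ℝ} {x : R3} {K : ℝ} (hK : ∀ j, |pd (pd f j) j x| ≤ K) :
    |lap f x| ≤ 3 * K := by
  refine (Finset.abs_sum_le_sum_abs _ _).trans ((Finset.sum_le_sum fun j _ => hK j).trans ?_)
  simp

theorem hessian_flux_le {f φ : R3 → ℝ} {x : R3} {K : ℝ} (hφ1 : φ x ≤ 1)
    (hK : ∀ j, |pd φ j x| ≤ K) (hK' : ∀ j, |pd (pd φ j) j x| ≤ K) :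
    1 / 2 * (gradSq f x * lap φ x) + φ x * lap f x ^ 2 + lap f x * ∑ j, pd φ j x * pd f j x
      ≤ (3 * K + 1) * (gradSq f x + lap f x ^ 2) := by
  have hK0 : 0 ≤ K := (abs_nonneg _).trans (hK 0)
  have hgrad := gradSq_nonneg f x
  have hlap : gradSq f x * lap φ x ≤ gradSq f x * (3 * K) :=
    mul_le_mul_of_nonneg_left ((le_abs_self _).trans (abs_lap_le hK')) hgrad
  have hsq : φ x * lap f x ^ 2 ≤ lap f x ^ 2 := mul_le_of_le_one_left (sq_nonneg _) hφ1
  have hsum : (∑ j, |pd f j x|) ^ 2 ≤ 3 * gradSq f x := sum_abs_sq_le _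
  have hcross : lap f x * ∑ j, pd φ j x * pd f j x
      ≤ K * ((3 * lap f x ^ 2 + gradSq f x) / 2) := by
    calc _ ≤ |lap f x| * |∑ j, pd φ j x * pd f j x| := by rw [← abs_mul]; exact le_abs_self _
      _ ≤ |lap f x| * (K * ∑ j, |pd f j x|) := by gcongr; exact abs_sum_mul_le hK
      _ = K * (|lap f x| * ∑ j, |pd f j x|) := by ring
      _ ≤ _ := by
        gcongr
        nlinarith [sq_nonneg (3 * |lap f x| - ∑ j, |pd f j x|), sq_abs (lap f x)]
  nlinarith [sq_nonneg (lap f x), mul_nonneg hK0 hgrad, mul_nonneg hK0 (sq_nonneg (lap f x))]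

theorem setIntegral_hessian_le {a b : ℝ} (ha : 0 < a) (hab : a < b) :
    ∃ C, 0 ≤ C ∧ ∀ f : R3 → ℝ, ContDiff ℝ ∞ f →
      ∫ x in closedBall (0 : R3) a, ∑ j, gradSq (pd f j) x
        ≤ C * ∫ x in closedBall (0 : R3) b, (gradSq f x + lap f x ^ 2) := by
  obtain ⟨χ, hχ⟩ := exists_isCutoff ha hab
  obtain ⟨K, hK1, hK, hK'⟩ := hχ.exists_abs_pd_le
  refine ⟨3 * K + 1, by positivity, fun f hf => ?_⟩
  have hχs := hχ.contDiff
  have hexact := isExactDivergence_hessian hf hχs hχ.hasCompactSupport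
  have hint : Integrable fun x => χ x * ∑ j, gradSq (pd f j) x :=
    Continuous.integrable_of_hasCompactSupport (by fun_prop) hχ.hasCompactSupport.mul_right
  rw [← integral_const_mul]
  calc ∫ x in closedBall (0 : R3) a, ∑ j, gradSq (pd f j) x
      ≤ ∫ x, χ x * ∑ j, gradSq (pd f j) x :=
        setIntegral_le_integral_of_le (isCompact_closedBall _ _) (by fun_prop) (by fun_prop)
          hχ.hasCompactSupport.mul_right
          (fun x => mul_nonneg (hχ.nonneg x) (Finset.sum_nonneg fun j _ => gradSq_nonneg _ x))
          (fun x hx => by rw [hχ.eq_one x hx, one_mul])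
    _ = ∫ x, (1 / 2 * (gradSq f x * lap χ x) + χ x * lap f x ^ 2
          + lap f x * ∑ j, pd χ j x * pd f j x) := by
        have h := integral_add hexact.integrable hint
        rw [hexact.integral_eq_zero, zero_add] at h
        simpa only [sub_add_cancel] using h.symm
    _ ≤ _ := by
        refine integral_le_setIntegral_of_eq_zero (isCompact_closedBall _ _) (by fun_prop)
          (by fun_prop) (fun x hx => ?_) (fun x _ => ?_)
        · simp [lap_eq_zero_of_notMem_tsupport (hχ.notMem_tsupport hx), hχ.eq_zero hx,
            pd_eq_zero_of_notMem_tsupport (hχ.notMem_tsupport hx)]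
        · exact hessian_flux_le (hχ.le_one x) (fun j => hK j x) fun j => hK' j j x

/-! ### Averaging operators -/

theorem sq_integral_mul_le {Ω : Type*} [MeasurableSpace Ω] {μ : Measure Ω} {g h : Ω → ℝ}
    (hg : Integrable (fun t => g t ^ 2) μ) (hh : Integrable (fun t => h t ^ 2) μ)
    (hgh : Integrable (fun t => g t * h t) μ) :
    (∫ t, g t * h t ∂μ) ^ 2 ≤ (∫ t, g t ^ 2 ∂μ) * ∫ t, h t ^ 2 ∂μ := by
  have hquad (s : ℝ) : 0 ≤ (∫ t, g t ^ 2 ∂μ) * (s * s) + (2 * ∫ t, g t * h t ∂μ) * s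
      + ∫ t, h t ^ 2 ∂μ := by
    calc 0 ≤ ∫ t, (s * g t + h t) ^ 2 ∂μ := integral_nonneg fun t => sq_nonneg _
      _ = ∫ t, ((s * s) * g t ^ 2 + (2 * s) * (g t * h t) + h t ^ 2) ∂μ := by
        congr 1 with t
        ring
      _ = (s * s) * (∫ t, g t ^ 2 ∂μ) + (2 * s) * (∫ t, g t * h t ∂μ) + ∫ t, h t ^ 2 ∂μ := by
        rw [integral_add (f := fun t => (s * s) * g t ^ 2 + (2 * s) * (g t * h t))
          ((hg.const_mul _).add (hgh.const_mul _)) hh,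
          integral_add (hg.const_mul _) (hgh.const_mul _), integral_const_mul, integral_const_mul]
      _ = _ := by ring
  have := discrim_le_zero hquad
  unfold discrim at this
  nlinarith

section Smear

variable {T : Type*} [MeasureSpace T]

/-- The average of `f` against the weight `k` along the affine maps `x ↦ a t • x + γ t`, `t ∈ S`. -/
def smear (S : Set T) (k a : T → ℝ) (γ : T → R3) (f : R3 → ℝ) (x : R3) : ℝ :=
  ∫ t in S, k t * f (a t • x + γ t)

variable {S : Set T} {k a : T → ℝ} {γ : T → R3} {f : R3 → ℝ}

theorem smear_zero : smear S k a γ (fun _ => 0) = fun _ => 0 := by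
  ext x
  simp [smear]

variable [TopologicalSpace T] [T2Space T] [OpensMeasurableSpace T]
  [IsFiniteMeasureOnCompacts (volume : Measure T)]

theorem hasFDerivAt_smear (hS : IsCompact S) (hk : Continuous k) (ha : Continuous a)
    (hγ : Continuous γ) (hf : ContDiff ℝ ∞ f) (x : R3) :
    HasFDerivAt (smear S k a γ f)
      (∫ t in S, (k t * a t) • fderiv ℝ f (a t • x + γ t)) x := by
  have hf' : Continuous (fderiv ℝ f) := hf.continuous_fderiv (by simp)
  have hf_cont := hf.continuous
  have hF' : Continuous fun z : R3 × T => (k z.2 * a z.2) • fderiv ℝ f (a z.2 • z.1 + γ z.2) := by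
    fun_prop
  obtain ⟨C, hC⟩ :=
    ((isCompact_closedBall x 1).prod hS).exists_bound_of_continuousOn hF'.continuousOn
  refine hasFDerivAt_integral_of_dominated_of_fderiv_le (s := ball x 1) (bound := fun _ => C)
    (F' := fun x t => (k t * a t) • fderiv ℝ f (a t • x + γ t)) (ball_mem_nhds x one_pos)
    (.of_forall fun y => Continuous.aestronglyMeasurable (by fun_prop))
    (ContinuousOn.integrableOn_compact hS (by fun_prop))
    (Continuous.aestronglyMeasurable (by fun_prop)) ?_
    (continuousOn_const.integrableOn_compact hS) (.of_forall fun t y _ => ?_)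
  · exact (ae_restrict_iff' hS.measurableSet).2 (.of_forall fun t ht y hy =>
      hC (y, t) ⟨ball_subset_closedBall hy, ht⟩)
  · have haffine :
        HasFDerivAt (fun y : R3 => a t • y + γ t) (a t • ContinuousLinearMap.id ℝ R3) y :=
      ((hasFDerivAt_id y).const_smul (a t)).add_const _
    have hfy := (differentiableAt_of_smooth hf (a t • y + γ t)).hasFDerivAt
    refine ((hfy.comp y haffine).const_mul (k t)).congr_fderiv ?_
    ext v
    simp [mul_assoc]

theorem fderiv_smear_apply (hS : IsCompact S) (hk : Continuous k) (ha : Continuous a)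
    (hγ : Continuous γ) (hf : ContDiff ℝ ∞ f) (x v : R3) :
    fderiv ℝ (smear S k a γ f) x v
      = smear S (fun t => k t * a t) a γ (fun y => fderiv ℝ f y v) x := by
  have hf' : Continuous (fderiv ℝ f) := hf.continuous_fderiv (by simp)
  rw [(hasFDerivAt_smear hS hk ha hγ hf x).fderiv, ContinuousLinearMap.integral_apply]
  · rfl
  · exact ContinuousOn.integrableOn_compact hS (by fun_prop)

theorem pd_smear (hS : IsCompact S) (hk : Continuous k) (ha : Continuous a)
    (hγ : Continuous γ) (hf : ContDiff ℝ ∞ f) (j : Fin 3) :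
    pd (smear S k a γ f) j = smear S (fun t => k t * a t) a γ (pd f j) :=
  funext fun x => fderiv_smear_apply hS hk ha hγ hf x _

theorem contDiff_smear (hS : IsCompact S) (hk : Continuous k) (ha : Continuous a)
    (hγ : Continuous γ) (hf : ContDiff ℝ ∞ f) : ContDiff ℝ ∞ (smear S k a γ f) := by
  refine contDiff_infty.2 fun n => ?_
  induction n generalizing k f with
  | zero =>
    exact_mod_cast contDiff_zero.2 (continuous_iff_continuousAt.2 fun x =>
      (hasFDerivAt_smear hS hk ha hγ hf x).continuousAt)
  | succ n ih =>
    push_cast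
    rw [contDiff_succ_iff_fderiv]
    refine ⟨fun x => (hasFDerivAt_smear hS hk ha hγ hf x).differentiableAt, by simp,
      contDiff_clm_apply_iff.2 fun v => ?_⟩
    rw [funext fun x => fderiv_smear_apply hS hk ha hγ hf x v]
    exact ih (hk.mul ha) ((hf.fderiv_right (m := ∞) (by simp)).clm_apply contDiff_const)

theorem smear_sum (hS : IsCompact S) (hk : Continuous k) (ha : Continuous a) (hγ : Continuous γ)
    {ι : Type*} {s : Finset ι} {F : ι → R3 → ℝ} (hF : ∀ i ∈ s, Continuous (F i)) (x : R3) :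
    smear S k a γ (fun y => ∑ i ∈ s, F i y) x = ∑ i ∈ s, smear S k a γ (F i) x := by
  simp only [smear, Finset.mul_sum]
  refine integral_finsetSum _ fun i hi => ContinuousOn.integrableOn_compact hS ?_
  have := hF i hi
  fun_prop

theorem divergence_smear_eq_zero (hS : IsCompact S) (hk : Continuous k) (ha : Continuous a)
    (hγ : Continuous γ) {F : Fin 3 → R3 → ℝ} (hF : ∀ i, ContDiff ℝ ∞ (F i))
    (hdiv : ∀ x, divergence F x = 0) (x : R3) :
    divergence (fun i => smear S k a γ (F i)) x = 0 := by
  simp only [divergence, fun i => pd_smear hS hk ha hγ (hF i)] at hdiv ⊢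
  rw [← smear_sum hS (by fun_prop) ha hγ fun i _ => by fun_prop, funext hdiv, smear_zero]

theorem smear_sq_le (hS : IsCompact S) (hk : Continuous k) (ha : Continuous a)
    (hγ : Continuous γ) (hf : Continuous f) (x : R3) :
    smear S k a γ f x ^ 2 ≤ (∫ t in S, k t ^ 2) * ∫ t in S, f (a t • x + γ t) ^ 2 :=
  sq_integral_mul_le (ContinuousOn.integrableOn_compact hS (by fun_prop))
    (ContinuousOn.integrableOn_compact hS (by fun_prop))
    (ContinuousOn.integrableOn_compact hS (by fun_prop))

theorem setIntegral_closedBall_mono {g : R3 → ℝ} {r s : ℝ} (hg : Continuous g)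
    (h0 : ∀ x, 0 ≤ g x) (hrs : r ≤ s) :
    ∫ x in closedBall (0 : R3) r, g x ≤ ∫ x in closedBall (0 : R3) s, g x :=
  setIntegral_mono_set (hg.continuousOn.integrableOn_compact (isCompact_closedBall _ _))
    (.of_forall h0) (closedBall_subset_closedBall hrs).eventuallyLE

theorem setIntegral_closedBall_add_le {g : R3 → ℝ} {r c : ℝ} {y : R3} (hg : Continuous g)
    (h0 : ∀ x, 0 ≤ g x) (hy : ‖y‖ ≤ c) :
    ∫ x in closedBall (0 : R3) r, g (x + y) ≤ ∫ x in closedBall (0 : R3) (r + c), g x := by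
  have hpre : (fun x : R3 => x + y) ⁻¹' closedBall y r = closedBall 0 r := by
    ext x
    simp [dist_eq_norm]
  rw [← hpre, (measurePreserving_add_right volume y).setIntegral_preimage_emb
    (measurableEmbedding_addRight y) g (closedBall y r)]
  exact setIntegral_mono_set (hg.continuousOn.integrableOn_compact (isCompact_closedBall _ _))
    (.of_forall h0) (closedBall_subset_closedBall' (by simpa using hy)).eventuallyLE

theorem setIntegral_smear_sq_le [SFinite (volume : Measure T)] [SecondCountableTopology T]
    (hS : IsCompact S) (hk : Continuous k)
    (hγ : Continuous γ) (hf : ContDiff ℝ ∞ f) {r c : ℝ} (hγc : ∀ t ∈ S, ‖γ t‖ ≤ c) :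
    ∫ x in closedBall (0 : R3) r, smear S k (fun _ => 1) γ f x ^ 2
      ≤ (∫ t in S, k t ^ 2) * volume.real S * ∫ x in closedBall (0 : R3) (r + c), f x ^ 2 := by
  have hf_cont := hf.continuous
  have hsmear := (contDiff_smear hS hk (a := fun _ => 1) continuous_const hγ hf).continuous
  have hint : Integrable (fun z : R3 × T => f (z.1 + γ z.2) ^ 2)
      ((volume.restrict (closedBall (0 : R3) r)).prod (volume.restrict S)) := by
    rw [Measure.prod_restrict]
    exact ContinuousOn.integrableOn_compact ((isCompact_closedBall _ _).prod hS) (by fun_prop)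
  calc ∫ x in closedBall (0 : R3) r, smear S k (fun _ => 1) γ f x ^ 2
      ≤ ∫ x in closedBall (0 : R3) r, (∫ t in S, k t ^ 2) * ∫ t in S, f (x + γ t) ^ 2 := by
        refine integral_mono (ContinuousOn.integrableOn_compact (isCompact_closedBall _ _)
          (by fun_prop)) (hint.integral_prod_left.const_mul _) fun x => ?_
        simpa only [one_smul] using
          smear_sq_le hS hk (a := fun _ => 1) continuous_const hγ hf_cont x
    _ = (∫ t in S, k t ^ 2) * ∫ t in S, ∫ x in closedBall (0 : R3) r, f (x + γ t) ^ 2 := by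
        rw [integral_const_mul, integral_integral_swap hint]
    _ ≤ (∫ t in S, k t ^ 2) * ∫ t in S, ∫ x in closedBall (0 : R3) (r + c), f x ^ 2 := by
        refine mul_le_mul_of_nonneg_left ?_ (integral_nonneg fun t => sq_nonneg _)
        exact setIntegral_mono_on hint.integral_prod_right
          (integrableOn_const hS.measure_lt_top.ne) hS.measurableSet fun t ht =>
          setIntegral_closedBall_add_le (g := fun x => f x ^ 2) (by fun_prop)
            (fun x => sq_nonneg _) (hγc t ht)
    _ = _ := by rw [setIntegral_const, smul_eq_mul, mul_assoc]

end Smear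

/-! ### Regularized Newtonian potential -/

@[fun_prop]
theorem contDiff_coord (i : Fin 3) : ContDiff ℝ ∞ fun x : R3 => x i :=
  contDiff_euclidean.1 contDiff_id i

/-- A smooth kernel `η` of integral one supported in the unit ball, together with a primitive `ζ`
in the sense `∇ζ(y) = η(y) y`, which forces `η` to be radial. -/
structure IsRadialKernel (ζ η : R3 → ℝ) : Prop where
  contDiff_primitive : ContDiff ℝ ∞ ζ
  contDiff : ContDiff ℝ ∞ η
  tsupport_primitive_subset : tsupport ζ ⊆ closedBall (0 : R3) 1
  tsupport_subset : tsupport η ⊆ closedBall (0 : R3) 1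
  pd_primitive : ∀ j y, pd ζ j y = y j * η y
  integral_eq_one : ∫ y, η y = 1

theorem pd_comp_norm_sq {g : ℝ → ℝ} (hg : Differentiable ℝ g) (j : Fin 3) (y : R3) :
    pd (fun y => g (‖y‖ ^ 2)) j y = 2 * y j * deriv g (‖y‖ ^ 2) := by
  have h := (hg _).hasDerivAt.comp_hasFDerivAt y (hasStrictFDerivAt_norm_sq y).hasFDerivAt
  unfold pd
  rw [show fderiv ℝ (fun y : R3 => g (‖y‖ ^ 2)) y = _ from h.fderiv]
  simp [EuclideanSpace.inner_single_right]
  ring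

theorem tsupport_comp_norm_sq_subset {g : ℝ → ℝ} (hg : ∀ t, 1 < t → g t = 0) :
    tsupport (fun y : R3 => g (‖y‖ ^ 2)) ⊆ closedBall (0 : R3) 1 := by
  refine closure_minimal (fun y hy => by_contra fun hy' => hy (hg _ ?_)) isClosed_closedBall
  rw [mem_closedBall_zero_iff, not_le] at hy'
  exact one_lt_pow₀ hy' two_ne_zero

theorem exists_smooth_antitone_profile : ∃ g : ℝ → ℝ, ContDiff ℝ ∞ g ∧ Antitone g ∧
    (∀ t, 1 < t → g t = 0) ∧ ∃ t, 0 < t ∧ deriv g t ≠ 0 := by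
  let g : ℝ → ℝ := fun t => Real.smoothTransition (1 - t)
  have hg : ContDiff ℝ ∞ g := Real.smoothTransition.contDiff.comp (contDiff_const.sub contDiff_id)
  obtain ⟨t, ht, hslope⟩ := exists_deriv_eq_slope g zero_lt_one hg.continuous.continuousOn
    (hg.differentiable (by simp)).differentiableOn
  exact ⟨g, hg, fun s t hst => Real.smoothTransition.monotone (sub_le_sub_left hst 1),
    fun t ht => Real.smoothTransition.zero_of_nonpos (by linarith), t, ht.1, by simp [hslope, g]⟩

theorem exists_isRadialKernel : ∃ ζ η, IsRadialKernel ζ η := by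
  obtain ⟨g, hg, hg_anti, hg0, t, ht, hgt⟩ := exists_smooth_antitone_profile
  have hg'0 (s : ℝ) (hs : 1 < s) : deriv g s = 0 := by
    rw [(eventuallyEq_of_mem (Ioi_mem_nhds hs) hg0 : g =ᶠ[𝓝 s] fun _ => 0).deriv_eq, deriv_const]
  let z : R3 → ℝ := fun y => g (‖y‖ ^ 2)
  have hz : ContDiff ℝ ∞ z := hg.comp (contDiff_norm_sq ℝ)
  let e : R3 → ℝ := fun y => -deriv g (‖y‖ ^ 2)
  have he : ContDiff ℝ ∞ e := ((contDiff_infty_iff_deriv.1 hg).2.comp (contDiff_norm_sq ℝ)).neg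
  have he_supp : tsupport e ⊆ closedBall (0 : R3) 1 :=
    tsupport_comp_norm_sq_subset (g := fun s => -deriv g s) fun s hs => by simp [hg'0 s hs]
  have he_pos : 0 < ∫ y, e y :=
    he.continuous.integral_pos_of_hasCompactSupport_nonneg_nonzero
      ((isCompact_closedBall (0 : R3) 1).of_isClosed_subset (isClosed_tsupport _) he_supp)
      (fun y => neg_nonneg.2 hg_anti.deriv_nonpos) (x := EuclideanSpace.single 0 √t)
      (by simp [e, Real.sq_sqrt ht.le, hgt])
  set c := ∫ y, e y
  refine ⟨fun y => -(1 / (2 * c)) * z y, fun y => 1 / c * e y, contDiff_const.mul hz,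
    contDiff_const.mul he,
    tsupport_mul_subset_right.trans (tsupport_comp_norm_sq_subset hg0),
    tsupport_mul_subset_right.trans he_supp, fun j y => ?_, ?_⟩
  · simp (disch := fun_prop) only [pd_mul, pd_const]
    rw [pd_comp_norm_sq (hg.differentiable (by simp))]
    ring
  · rw [integral_const_mul, one_div_mul_cancel he_pos.ne']

/-- The convolution-type average `∫ κ(y) f(x + y) dy` over the unit ball. -/
def mollify (κ : R3 → ℝ) : (R3 → ℝ) → R3 → ℝ :=
  smear (closedBall 0 1) κ (fun _ => 1) fun y => y

/-- The average `∫₀¹ ∫ κ(s, y) f(x + s y) dy ds` over segments of length at most one. -/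
def segmentAverage (κ : ℝ × R3 → ℝ) : (R3 → ℝ) → R3 → ℝ :=
  smear (Set.Icc 0 1 ×ˢ closedBall 0 1) κ (fun _ => 1) fun z => z.1 • z.2

/-- With `(ζ, η)` a radial kernel, `newtonian ζ f` solves `Δ(newtonian ζ f) = f - mollify η f`;
it is a smooth truncation of the Newtonian potential. -/
def newtonian (ζ : R3 → ℝ) : (R3 → ℝ) → R3 → ℝ := segmentAverage fun z => z.1 * ζ z.2

section Operators

variable {f κ : R3 → ℝ} {κ' : ℝ × R3 → ℝ}

theorem isCompact_segments : IsCompact (Set.Icc (0 : ℝ) 1 ×ˢ closedBall (0 : R3) 1) :=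
  isCompact_Icc.prod (isCompact_closedBall _ _)

@[fun_prop]
theorem contDiff_mollify (hκ : Continuous κ) (hf : ContDiff ℝ ∞ f) :
    ContDiff ℝ ∞ (mollify κ f) :=
  contDiff_smear (isCompact_closedBall _ _) hκ continuous_const continuous_id hf

theorem pd_mollify (hκ : Continuous κ) (hf : ContDiff ℝ ∞ f) (j : Fin 3) :
    pd (mollify κ f) j = mollify κ (pd f j) := by
  unfold mollify
  rw [pd_smear (isCompact_closedBall _ _) hκ continuous_const (by fun_prop) hf]
  simp only [mul_one]

@[fun_prop]
theorem contDiff_segmentAverage (hκ : Continuous κ') (hf : ContDiff ℝ ∞ f) :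
    ContDiff ℝ ∞ (segmentAverage κ' f) :=
  contDiff_smear isCompact_segments hκ continuous_const (by fun_prop) hf

theorem pd_segmentAverage (hκ : Continuous κ') (hf : ContDiff ℝ ∞ f) (j : Fin 3) :
    pd (segmentAverage κ' f) j = segmentAverage κ' (pd f j) := by
  unfold segmentAverage
  rw [pd_smear isCompact_segments hκ continuous_const (by fun_prop) hf]
  simp only [mul_one]

theorem segmentAverage_eq (hκ : Continuous κ') (hf : Continuous f) (x : R3) :
    segmentAverage κ' f x
      = ∫ s in Set.Icc (0 : ℝ) 1, ∫ y in closedBall (0 : R3) 1, κ' (s, y) * f (x + s • y) := by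
  unfold segmentAverage smear
  rw [Measure.volume_eq_prod,
    setIntegral_prod _ (ContinuousOn.integrableOn_compact isCompact_segments (by fun_prop))]
  simp only [one_smul]

theorem segmentAverage_eq_swap (hκ : Continuous κ') (hf : Continuous f) (x : R3) :
    segmentAverage κ' f x
      = ∫ y in closedBall (0 : R3) 1, ∫ s in Set.Icc (0 : ℝ) 1, κ' (s, y) * f (x + s • y) := by
  rw [segmentAverage_eq hκ hf]
  refine integral_integral_swap ?_
  rw [Measure.prod_restrict]
  exact ContinuousOn.integrableOn_compact isCompact_segments
    (by simp only [Function.uncurry_def]; fun_prop)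

theorem setIntegral_closedBall_pd_eq_zero {g : R3 → ℝ} (hg : ContDiff ℝ ∞ g)
    (hsupp : tsupport g ⊆ closedBall (0 : R3) 1) (j : Fin 3) :
    ∫ y in closedBall (0 : R3) 1, pd g j y = 0 := by
  rw [setIntegral_eq_integral_of_forall_compl_eq_zero fun y hy =>
    pd_eq_zero_of_notMem_tsupport (fun h => hy (hsupp h)) j]
  exact integral_pd_eq_zero hg
    ((isCompact_closedBall (0 : R3) 1).of_isClosed_subset (isClosed_tsupport _) hsupp) j

theorem contDiff_comp_add_smul (hf : ContDiff ℝ ∞ f) (x : R3) (s : ℝ) :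
    ContDiff ℝ ∞ fun y => f (x + s • y) :=
  hf.comp (contDiff_const.add (contDiff_const_smul s))

theorem pd_comp_add_smul (hf : ContDiff ℝ ∞ f) (x : R3) (s : ℝ) (j : Fin 3) (y : R3) :
    pd (fun y => f (x + s • y)) j y = s * pd f j (x + s • y) := by
  have hfx : DifferentiableAt ℝ f (x + s • y) := differentiableAt_of_smooth hf _
  have h := hfx.hasFDerivAt.comp y (((hasFDerivAt_id y).const_smul s).const_add x)
  unfold pd
  rw [show fderiv ℝ (fun y => f (x + s • y)) y = _ from h.fderiv]
  simp

theorem setIntegral_mul_pd_comp_add_smul {κ : R3 → ℝ} (hκ : ContDiff ℝ ∞ κ)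
    (hsupp : tsupport κ ⊆ closedBall (0 : R3) 1) (hf : ContDiff ℝ ∞ f) (x : R3) (s : ℝ)
    (j : Fin 3) :
    ∫ y in closedBall (0 : R3) 1, s * κ y * pd f j (x + s • y)
      = ∫ y in closedBall (0 : R3) 1, -(pd κ j y) * f (x + s • y) := by
  have hf_cont := hf.continuous
  have hκ_cont := hκ.continuous
  have hfs := contDiff_comp_add_smul hf x s
  have hparts := setIntegral_closedBall_pd_eq_zero (hκ.mul hfs)
    ((tsupport_mul_subset_left).trans hsupp) j
  rw [← sub_eq_zero, ← integral_sub
    (ContinuousOn.integrableOn_compact (isCompact_closedBall _ _) (by fun_prop))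
    (ContinuousOn.integrableOn_compact (isCompact_closedBall _ _) (by fun_prop)), ← hparts]
  refine integral_congr_ae (.of_forall fun y => ?_)
  simp only [pd_mul (differentiableAt_of_smooth hκ y) (differentiableAt_of_smooth hfs y),
    pd_comp_add_smul hf]
  ring

theorem pd_mollify_eq_neg {η : R3 → ℝ} (hη : ContDiff ℝ ∞ η)
    (hsupp : tsupport η ⊆ closedBall (0 : R3) 1) (hf : ContDiff ℝ ∞ f) (j : Fin 3) (x : R3) :
    pd (mollify η f) j x = -mollify (pd η j) f x := by
  rw [pd_mollify hη.continuous hf]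
  simpa [mollify, smear, integral_neg] using
    setIntegral_mul_pd_comp_add_smul hη hsupp hf x 1 j

end Operators

namespace IsRadialKernel

variable {ζ η f : R3 → ℝ}

theorem pd_newtonian (h : IsRadialKernel ζ η) (hf : ContDiff ℝ ∞ f) (j : Fin 3) (x : R3) :
    pd (newtonian ζ f) j x = segmentAverage (fun z => -(z.2 j * η z.2)) f x := by
  have hζ := h.contDiff_primitive.continuous
  have hη := h.contDiff.continuous
  unfold newtonian
  rw [pd_segmentAverage (by fun_prop) hf, segmentAverage_eq (by fun_prop) (by fun_prop),
    segmentAverage_eq (by fun_prop) hf.continuous]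
  refine integral_congr_ae (.of_forall fun s => ?_)
  simpa only [h.pd_primitive] using setIntegral_mul_pd_comp_add_smul h.contDiff_primitive
    h.tsupport_primitive_subset hf x s j

end IsRadialKernel

theorem hasDerivAt_comp_add_smul {f : R3 → ℝ} (hf : ContDiff ℝ ∞ f) (x y : R3) (s : ℝ) :
    HasDerivAt (fun s : ℝ => f (x + s • y)) (∑ j, y j * pd f j (x + s • y)) s := by
  have hline : HasDerivAt (fun s : ℝ => x + s • y) y s := by
    simpa using ((hasDerivAt_id s).smul_const y).const_add x
  rw [← fderiv_apply_eq_sum_pd]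
  exact (differentiableAt_of_smooth hf (x + s • y)).hasFDerivAt.comp_hasDerivAt s hline

theorem setIntegral_sum_mul_pd_comp_add_smul {f : R3 → ℝ} (hf : ContDiff ℝ ∞ f) (x y : R3) :
    ∫ s in Set.Icc (0 : ℝ) 1, ∑ j, y j * pd f j (x + s • y) = f (x + y) - f x := by
  rw [integral_Icc_eq_integral_Ioc, ← intervalIntegral.integral_of_le zero_le_one,
    intervalIntegral.integral_eq_sub_of_hasDerivAt
      (fun s _ => hasDerivAt_comp_add_smul hf x y s)
      (Continuous.intervalIntegrable (by fun_prop) _ _)]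
  simp

namespace IsRadialKernel

variable {ζ η f : R3 → ℝ}

theorem lap_newtonian (h : IsRadialKernel ζ η) (hf : ContDiff ℝ ∞ f) (x : R3) :
    lap (newtonian ζ f) x = f x - mollify η f x := by
  have hη := h.contDiff.continuous
  have hf_cont := hf.continuous
  have hpd (j : Fin 3) : pd (pd (newtonian ζ f) j) j x = ∫ y in closedBall (0 : R3) 1,
      ∫ s in Set.Icc (0 : ℝ) 1, -(y j * η y) * pd f j (x + s • y) := by
    rw [funext (h.pd_newtonian hf j), pd_segmentAverage (by fun_prop) hf,
      segmentAverage_eq_swap (by fun_prop) (by fun_prop)]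
  have hint (g : R3 → ℝ) (hg : Continuous g) : IntegrableOn g (closedBall 0 1) :=
    hg.continuousOn.integrableOn_compact (isCompact_closedBall _ _)
  calc lap (newtonian ζ f) x
      = ∫ y in closedBall (0 : R3) 1, ∑ j, ∫ s in Set.Icc (0 : ℝ) 1,
          -(y j * η y) * pd f j (x + s • y) := by
        simp only [lap, hpd]
        rw [integral_finsetSum _ fun j _ => hint _ ?_]
        simp only [integral_Icc_eq_integral_Ioc,
          ← intervalIntegral.integral_of_le zero_le_one]
        fun_prop
    _ = ∫ y in closedBall (0 : R3) 1, (η y * f x - η y * f (x + y)) := by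
        refine integral_congr_ae (.of_forall fun y => ?_)
        simp only
        rw [← integral_finsetSum _ fun j _ =>
          ContinuousOn.integrableOn_compact isCompact_Icc (by fun_prop)]
        rw [← mul_sub, ← neg_sub (f (x + y)), ← setIntegral_sum_mul_pd_comp_add_smul hf,
          ← integral_neg, ← integral_const_mul]
        congr 1 with s
        rw [← Finset.sum_neg_distrib, Finset.mul_sum]
        exact Finset.sum_congr rfl fun j _ => by ring
    _ = f x - mollify η f x := by
        rw [integral_sub (hint _ (by fun_prop)) (hint _ (by fun_prop)), integral_mul_const,
          setIntegral_eq_integral_of_forall_compl_eq_zero fun y hy =>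
            image_eq_zero_of_notMem_tsupport fun hy' => hy (h.tsupport_subset hy'),
          h.integral_eq_one, one_mul]
        simp [mollify, smear]

end IsRadialKernel

/-! ### Antisymmetric potentials of divergence-free fields -/

/-- The squared length `|F|²` of a vector field. -/
def normSq (F : Fin 3 → R3 → ℝ) (x : R3) : ℝ := ∑ i, F i x ^ 2

/-- The density `f² + |∇f|²` of the squared `H¹` norm. -/
def sobolevDensity (f : R3 → ℝ) (x : R3) : ℝ := f x ^ 2 + gradSq f x

@[fun_prop]
theorem continuous_normSq {F : Fin 3 → R3 → ℝ} (hF : ∀ i, Continuous (F i)) :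
    Continuous (normSq F) := by
  unfold normSq
  fun_prop

theorem sq_le_normSq (F : Fin 3 → R3 → ℝ) (i : Fin 3) (x : R3) : F i x ^ 2 ≤ normSq F x :=
  Finset.single_le_sum (f := fun i => F i x ^ 2) (fun _ _ => sq_nonneg _) (Finset.mem_univ i)

theorem normSq_nonneg (F : Fin 3 → R3 → ℝ) (x : R3) : 0 ≤ normSq F x :=
  Finset.sum_nonneg fun _ _ => sq_nonneg _

@[fun_prop]
theorem continuous_sobolevDensity {f : R3 → ℝ} (hf : ContDiff ℝ ∞ f) :
    Continuous (sobolevDensity f) := by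
  have hf_cont := hf.continuous
  unfold sobolevDensity
  fun_prop

theorem sobolevDensity_sub_le {f g : R3 → ℝ} {x : R3} (hf : DifferentiableAt ℝ f x)
    (hg : DifferentiableAt ℝ g x) :
    sobolevDensity (fun y => f y - g y) x ≤ 2 * sobolevDensity f x + 2 * sobolevDensity g x := by
  have hgrad : gradSq (fun y => f y - g y) x ≤ 2 * gradSq f x + 2 * gradSq g x := by
    simp only [gradSq, Finset.mul_sum, ← Finset.sum_add_distrib, pd_sub hf hg]
    refine Finset.sum_le_sum fun j _ => ?_
    nlinarith [sq_nonneg (pd f j x + pd g j x)]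
  unfold sobolevDensity
  nlinarith [sq_nonneg (f x + g x)]

theorem integrableOn_closedBall {g : R3 → ℝ} (hg : Continuous g) (r : ℝ) :
    IntegrableOn g (closedBall (0 : R3) r) :=
  hg.continuousOn.integrableOn_compact (isCompact_closedBall _ _)

theorem contDiff_newtonian {ζ f : R3 → ℝ} (hζ : Continuous ζ) (hf : ContDiff ℝ ∞ f) :
    ContDiff ℝ ∞ (newtonian ζ f) :=
  contDiff_segmentAverage (by fun_prop) hf

namespace IsRadialKernel

variable {ζ η : R3 → ℝ}

theorem setIntegral_gradSq_newtonian_le (h : IsRadialKernel ζ η) :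
    ∃ C, 0 ≤ C ∧ ∀ f : R3 → ℝ, ContDiff ℝ ∞ f →
      ∫ x in closedBall (0 : R3) 3, gradSq (newtonian ζ f) x
        ≤ C * ∫ x in closedBall (0 : R3) 4, f x ^ 2 := by
  have hη := h.contDiff.continuous
  let S : Set (ℝ × R3) := Set.Icc 0 1 ×ˢ closedBall 0 1
  have hγ (z : ℝ × R3) (hz : z ∈ S) : ‖z.1 • z.2‖ ≤ 1 := by
    rw [norm_smul, Real.norm_of_nonneg hz.1.1]
    exact mul_le_one₀ hz.1.2 (norm_nonneg _) (mem_closedBall_zero_iff.1 hz.2)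
  refine ⟨∑ j, (∫ z in S, (-(z.2 j * η z.2)) ^ 2) * volume.real S, Finset.sum_nonneg fun j _ =>
    mul_nonneg (integral_nonneg fun _ => sq_nonneg _) measureReal_nonneg, fun f hf => ?_⟩
  have hseg (j : Fin 3) : Continuous (segmentAverage (fun z => -(z.2 j * η z.2)) f) :=
    (contDiff_segmentAverage (by fun_prop) hf).continuous
  simp only [gradSq, h.pd_newtonian hf]
  rw [integral_finsetSum _ fun j _ => integrableOn_closedBall (by fun_prop) _, Finset.sum_mul]
  refine Finset.sum_le_sum fun j _ => ?_
  have hsmear := setIntegral_smear_sq_le (k := fun z => -(z.2 j * η z.2)) (r := 3)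
    isCompact_segments (by fun_prop) (by fun_prop) hf hγ
  rwa [show (3 : ℝ) + 1 = 4 by norm_num] at hsmear

theorem setIntegral_lap_newtonian_sq_le (h : IsRadialKernel ζ η) :
    ∃ C, 0 ≤ C ∧ ∀ f : R3 → ℝ, ContDiff ℝ ∞ f →
      ∫ x in closedBall (0 : R3) 3, lap (newtonian ζ f) x ^ 2
        ≤ C * ∫ x in closedBall (0 : R3) 4, f x ^ 2 := by
  have hη := h.contDiff.continuous
  let B := closedBall (0 : R3) 1
  refine ⟨2 + 2 * ((∫ y in B, η y ^ 2) * volume.real B), by positivity, fun f hf => ?_⟩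
  have hf_cont := hf.continuous
  have hm : Continuous (mollify η f) := (contDiff_mollify hη hf).continuous
  have hmollify : ∫ x in closedBall (0 : R3) 3, mollify η f x ^ 2
      ≤ (∫ y in B, η y ^ 2) * volume.real B * ∫ x in closedBall (0 : R3) 4, f x ^ 2 := by
    have hsmear := setIntegral_smear_sq_le (S := B) (r := 3) (c := 1) (isCompact_closedBall _ _) hη
      continuous_id hf fun y hy => mem_closedBall_zero_iff.1 hy
    rwa [show (3 : ℝ) + 1 = 4 by norm_num] at hsmear
  simp only [h.lap_newtonian hf]
  calc ∫ x in closedBall (0 : R3) 3, (f x - mollify η f x) ^ 2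
      ≤ ∫ x in closedBall (0 : R3) 3, (2 * f x ^ 2 + 2 * mollify η f x ^ 2) :=
        setIntegral_mono_of_continuous (isCompact_closedBall _ _) (by fun_prop) (by fun_prop)
          fun x _ => by nlinarith [sq_nonneg (f x + mollify η f x)]
    _ = 2 * (∫ x in closedBall (0 : R3) 3, f x ^ 2)
        + 2 * ∫ x in closedBall (0 : R3) 3, mollify η f x ^ 2 := by
        rw [integral_add (integrableOn_closedBall (by fun_prop) _)
          (integrableOn_closedBall (by fun_prop) _), integral_const_mul, integral_const_mul]
    _ ≤ 2 * (∫ x in closedBall (0 : R3) 4, f x ^ 2) + 2 * ((∫ y in B, η y ^ 2) * volume.real B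
        * ∫ x in closedBall (0 : R3) 4, f x ^ 2) := by
        have hmono := setIntegral_closedBall_mono (g := fun x => f x ^ 2) (r := 3) (s := 4)
          (by fun_prop) (fun _ => sq_nonneg _) (by norm_num)
        gcongr
    _ = _ := by ring

theorem setIntegral_sobolevDensity_pd_newtonian_le (h : IsRadialKernel ζ η) :
    ∃ C, 0 ≤ C ∧ ∀ f : R3 → ℝ, ContDiff ℝ ∞ f → ∀ i : Fin 3,
      ∫ x in closedBall (0 : R3) 2, sobolevDensity (pd (newtonian ζ f) i) x
        ≤ C * ∫ x in closedBall (0 : R3) 4, f x ^ 2 := by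
  have hζ := h.contDiff_primitive.continuous
  obtain ⟨H, hH, hhess⟩ := setIntegral_hessian_le (a := 2) (b := 3) (by norm_num) (by norm_num)
  obtain ⟨K, hK, hgrad⟩ := h.setIntegral_gradSq_newtonian_le
  obtain ⟨L, hL, hlap⟩ := h.setIntegral_lap_newtonian_sq_le
  refine ⟨K + H * (K + L), by positivity, fun f hf i => ?_⟩
  let N := newtonian ζ f
  let I := ∫ x in closedBall (0 : R3) 4, f x ^ 2
  have hN : ContDiff ℝ ∞ N := contDiff_newtonian hζ hf
  have hpt (x : R3) : sobolevDensity (pd N i) x ≤ gradSq N x + ∑ j, gradSq (pd N j) x :=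
    add_le_add (Finset.single_le_sum (f := fun j => pd N j x ^ 2) (fun _ _ => sq_nonneg _)
      (Finset.mem_univ i)) (Finset.single_le_sum (f := fun j => gradSq (pd N j) x)
      (fun _ _ => gradSq_nonneg _ _) (Finset.mem_univ i))
  calc ∫ x in closedBall (0 : R3) 2, sobolevDensity (pd N i) x
      ≤ (∫ x in closedBall (0 : R3) 2, gradSq N x)
        + ∫ x in closedBall (0 : R3) 2, ∑ j, gradSq (pd N j) x := by
        rw [← integral_add (integrableOn_closedBall (by fun_prop) _)
          (integrableOn_closedBall (by fun_prop) _)]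
        exact setIntegral_mono_of_continuous (isCompact_closedBall _ _) (by fun_prop)
          (by fun_prop) fun x _ => hpt x
    _ ≤ (∫ x in closedBall (0 : R3) 3, gradSq N x)
        + H * ∫ x in closedBall (0 : R3) 3, (gradSq N x + lap N x ^ 2) :=
        add_le_add (setIntegral_closedBall_mono (by fun_prop) (gradSq_nonneg N) (by norm_num))
          (hhess N hN)
    _ ≤ K * I + H * (K * I + L * I) := by
        rw [integral_add (integrableOn_closedBall (by fun_prop) _)
          (integrableOn_closedBall (by fun_prop) _)]
        gcongr
        · exact hgrad f hf
        · exact hgrad f hf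
        · exact hlap f hf
    _ = (K + H * (K + L)) * I := by ring

theorem exists_sq_mollify_le (h : IsRadialKernel ζ η) :
    ∃ C, 0 ≤ C ∧ ∀ f : R3 → ℝ, ContDiff ℝ ∞ f → ∀ x : R3, ‖x‖ ≤ 2 →
      mollify η f x ^ 2 ≤ C * (∫ y in closedBall (0 : R3) 4, f y ^ 2) ∧
      ∀ k, pd (mollify η f) k x ^ 2 ≤ C * ∫ y in closedBall (0 : R3) 4, f y ^ 2 := by
  let B := closedBall (0 : R3) 1
  let D : ℝ := ∫ y in B, sobolevDensity η y
  have hη := h.contDiff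
  have hη_cont := hη.continuous
  have hD {κ : R3 → ℝ} (hκ : Continuous κ) (hle : ∀ y, κ y ^ 2 ≤ sobolevDensity η y) :
      ∫ y in B, κ y ^ 2 ≤ D :=
    setIntegral_mono_of_continuous (isCompact_closedBall _ _) (by fun_prop) (by fun_prop)
      fun y _ => hle y
  have hη_le (y : R3) : η y ^ 2 ≤ sobolevDensity η y := le_add_of_nonneg_right (gradSq_nonneg η y)
  have hpd_le (k : Fin 3) (y : R3) : pd η k y ^ 2 ≤ sobolevDensity η y :=
    (Finset.single_le_sum (f := fun k => pd η k y ^ 2) (fun _ _ => sq_nonneg _)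
      (Finset.mem_univ k)).trans (le_add_of_nonneg_left (sq_nonneg _))
  refine ⟨D, integral_nonneg fun y => (sq_nonneg _).trans (hη_le y), fun f hf x hx => ?_⟩
  have hf_cont := hf.continuous
  have key {κ : R3 → ℝ} (hκ : Continuous κ) (hle : ∀ y, κ y ^ 2 ≤ sobolevDensity η y) :
      mollify κ f x ^ 2 ≤ D * ∫ y in closedBall (0 : R3) 4, f y ^ 2 := by
    refine
      (smear_sq_le (isCompact_closedBall _ _) hκ continuous_const continuous_id hf_cont x).trans
        (mul_le_mul (hD hκ hle) ?_ (integral_nonneg fun _ => sq_nonneg _)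
          ((integral_nonneg fun _ => sq_nonneg _).trans (hD hκ hle)))
    simp only [one_smul, add_comm x]
    refine (setIntegral_closedBall_add_le (c := 2) (by fun_prop) (fun _ => sq_nonneg _) hx).trans ?_
    exact setIntegral_closedBall_mono (by fun_prop) (fun _ => sq_nonneg _) (by norm_num)
  refine ⟨key hη_cont hη_le, fun k => ?_⟩
  rw [pd_mollify_eq_neg hη h.tsupport_subset hf, neg_sq]
  exact key (by fun_prop) (hpd_le k)

end IsRadialKernel

/-- The field of antisymmetric matrices `∂ᵢFⱼ - ∂ⱼFᵢ`. -/
def curl (F : Fin 3 → R3 → ℝ) (i j : Fin 3) (x : R3) : ℝ := pd (F j) i x - pd (F i) j x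

theorem divergence_curl {F : Fin 3 → R3 → ℝ} (hF : ∀ i, ContDiff ℝ ∞ (F i)) (j : Fin 3) (x : R3) :
    divergence (fun i => curl F i j) x = lap (F j) x - pd (divergence F) j x := by
  have hcurl (i : Fin 3) : pd (curl F i j) i x = pd (pd (F j) i) i x - pd (pd (F i) i) j x := by
    unfold curl
    rw [pd_sub (by fun_prop) (by fun_prop), pd_comm (hF i) i j]
  have hdiv : pd (divergence F) j x = ∑ i, pd (pd (F i) i) j x := pd_sum (by fun_prop) j
  simp only [divergence, hcurl, Finset.sum_sub_distrib, hdiv, lap]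

/-- The field of antisymmetric matrices `xⱼ Fᵢ - xᵢ Fⱼ`. -/
def radialWedge (F : Fin 3 → R3 → ℝ) (i j : Fin 3) (x : R3) : ℝ := x j * F i x - x i * F j x

theorem divergence_radialWedge {F : Fin 3 → R3 → ℝ} (hF : ∀ i, ContDiff ℝ ∞ (F i)) (j : Fin 3)
    (x : R3) : divergence (fun i => radialWedge F i j) x
      = x j * divergence F x - (2 * F j x + ∑ i, x i * pd (F j) i x) := by
  unfold divergence radialWedge
  simp (disch := fun_prop) only [pd_sub, pd_mul, pd_coord, Fin.sum_univ_three]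
  fin_cases j <;> simp <;> ring

/-- The average `∫₀¹ t f(tx) dt` along the segment from the origin, the homotopy operator of the
Poincaré lemma for divergence-free fields. -/
def cone : (R3 → ℝ) → R3 → ℝ := smear (Set.Icc 0 1) (fun t => t) (fun t => t) fun _ => 0

section Cone

variable {f : R3 → ℝ}

@[fun_prop]
theorem contDiff_cone (hf : ContDiff ℝ ∞ f) : ContDiff ℝ ∞ (cone f) :=
  contDiff_smear isCompact_Icc continuous_id continuous_id continuous_const hf

theorem pd_cone (hf : ContDiff ℝ ∞ f) (j : Fin 3) :
    pd (cone f) j = smear (Set.Icc 0 1) (fun t => t * t) (fun t => t) (fun _ => 0) (pd f j) :=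
  pd_smear isCompact_Icc continuous_id continuous_id continuous_const hf j

theorem two_mul_cone_add (hf : ContDiff ℝ ∞ f) (x : R3) :
    2 * cone f x + ∑ i, x i * pd (cone f) i x = f x := by
  have hf_cont := hf.continuous
  have hderiv (t : ℝ) : HasDerivAt (fun t : ℝ => t ^ 2 * f (t • x))
      (2 * (t * f (t • x)) + ∑ i, x i * (t * t * pd f i (t • x))) t := by
    have h := hasDerivAt_comp_add_smul hf 0 x t
    simp only [zero_add] at h
    refine ((hasDerivAt_pow 2 t).mul h).congr_deriv ?_
    simp only [Fin.sum_univ_three]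
    push_cast
    ring
  have hint {g : ℝ → ℝ} (hg : Continuous g) : IntegrableOn g (Set.Icc (0 : ℝ) 1) :=
    hg.continuousOn.integrableOn_compact isCompact_Icc
  have hpd (i : Fin 3) : pd (cone f) i x = ∫ t in Set.Icc (0 : ℝ) 1, t * t * pd f i (t • x) := by
    simp only [pd_cone hf, smear, add_zero]
  have hcone : cone f x = ∫ t in Set.Icc (0 : ℝ) 1, t * f (t • x) := by
    simp only [cone, smear, add_zero]
  calc 2 * cone f x + ∑ i, x i * pd (cone f) i x
      = ∫ t in Set.Icc (0 : ℝ) 1, (2 * (t * f (t • x)) + ∑ i, x i * (t * t * pd f i (t • x))) := by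
        rw [integral_add (hint (by fun_prop)) (hint (by fun_prop)),
          integral_finsetSum _ fun i _ => hint (by fun_prop)]
        simp only [hpd, hcone, integral_const_mul]
    _ = f x := by
        rw [integral_Icc_eq_integral_Ioc, ← intervalIntegral.integral_of_le zero_le_one,
          intervalIntegral.integral_eq_sub_of_hasDerivAt (fun t _ => hderiv t)
            (Continuous.intervalIntegrable (by fun_prop) _ _)]
        simp

theorem abs_smear_Icc_le {k : ℝ → ℝ} {r m : ℝ} (hk : ∀ t ∈ Set.Icc (0 : ℝ) 1, |k t| ≤ 1)
    (hf : ∀ y : R3, ‖y‖ ≤ r → |f y| ≤ m) {x : R3} (hx : ‖x‖ ≤ r) :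
    |smear (Set.Icc 0 1) k (fun t => t) (fun _ => 0) f x| ≤ m := by
  have hbound (t : ℝ) (ht : t ∈ Set.Icc (0 : ℝ) 1) : ‖k t * f (t • x + 0)‖ ≤ m := by
    have htx : ‖t • x + 0‖ ≤ r := by
      rw [add_zero, norm_smul, Real.norm_of_nonneg ht.1]
      exact (mul_le_of_le_one_left (norm_nonneg x) ht.2).trans hx
    rw [Real.norm_eq_abs, abs_mul]
    exact (mul_le_mul (hk t ht) (hf _ htx) (abs_nonneg _) zero_le_one).trans_eq (one_mul m)
  simpa [smear] using norm_setIntegral_le_of_norm_le_const (μ := volume) (by simp) hbound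

theorem abs_cone_le {r m : ℝ} (hf : ∀ y : R3, ‖y‖ ≤ r → |f y| ≤ m) {x : R3} (hx : ‖x‖ ≤ r) :
    |cone f x| ≤ m :=
  abs_smear_Icc_le (fun t ht => by rw [abs_of_nonneg ht.1]; exact ht.2) hf hx

theorem abs_pd_cone_le {r m : ℝ} (hf : ContDiff ℝ ∞ f) {j : Fin 3}
    (hfj : ∀ y : R3, ‖y‖ ≤ r → |pd f j y| ≤ m) {x : R3} (hx : ‖x‖ ≤ r) :
    |pd (cone f) j x| ≤ m := by
  rw [pd_cone hf]
  refine abs_smear_Icc_le (fun t ht => ?_) hfj hx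
  rw [abs_of_nonneg (mul_self_nonneg t)]
  exact mul_le_one₀ ht.2 ht.1 ht.2

end Cone

theorem sobolevDensity_coord_mul_le {f : R3 → ℝ} {m : ℝ} {x : R3} (i : Fin 3)
    (hf : DifferentiableAt ℝ f x) (hm : |f x| ≤ m) (hm' : ∀ k, |pd f k x| ≤ m) (hx : ‖x‖ ≤ 2) :
    sobolevDensity (fun y => y i * f y) x ≤ 31 * m ^ 2 := by
  have hxi : x i ^ 2 ≤ 4 := by
    have h : |x i| ≤ 2 := (by simpa using PiLp.norm_apply_le x i : |x i| ≤ ‖x‖).trans hx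
    nlinarith [abs_le.1 h]
  have hsq : f x ^ 2 ≤ m ^ 2 := sq_le_sq' (abs_le.1 hm).1 (abs_le.1 hm).2
  have hpd (k : Fin 3) : pd (fun y => y i * f y) k x ^ 2
      ≤ 2 * (4 * m ^ 2) + 2 * (if i = k then f x ^ 2 else 0) := by
    have hk : pd f k x ^ 2 ≤ m ^ 2 := sq_le_sq' (abs_le.1 (hm' k)).1 (abs_le.1 (hm' k)).2
    have hprod : x i ^ 2 * pd f k x ^ 2 ≤ 4 * m ^ 2 :=
      mul_le_mul hxi hk (sq_nonneg _) (by norm_num)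
    rw [pd_mul (by fun_prop) hf, pd_coord]
    split_ifs
    · nlinarith [sq_nonneg (x i * pd f k x - f x)]
    · nlinarith
  have hgrad : gradSq (fun y => y i * f y) x ≤ 26 * m ^ 2 := by
    refine (Finset.sum_le_sum fun k _ => hpd k).trans ?_
    simp only [Finset.sum_add_distrib, ← Finset.mul_sum, Finset.sum_ite_eq, Finset.mem_univ,
      if_true, Finset.sum_const, Finset.card_univ, Fintype.card_fin, nsmul_eq_mul]
    push_cast
    linarith
  have hval : (x i * f x) ^ 2 ≤ 4 * m ^ 2 := by
    rw [mul_pow]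
    exact mul_le_mul hxi hsq (sq_nonneg _) (by norm_num)
  unfold sobolevDensity
  nlinarith

/-- Up to the weights `R⁻⁴` and `R⁻²`, the squared `H¹` norm of a matrix field on the scale `R`. -/
def potentialDensity (R : ℝ) (A : Fin 3 → Fin 3 → R3 → ℝ) (x : R3) : ℝ :=
  ∑ i, ∑ j, ((R⁻¹ ^ 2 * A i j x) ^ 2 + R⁻¹ ^ 2 * gradSq (A i j) x)

/-- `A` is an antisymmetric matrix field with row divergences `F`: a vector potential of `F`. -/
structure IsVectorPotential (A : Fin 3 → Fin 3 → R3 → ℝ) (F : Fin 3 → R3 → ℝ) : Prop where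
  contDiff : ∀ i j, ContDiff ℝ ∞ (A i j)
  antisymm : ∀ i j x, A i j x = -A j i x
  divergence_eq : ∀ j x, divergence (fun i => A i j) x = F j x

@[fun_prop]
theorem contDiff_curl {F : Fin 3 → R3 → ℝ} (hF : ∀ i, ContDiff ℝ ∞ (F i)) (i j : Fin 3) :
    ContDiff ℝ ∞ (curl F i j) := by
  unfold curl
  fun_prop

@[fun_prop]
theorem contDiff_radialWedge {F : Fin 3 → R3 → ℝ} (hF : ∀ i, ContDiff ℝ ∞ (F i)) (i j : Fin 3) :
    ContDiff ℝ ∞ (radialWedge F i j) := by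
  unfold radialWedge
  fun_prop

theorem divergence_radialWedge_cone {F : Fin 3 → R3 → ℝ} (hF : ∀ i, ContDiff ℝ ∞ (F i))
    (hdiv : ∀ x, divergence F x = 0) (j : Fin 3) (x : R3) :
    divergence (fun i => radialWedge (fun i => cone (F i)) i j) x = -F j x := by
  have hcone : divergence (fun i => cone (F i)) x = 0 :=
    divergence_smear_eq_zero isCompact_Icc continuous_id continuous_id continuous_const hF hdiv x
  rw [divergence_radialWedge (fun i => contDiff_cone (hF i)), hcone, two_mul_cone_add (hF j),
    mul_zero, zero_sub]

namespace IsRadialKernel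

variable {ζ η : R3 → ℝ} {U : Fin 3 → R3 → ℝ}

theorem divergence_curl_newtonian (h : IsRadialKernel ζ η) (hU : ∀ i, ContDiff ℝ ∞ (U i))
    (hdiv : ∀ x, divergence U x = 0) (j : Fin 3) (x : R3) :
    divergence (fun i => curl (fun i => newtonian ζ (U i)) i j) x
      = U j x - mollify η (U j) x := by
  have hζ := h.contDiff_primitive.continuous
  have hnewton : divergence (fun i => newtonian ζ (U i)) = fun _ => 0 :=
    funext (divergence_smear_eq_zero isCompact_segments (by fun_prop) (by fun_prop) (by fun_prop)
      hU hdiv)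
  rw [divergence_curl (fun i => contDiff_newtonian hζ (hU i)), hnewton, pd_const, sub_zero,
    h.lap_newtonian (hU j)]

-- `newtonian ζ` inverts the Laplacian only up to `mollify η`; the error is a divergence-free field
-- with bounds in sup norm, to which the Poincaré lemma with `cone` can be applied.
theorem isVectorPotential (h : IsRadialKernel ζ η) (hU : ∀ i, ContDiff ℝ ∞ (U i))
    (hdiv : ∀ x, divergence U x = 0) :
    IsVectorPotential (fun i j x => curl (fun i => newtonian ζ (U i)) i j x
      - radialWedge (fun i => cone (mollify η (U i))) i j x) U := by
  have hη := h.contDiff.continuous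
  have hN (i : Fin 3) : ContDiff ℝ ∞ (newtonian ζ (U i)) :=
    contDiff_newtonian h.contDiff_primitive.continuous (hU i)
  have hM (i : Fin 3) : ContDiff ℝ ∞ (mollify η (U i)) := contDiff_mollify hη (hU i)
  refine ⟨fun i j => by fun_prop, fun i j x => ?_, fun j x => ?_⟩
  · unfold curl radialWedge
    ring
  · have hM_div : ∀ x, divergence (fun i => mollify η (U i)) x = 0 :=
      divergence_smear_eq_zero (isCompact_closedBall _ _) hη continuous_const continuous_id hU hdiv
    have hcurl := h.divergence_curl_newtonian hU hdiv j x
    have hwedge := divergence_radialWedge_cone hM hM_div j x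
    simp only [divergence] at hcurl hwedge ⊢
    simp (disch := fun_prop) only [pd_sub]
    rw [Finset.sum_sub_distrib, hcurl, hwedge]
    ring

end IsRadialKernel

theorem sobolevDensity_radialWedge_cone_le {F : Fin 3 → R3 → ℝ} (hF : ∀ i, ContDiff ℝ ∞ (F i))
    {m : ℝ} (hm : ∀ i, ∀ y : R3, ‖y‖ ≤ 2 → |F i y| ≤ m)
    (hm' : ∀ i k, ∀ y : R3, ‖y‖ ≤ 2 → |pd (F i) k y| ≤ m) (i j : Fin 3) {x : R3} (hx : ‖x‖ ≤ 2) :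
    sobolevDensity (radialWedge (fun i => cone (F i)) i j) x ≤ 124 * m ^ 2 := by
  have hcoord (i j : Fin 3) : sobolevDensity (fun y => y j * cone (F i) y) x ≤ 31 * m ^ 2 :=
    sobolevDensity_coord_mul_le j (by fun_prop) (abs_cone_le (hm i) hx)
      (fun k => abs_pd_cone_le (hF i) (hm' i k) hx) hx
  refine (sobolevDensity_sub_le (f := fun y => y j * cone (F i) y)
    (g := fun y => y i * cone (F j) y) (by fun_prop) (by fun_prop)).trans ?_
  linarith [hcoord i j, hcoord j i]

theorem IsRadialKernel.exists_sobolevDensity_radialWedge_le {ζ η : R3 → ℝ}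
    (h : IsRadialKernel ζ η) : ∃ C, 0 ≤ C ∧ ∀ U : Fin 3 → R3 → ℝ, (∀ i, ContDiff ℝ ∞ (U i)) →
      ∀ (i j : Fin 3) (x : R3), ‖x‖ ≤ 2 →
        sobolevDensity (radialWedge (fun i => cone (mollify η (U i))) i j) x
          ≤ C * ∫ x in closedBall (0 : R3) 4, normSq U x := by
  obtain ⟨L, hL, hmollify⟩ := h.exists_sq_mollify_le
  refine ⟨124 * L, by positivity, fun U hU i j x hx => ?_⟩
  have hM (i : Fin 3) : ContDiff ℝ ∞ (mollify η (U i)) :=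
    contDiff_mollify h.contDiff.continuous (hU i)
  let I := ∫ x in closedBall (0 : R3) 4, normSq U x
  have hI (i : Fin 3) : ∫ x in closedBall (0 : R3) 4, U i x ^ 2 ≤ I :=
    setIntegral_mono_of_continuous (isCompact_closedBall _ _) ((hU i).continuous.pow 2)
      (continuous_normSq fun i => (hU i).continuous) fun x _ => sq_le_normSq U i x
  have hLI : 0 ≤ L * I := mul_nonneg hL (integral_nonneg fun x => normSq_nonneg U x)
  have hsup {a b : ℝ} (ha : a ^ 2 ≤ L * b) (hb : b ≤ I) : |a| ≤ √(L * I) :=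
    Real.abs_le_sqrt (ha.trans (mul_le_mul_of_nonneg_left hb hL))
  rw [mul_assoc, ← Real.sq_sqrt hLI]
  exact sobolevDensity_radialWedge_cone_le hM
    (fun i y hy => hsup (hmollify (U i) (hU i) y hy).1 (hI i))
    (fun i k y hy => hsup ((hmollify (U i) (hU i) y hy).2 k) (hI i)) i j hx

theorem exists_isVectorPotential_unit : ∃ C, 0 ≤ C ∧ ∀ U : Fin 3 → R3 → ℝ,
    (∀ i, ContDiff ℝ ∞ (U i)) → (∀ x, divergence U x = 0) → ∃ A, IsVectorPotential A U ∧
      ∀ i j, ∫ x in closedBall (0 : R3) 2, sobolevDensity (A i j) x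
        ≤ C * ∫ x in closedBall (0 : R3) 4, normSq U x := by
  obtain ⟨ζ, η, h⟩ := exists_isRadialKernel
  obtain ⟨K, hK, hnewton⟩ := h.setIntegral_sobolevDensity_pd_newtonian_le
  obtain ⟨L, hL, hwedge⟩ := h.exists_sobolevDensity_radialWedge_le
  let V := volume.real (closedBall (0 : R3) 2)
  refine ⟨8 * K + 2 * L * V, by positivity, fun U hU hdiv =>
    ⟨_, h.isVectorPotential hU hdiv, fun i j => ?_⟩⟩
  let N (i : Fin 3) := newtonian ζ (U i)
  let W := radialWedge (fun i => cone (mollify η (U i))) i j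
  have hN (i : Fin 3) : ContDiff ℝ ∞ (N i) :=
    contDiff_newtonian h.contDiff_primitive.continuous (hU i)
  have hW : ContDiff ℝ ∞ W :=
    contDiff_radialWedge
      (fun i => contDiff_cone (contDiff_mollify h.contDiff.continuous (hU i))) i j
  let I := ∫ x in closedBall (0 : R3) 4, normSq U x
  have hNI (i j : Fin 3) :
      ∫ x in closedBall (0 : R3) 2, sobolevDensity (pd (N i) j) x ≤ K * I :=
    (hnewton _ (hU i) j).trans (mul_le_mul_of_nonneg_left (setIntegral_mono_of_continuous
      (isCompact_closedBall _ _) ((hU i).continuous.pow 2)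
      (continuous_normSq fun i => (hU i).continuous) fun x _ => sq_le_normSq U i x) hK)
  have hpt (x : R3) (hx : x ∈ closedBall (0 : R3) 2) :
      sobolevDensity (fun x => curl N i j x - W x) x ≤ 4 * (sobolevDensity (pd (N j) i) x
        + sobolevDensity (pd (N i) j) x) + 2 * (L * I) := by
    have hcurl : sobolevDensity (curl N i j) x
        ≤ 2 * sobolevDensity (pd (N j) i) x + 2 * sobolevDensity (pd (N i) j) x :=
      sobolevDensity_sub_le (by fun_prop) (by fun_prop)
    refine (sobolevDensity_sub_le (by fun_prop) (by fun_prop)).trans ?_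
    linarith [hwedge U hU i j x (mem_closedBall_zero_iff.1 hx)]
  calc _ ≤ ∫ x in closedBall (0 : R3) 2, (4 * (sobolevDensity (pd (N j) i) x
        + sobolevDensity (pd (N i) j) x) + 2 * (L * I)) :=
      setIntegral_mono_of_continuous (isCompact_closedBall _ _) (by fun_prop) (by fun_prop) hpt
    _ = 4 * ((∫ x in closedBall (0 : R3) 2, sobolevDensity (pd (N j) i) x)
        + ∫ x in closedBall (0 : R3) 2, sobolevDensity (pd (N i) j) x) + 2 * (L * I) * V := by
      rw [integral_add (integrableOn_closedBall (by fun_prop) _)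
        (integrableOn_closedBall (by fun_prop) _), integral_const_mul,
        integral_add (integrableOn_closedBall (by fun_prop) _)
        (integrableOn_closedBall (by fun_prop) _), setIntegral_const, smul_eq_mul, mul_comm V]
    _ ≤ 4 * (K * I + K * I) + 2 * (L * I) * V := by
      gcongr <;> apply hNI
    _ = _ := by ring

theorem setIntegral_closedBall_mul (g : R3 → ℝ) {R b : ℝ} (hR : 0 < R) (hb : 0 ≤ b) :
    ∫ x in closedBall (0 : R3) (b * R), g x
      = R ^ 3 * ∫ x in closedBall (0 : R3) b, g (R • x) := by
  rw [Measure.setIntegral_comp_smul_of_pos _ _ _ hR, smul_closedBall _ _ hb]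
  simp [abs_of_pos hR, hR.ne', mul_comm b]

theorem pd_dilate {f : R3 → ℝ} {R : ℝ} (hf : ContDiff ℝ ∞ f) (hR : R ≠ 0) (j : Fin 3) (x : R3) :
    pd (fun x => R * f (R⁻¹ • x)) j x = pd f j (R⁻¹ • x) := by
  have hfR : ContDiff ℝ ∞ fun x => f (R⁻¹ • x) := hf.comp (contDiff_const_smul R⁻¹)
  rw [pd_mul (differentiableAt_const R) (differentiableAt_of_smooth hfR x), pd_const, pd_comp_smul,
    zero_mul, add_zero, mul_inv_cancel_left₀ hR]

theorem IsVectorPotential.dilate {A : Fin 3 → Fin 3 → R3 → ℝ} {u : Fin 3 → R3 → ℝ} {R : ℝ}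
    (hR : R ≠ 0) (hA : IsVectorPotential A fun i x => u i (R • x)) :
    IsVectorPotential (fun i j x => R * A i j (R⁻¹ • x)) u where
  contDiff i j := contDiff_const.mul ((hA.contDiff i j).comp (contDiff_const_smul R⁻¹))
  antisymm i j x := by rw [hA.antisymm i j, mul_neg]
  divergence_eq j x := by
    have h := hA.divergence_eq j (R⁻¹ • x)
    simp only [smul_inv_smul₀ hR] at h
    rw [← h]
    exact Finset.sum_congr rfl fun i _ => pd_dilate (hA.contDiff i j) hR i x

theorem exists_isVectorPotential : ∃ C, 0 ≤ C ∧ ∀ u : Fin 3 → R3 → ℝ,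
    (∀ i, ContDiff ℝ ∞ (u i)) → (∀ x, divergence u x = 0) → ∀ R > 0,
    ∃ A, IsVectorPotential A u ∧ ∫ x in closedBall (0 : R3) (2 * R), potentialDensity R A x
      ≤ C * (R⁻¹ ^ 2 * ∫ x in closedBall (0 : R3) (4 * R), normSq u x) := by
  obtain ⟨C, hC, hex⟩ := exists_isVectorPotential_unit
  refine ⟨9 * C, by positivity, fun u hu hdiv R hR => ?_⟩
  have huR (i : Fin 3) : ContDiff ℝ ∞ fun x => u i (R • x) :=
    (hu i).comp (contDiff_const_smul R)
  have huR_div (x : R3) : divergence (fun i x => u i (R • x)) x = 0 := by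
    have h := hdiv (R • x)
    unfold divergence at h ⊢
    simp only [pd_comp_smul, ← Finset.mul_sum, h, mul_zero]
  obtain ⟨B, hB, hle⟩ := hex _ huR huR_div
  refine ⟨_, hB.dilate hR.ne', ?_⟩
  have hB_smooth := hB.contDiff
  have hdensity (y : R3) : potentialDensity R (fun i j x => R * B i j (R⁻¹ • x)) (R • y)
      = R⁻¹ ^ 2 * ∑ i, ∑ j, sobolevDensity (B i j) y := by
    simp only [potentialDensity, sobolevDensity, gradSq, pd_dilate (hB_smooth _ _) hR.ne',
      inv_smul_smul₀ hR.ne', Finset.mul_sum (s := Finset.univ (α := Fin 3)), mul_add]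
    field_simp
  have hint (i j : Fin 3) :
      Integrable (sobolevDensity (B i j)) (volume.restrict (closedBall (0 : R3) 2)) :=
    integrableOn_closedBall (by fun_prop) _
  rw [setIntegral_closedBall_mul _ hR zero_le_two, setIntegral_closedBall_mul _ hR zero_le_four]
  simp only [hdensity]
  rw [integral_const_mul,
    integral_finsetSum _ fun i _ => integrable_finsetSum _ fun j _ => hint i j]
  simp only [fun i => integral_finsetSum Finset.univ fun j _ => hint i j]
  calc R ^ 3 * (R⁻¹ ^ 2 * ∑ i, ∑ j, ∫ x in closedBall (0 : R3) 2, sobolevDensity (B i j) x)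
      ≤ R ^ 3 * (R⁻¹ ^ 2 * ∑ _i : Fin 3, ∑ _j : Fin 3,
          C * ∫ x in closedBall (0 : R3) 4, normSq u (R • x)) := by
        gcongr with i _ j _
        exact hle i j
    _ = _ := by
        simp only [Finset.sum_const, Finset.card_univ, Fintype.card_fin, nsmul_eq_mul]
        push_cast
        ring

/-! ### The local energy inequality -/

/-- The system `TCM`, for vector fields given by their components. -/
structure IsTropicalClimateFlow (u v : Fin 3 → R3 → ℝ) (π θ : R3 → ℝ) : Prop where
  contDiff_velocity : ∀ i, ContDiff ℝ ∞ (u i)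
  contDiff_baroclinic : ∀ i, ContDiff ℝ ∞ (v i)
  contDiff_pressure : ContDiff ℝ ∞ π
  contDiff_temperature : ContDiff ℝ ∞ θ
  velocity_eq : ∀ i x, transportDiffusion u (u i) x + pd π i x
    + divergence (fun j y => v j y * v i y) x = 0
  baroclinic_eq : ∀ i x, transportDiffusion u (v i) x + pd θ i x + ∑ j, v j x * pd (u i) j x = 0
  temperature_eq : ∀ x, transportDiffusion u θ x + divergence v x = 0
  incompressible : ∀ x, divergence u x = 0

/-- The dissipation `|∇u|² + |∇v|² + |∇θ|²`. -/
def dissipation (u v : Fin 3 → R3 → ℝ) (θ : R3 → ℝ) (x : R3) : ℝ :=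
  (∑ i, gradSq (u i) x) + (∑ i, gradSq (v i) x) + gradSq θ x

/-- The energy density `|u|² + |v|² + θ²`. -/
def energyDensity (u v : Fin 3 → R3 → ℝ) (θ : R3 → ℝ) (x : R3) : ℝ :=
  normSq u x + normSq v x + θ x ^ 2

/-- The Euclidean length `|F|` of a vector field. -/
def fieldNorm (F : Fin 3 → R3 → ℝ) (x : R3) : ℝ := √(normSq F x)

/-- The field `∑ᵢ ∂ᵢφ Aᵢⱼ`. If `A` is a vector potential of `u`, adding it to `φ u` makes the latter
divergence-free. -/
def corrector (φ : R3 → ℝ) (A : Fin 3 → Fin 3 → R3 → ℝ) (j : Fin 3) (x : R3) : ℝ :=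
  ∑ i, pd φ i x * A i j x

/-- The terms of the local energy balance that involve derivatives of the cutoff `φ`, when the
velocity equation is tested against `φ u + w`. -/
def energyFlux (u v : Fin 3 → R3 → ℝ) (θ φ : R3 → ℝ) (w : Fin 3 → R3 → ℝ) (x : R3) : ℝ :=
  1 / 2 * (energyDensity u v θ x * (lap φ x + ∑ j, u j x * pd φ j x))
    - (∑ i, ∑ j, pd (u i) j x * pd (w i) j x)
    + ((∑ i, ∑ j, u i x * u j x * pd (w i) j x) + ∑ i, ∑ j, v i x * v j x * pd (w i) j x)
    + (∑ i, u i x * v i x) * (∑ j, v j x * pd φ j x)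
    + θ x * ∑ j, v j x * pd φ j x

/-- The bound for `energyFlux` with the cutoff `ψ⁶` and a vector potential with `potentialDensity`
equal to `G`. -/
def errorDensity (R : ℝ) (u v : Fin 3 → R3 → ℝ) (θ ψ G : R3 → ℝ) (x : R3) : ℝ :=
  R⁻¹ ^ 2 * energyDensity u v θ x + R⁻¹ * (fieldNorm u x * energyDensity u v θ x)
    + R⁻¹ * (|θ x| * fieldNorm v x) + ψ x ^ 4 * √(G x) * (normSq u x + normSq v x) + G x

section Density

variable {u v : Fin 3 → R3 → ℝ} {θ ψ G : R3 → ℝ}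

@[fun_prop]
theorem continuous_dissipation (hu : ∀ i, ContDiff ℝ ∞ (u i)) (hv : ∀ i, ContDiff ℝ ∞ (v i))
    (hθ : ContDiff ℝ ∞ θ) : Continuous (dissipation u v θ) := by
  unfold dissipation
  fun_prop

theorem dissipation_nonneg (u v : Fin 3 → R3 → ℝ) (θ : R3 → ℝ) (x : R3) :
    0 ≤ dissipation u v θ x :=
  add_nonneg (add_nonneg (Finset.sum_nonneg fun _ _ => gradSq_nonneg _ _)
    (Finset.sum_nonneg fun _ _ => gradSq_nonneg _ _)) (gradSq_nonneg _ _)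

theorem energyDensity_nonneg (u v : Fin 3 → R3 → ℝ) (θ : R3 → ℝ) (x : R3) :
    0 ≤ energyDensity u v θ x :=
  add_nonneg (add_nonneg (normSq_nonneg _ _) (normSq_nonneg _ _)) (sq_nonneg _)

theorem fieldNorm_nonneg (F : Fin 3 → R3 → ℝ) (x : R3) : 0 ≤ fieldNorm F x :=
  Real.sqrt_nonneg _

theorem fieldNorm_sq (F : Fin 3 → R3 → ℝ) (x : R3) : fieldNorm F x ^ 2 = normSq F x :=
  Real.sq_sqrt (normSq_nonneg F x)

theorem abs_le_fieldNorm (F : Fin 3 → R3 → ℝ) (i : Fin 3) (x : R3) : |F i x| ≤ fieldNorm F x :=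
  Real.abs_le_sqrt (sq_le_normSq F i x)

theorem errorDensity_nonneg {R : ℝ} {x : R3} (hR : 0 ≤ R) (hG : 0 ≤ G x) :
    0 ≤ errorDensity R u v θ ψ G x := by
  have hE := energyDensity_nonneg u v θ x
  have hu := fieldNorm_nonneg u x
  have hv := fieldNorm_nonneg v x
  have hu2 := normSq_nonneg u x
  have hv2 := normSq_nonneg v x
  unfold errorDensity
  positivity

@[fun_prop]
theorem continuous_fieldNorm (hu : ∀ i, Continuous (u i)) : Continuous (fieldNorm u) :=
  (continuous_normSq hu).sqrt

@[fun_prop]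
theorem continuous_errorDensity (hu : ∀ i, Continuous (u i)) (hv : ∀ i, Continuous (v i))
    (hθ : Continuous θ) (hψ : Continuous ψ) (hG : Continuous G) (R : ℝ) :
    Continuous (errorDensity R u v θ ψ G) := by
  unfold errorDensity energyDensity
  fun_prop

end Density

section Corrector

variable {φ : R3 → ℝ} {A : Fin 3 → Fin 3 → R3 → ℝ} {u : Fin 3 → R3 → ℝ}

@[fun_prop]
theorem contDiff_corrector (hφ : ContDiff ℝ ∞ φ) (hA : ∀ i j, ContDiff ℝ ∞ (A i j)) (j : Fin 3) :
    ContDiff ℝ ∞ (corrector φ A j) := by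
  unfold corrector
  fun_prop

theorem hasCompactSupport_corrector (hc : HasCompactSupport φ) (A : Fin 3 → Fin 3 → R3 → ℝ)
    (j : Fin 3) : HasCompactSupport (corrector φ A j) :=
  hasCompactSupport_sum fun i _ => (hasCompactSupport_pd hc i).mul_right

theorem pd_corrector (hφ : ContDiff ℝ ∞ φ) (hA : ∀ i j, ContDiff ℝ ∞ (A i j)) (j k : Fin 3)
    (x : R3) : pd (corrector φ A j) k x
      = ∑ i, (pd φ i x * pd (A i j) k x + pd (pd φ i) k x * A i j x) := by
  unfold corrector
  simp (disch := fun_prop) only [pd_sum, pd_mul]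

theorem divergence_corrector (hφ : ContDiff ℝ ∞ φ) (hA : IsVectorPotential A u) (x : R3) :
    divergence (corrector φ A) x = -∑ i, pd φ i x * u i x := by
  have hsmooth := hA.contDiff
  have hpd (i j k : Fin 3) : pd (A i j) k x = -pd (A j i) k x := by
    rw [← pd_neg]
    exact congrArg (fun f => pd f k x) (funext (hA.antisymm i j))
  have hhess : ∑ j, ∑ i, pd (pd φ i) j x * A i j x = 0 := by
    have hswap : ∑ j, ∑ i, pd (pd φ i) j x * A i j x
        = -∑ j, ∑ i, pd (pd φ i) j x * A i j x := by
      conv_lhs => rw [Finset.sum_comm]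
      simp only [← Finset.sum_neg_distrib]
      refine Finset.sum_congr rfl fun i _ => Finset.sum_congr rfl fun j _ => ?_
      rw [pd_comm hφ, hA.antisymm]
      ring
    linarith
  have hdiv (i : Fin 3) : ∑ j, pd (A i j) j x = -u i x := by
    simp only [fun j => hpd i j j, Finset.sum_neg_distrib, ← hA.divergence_eq i x, divergence]
  simp only [divergence, pd_corrector hφ hsmooth, Finset.sum_add_distrib, hhess, add_zero]
  rw [Finset.sum_comm]
  simp only [← Finset.mul_sum, hdiv, mul_neg, Finset.sum_neg_distrib]

theorem divergence_mul_add_corrector (hφ : ContDiff ℝ ∞ φ) (hu : ∀ i, ContDiff ℝ ∞ (u i))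
    (hdiv : ∀ x, divergence u x = 0) (hA : IsVectorPotential A u) (x : R3) :
    divergence (fun i y => φ y * u i y + corrector φ A i y) x = 0 := by
  have hsmooth := hA.contDiff
  have hdivw := divergence_corrector hφ hA x
  have hdivx := hdiv x
  simp only [divergence] at hdivw hdivx ⊢
  simp (disch := fun_prop) only [pd_add, pd_mul, Finset.sum_add_distrib, ← Finset.mul_sum]
  rw [hdivx, hdivw]
  ring

end Corrector

namespace IsTropicalClimateFlow

variable {u v : Fin 3 → R3 → ℝ} {π θ φ : R3 → ℝ} {A : Fin 3 → Fin 3 → R3 → ℝ}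

theorem isExactDivergence_energyFlux (h : IsTropicalClimateFlow u v π θ) (hφ : ContDiff ℝ ∞ φ)
    (hc : HasCompactSupport φ) (hA : IsVectorPotential A u) :
    IsExactDivergence fun x =>
      -(φ x * dissipation u v θ x) + energyFlux u v θ φ (corrector φ A) x := by
  obtain ⟨hu, hv, hπ, hθ, hu_eq, hv_eq, hθ_eq, hdiv⟩ := h
  have hA' := hA.contDiff
  have hcw := hasCompactSupport_corrector hc A
  set w := corrector φ A
  have hw (j : Fin 3) : ContDiff ℝ ∞ (w j) := by fun_prop
  have hpdT (i j : Fin 3) (x : R3) : pd (fun y => φ y * u i y + w i y) j x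
      = φ x * pd (u i) j x + pd φ j x * u i x + pd (w i) j x := by
    simp (disch := fun_prop) only [pd_add, pd_mul]
  have hcT (i : Fin 3) : HasCompactSupport fun x => φ x * u i x + w i x :=
    hc.mul_right.add (hcw i)
  have hdivT (x : R3) : divergence (fun i y => φ y * u i y + w i y) x = 0 :=
    divergence_mul_add_corrector hφ hu hdiv hA x
  have hvelocity := IsExactDivergence.sum (s := Finset.univ) fun i _ =>
    isExactDivergence_localEnergy (hu i) hφ hc hu hdiv
  have hbaroclinic := IsExactDivergence.sum (s := Finset.univ) fun i _ =>
    isExactDivergence_localEnergy (hv i) hφ hc hu hdiv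
  have htemperature := isExactDivergence_localEnergy hθ hφ hc hu hdiv
  have hcorrector := IsExactDivergence.sum (s := Finset.univ) fun i _ =>
    isExactDivergence_transportDiffusion_mul (hu i) (hw i) (hcw i) hu hdiv
  have hpressure := isExactDivergence_divergence_mul (F := fun i x => φ x * u i x + w i x)
    (by fun_prop) hπ fun i => (hcT i).mul_right
  have hstress := IsExactDivergence.sum (s := Finset.univ) fun i _ =>
    isExactDivergence_divergence_mul (F := fun j x => v j x * v i x)
      (w := fun x => φ x * u i x + w i x) (by fun_prop) (by fun_prop) fun j => (hcT i).mul_left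
  have hheat := isExactDivergence_divergence_mul (w := fun x => θ x * φ x) hv (by fun_prop)
    fun j => hc.mul_left.mul_left
  convert (((((hvelocity.add hbaroclinic).add htemperature).add hcorrector).add hpressure).add
    hstress).add hheat using 2 with x
  have hpdθ (j : Fin 3) : pd (fun y => θ y * φ y) j x = θ x * pd φ j x + pd θ j x * φ x := by
    simp (disch := fun_prop) only [pd_mul]
  have hstress_eq (i : Fin 3) : divergence (fun j y => v j y * v i y) x
      = -(transportDiffusion u (u i) x + pd π i x) := by linarith [hu_eq i x]
  have hv_eq (i : Fin 3) : transportDiffusion u (v i) x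
      = -(pd θ i x + ∑ j, v j x * pd (u i) j x) := by linarith [hv_eq i x]
  have hθ_eq : divergence v x = -transportDiffusion u θ x := by linarith [hθ_eq x]
  simp only [hdivT, hpdT, hpdθ, hstress_eq, hv_eq, hθ_eq, dissipation, energyFlux, energyDensity,
    normSq, Fin.sum_univ_three]
  ring

end IsTropicalClimateFlow

section FluxBounds

variable {F u v : Fin 3 → R3 → ℝ} {x : R3}

theorem abs_sum_mul_le_fieldNorm {a : Fin 3 → ℝ} {K : ℝ} (ha : ∀ j, |a j| ≤ K) :
    |∑ j, F j x * a j| ≤ 3 * K * fieldNorm F x := by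
  have hK : 0 ≤ K := (abs_nonneg _).trans (ha 0)
  calc |∑ j, F j x * a j| = |∑ j, a j * F j x| := by simp only [mul_comm]
    _ ≤ K * ∑ j, |F j x| := abs_sum_mul_le ha
    _ ≤ K * ∑ _j : Fin 3, fieldNorm F x := by gcongr with j; exact abs_le_fieldNorm F j x
    _ = 3 * K * fieldNorm F x := by simp; ring

theorem abs_sum_mul_le_fieldNorm_mul_fieldNorm (F H : Fin 3 → R3 → ℝ) (x : R3) :
    |∑ j, F j x * H j x| ≤ fieldNorm F x * fieldNorm H x := by
  rw [fieldNorm, fieldNorm, ← Real.sqrt_mul (normSq_nonneg F x)]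
  exact Real.abs_le_sqrt (Finset.sum_mul_sq_le_sq_mul_sq _ _ _)

theorem sum_sum_mul_mul_le {a : Fin 3 → Fin 3 → ℝ} {K : ℝ} (ha : ∀ i j, |a i j| ≤ K) :
    ∑ i, ∑ j, F i x * F j x * a i j ≤ 3 * K * normSq F x := by
  have hK : 0 ≤ K := (abs_nonneg _).trans (ha 0 0)
  calc ∑ i, ∑ j, F i x * F j x * a i j ≤ ∑ i, ∑ j, |F i x| * |F j x| * K := by
        refine Finset.sum_le_sum fun i _ => Finset.sum_le_sum fun j _ => ?_
        calc F i x * F j x * a i j ≤ |F i x| * |F j x| * |a i j| := by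
              rw [← abs_mul, ← abs_mul]; exact le_abs_self _
          _ ≤ |F i x| * |F j x| * K := by gcongr; exact ha i j
    _ = K * (∑ j, |F j x|) ^ 2 := by simp only [← Finset.sum_mul, ← Finset.mul_sum]; ring
    _ ≤ K * (3 * normSq F x) := by gcongr; exact sum_abs_sq_le _
    _ = 3 * K * normSq F x := by ring

theorem sum_mul_mul_sum_mul_le {a : Fin 3 → ℝ} {K : ℝ} (ha : ∀ j, |a j| ≤ K) :
    (∑ i, u i x * v i x) * (∑ j, v j x * a j) ≤ 3 * K * (fieldNorm u x * normSq v x) := by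
  have hu0 := fieldNorm_nonneg u x
  have hv0 := fieldNorm_nonneg v x
  calc _ ≤ |∑ i, u i x * v i x| * |∑ j, v j x * a j| := by rw [← abs_mul]; exact le_abs_self _
    _ ≤ fieldNorm u x * fieldNorm v x * (3 * K * fieldNorm v x) := by
      gcongr
      exacts [abs_sum_mul_le_fieldNorm_mul_fieldNorm u v x, abs_sum_mul_le_fieldNorm ha]
    _ = 3 * K * (fieldNorm u x * normSq v x) := by rw [← fieldNorm_sq v]; ring

theorem sum_gradSq_le_dissipation (u v : Fin 3 → R3 → ℝ) (θ : R3 → ℝ) (x : R3) :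
    ∑ i, gradSq (u i) x ≤ dissipation u v θ x := by
  rw [dissipation, add_assoc]
  exact le_add_of_nonneg_right
    (add_nonneg (Finset.sum_nonneg fun _ _ => gradSq_nonneg _ _) (gradSq_nonneg _ _))

theorem normSq_le_energyDensity (u v : Fin 3 → R3 → ℝ) (θ : R3 → ℝ) (x : R3) :
    normSq v x ≤ energyDensity u v θ x := by
  unfold energyDensity
  linarith [normSq_nonneg u x, sq_nonneg (θ x)]

theorem neg_sum_sum_pd_mul_le {w : Fin 3 → R3 → ℝ} {ρ L : ℝ} (hρ0 : 0 ≤ ρ) (hρ1 : ρ ≤ 1)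
    (hL : 0 ≤ L) (hw : ∀ i j, |pd (w i) j x| ≤ L * ρ ^ 4) :
    -(∑ i, ∑ j, pd (u i) j x * pd (w i) j x)
      ≤ 1 / 2 * (ρ ^ 6 * ∑ i, gradSq (u i) x) + 9 / 2 * L ^ 2 := by
  have hρ : ρ ^ 4 ≤ ρ ^ 3 := pow_le_pow_of_le_one hρ0 hρ1 (by norm_num)
  have hentry (i j : Fin 3) : -(pd (u i) j x * pd (w i) j x)
      ≤ 1 / 2 * (ρ ^ 6 * pd (u i) j x ^ 2) + 1 / 2 * L ^ 2 := by
    calc _ ≤ |pd (u i) j x| * |pd (w i) j x| := by rw [← abs_mul]; exact neg_le_abs _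
      _ ≤ |pd (u i) j x| * (L * ρ ^ 3) := by gcongr; exact (hw i j).trans (by gcongr)
      _ ≤ _ := by
        rw [← sq_abs (pd (u i) j x)]
        nlinarith [sq_nonneg (ρ ^ 3 * |pd (u i) j x| - L)]
  calc _ = ∑ i, ∑ j, -(pd (u i) j x * pd (w i) j x) := by simp only [Finset.sum_neg_distrib]
    _ ≤ ∑ i, ∑ j, (1 / 2 * (ρ ^ 6 * pd (u i) j x ^ 2) + 1 / 2 * L ^ 2) := by
      gcongr with i _ j _
      exact hentry i j
    _ = _ := by
      simp only [gradSq, Finset.sum_add_distrib, ← Finset.mul_sum, Finset.sum_const,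
        Finset.card_univ, Fintype.card_fin, nsmul_eq_mul]
      push_cast
      ring

theorem energyFlux_le {θ φ ψ G : R3 → ℝ} {w : Fin 3 → R3 → ℝ} {R K : ℝ} (hR : 0 < R)
    (hψ0 : 0 ≤ ψ x) (hψ1 : ψ x ≤ 1) (hG : 0 ≤ G x) (hφ : ∀ j, |pd φ j x| ≤ K * R⁻¹)
    (hlap : |lap φ x| ≤ 3 * (K * R⁻¹ ^ 2)) (hw : ∀ i j, |pd (w i) j x| ≤ 6 * K * √(G x) * ψ x ^ 4) :
    energyFlux u v θ φ w x ≤ 1 / 2 * (ψ x ^ 6 * dissipation u v θ x)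
      + (18 * K + 162 * K ^ 2) * errorDensity R u v θ ψ G x := by
  have hK : 0 ≤ K := nonneg_of_mul_nonneg_left ((abs_nonneg _).trans (hφ 0)) (inv_pos.2 hR)
  have hE := energyDensity_nonneg u v θ x
  have hu0 := fieldNorm_nonneg u x
  have hv0 := fieldNorm_nonneg v x
  have hu2 := normSq_nonneg u x
  have hv2 := normSq_nonneg v x
  have htransport : 1 / 2 * (energyDensity u v θ x * (lap φ x + ∑ j, u j x * pd φ j x))
      ≤ 3 / 2 * K * (R⁻¹ ^ 2 * energyDensity u v θ x)
        + 3 / 2 * K * (R⁻¹ * (fieldNorm u x * energyDensity u v θ x)) := by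
    linarith [mul_le_mul_of_nonneg_left (add_le_add ((le_abs_self _).trans hlap)
      ((le_abs_self _).trans (abs_sum_mul_le_fieldNorm (F := u) (x := x) hφ))) hE]
  have hgrad : -(∑ i, ∑ j, pd (u i) j x * pd (w i) j x)
      ≤ 1 / 2 * (ψ x ^ 6 * dissipation u v θ x) + 162 * K ^ 2 * G x := by
    calc _ ≤ 1 / 2 * (ψ x ^ 6 * ∑ i, gradSq (u i) x) + 9 / 2 * (6 * K * √(G x)) ^ 2 :=
          neg_sum_sum_pd_mul_le hψ0 hψ1 (by positivity) hw
      _ = 1 / 2 * (ψ x ^ 6 * ∑ i, gradSq (u i) x) + 162 * K ^ 2 * G x := by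
          rw [mul_pow, Real.sq_sqrt hG]; ring
      _ ≤ _ := by gcongr; exact sum_gradSq_le_dissipation u v θ x
  have hquad (F : Fin 3 → R3 → ℝ) := sum_sum_mul_mul_le (F := F) (x := x) hw
  have hcross : (∑ i, u i x * v i x) * (∑ j, v j x * pd φ j x)
      ≤ 3 * (K * R⁻¹) * (fieldNorm u x * energyDensity u v θ x) := by
    refine (sum_mul_mul_sum_mul_le hφ).trans ?_
    gcongr
    exact normSq_le_energyDensity u v θ x
  have hheat : θ x * ∑ j, v j x * pd φ j x ≤ |θ x| * (3 * (K * R⁻¹) * fieldNorm v x) := by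
    calc _ ≤ |θ x| * |∑ j, v j x * pd φ j x| := by rw [← abs_mul]; exact le_abs_self _
      _ ≤ _ := by gcongr; exact abs_sum_mul_le_fieldNorm hφ
  have hrest : 0 ≤ (33 / 2 * K + 162 * K ^ 2) * (R⁻¹ ^ 2 * energyDensity u v θ x)
      + (27 / 2 * K + 162 * K ^ 2) * (R⁻¹ * (fieldNorm u x * energyDensity u v θ x))
      + (15 * K + 162 * K ^ 2) * (R⁻¹ * (|θ x| * fieldNorm v x))
      + 162 * K ^ 2 * (ψ x ^ 4 * √(G x) * (normSq u x + normSq v x)) + 18 * K * G x := by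
    positivity
  unfold energyFlux errorDensity
  linarith [hquad u, hquad v]

end FluxBounds

section PotentialBounds

variable {A : Fin 3 → Fin 3 → R3 → ℝ} {R : ℝ}

@[fun_prop]
theorem continuous_potentialDensity (hA : ∀ i j, ContDiff ℝ ∞ (A i j)) (R : ℝ) :
    Continuous (potentialDensity R A) := by
  unfold potentialDensity
  fun_prop

theorem le_potentialDensity (R : ℝ) (A : Fin 3 → Fin 3 → R3 → ℝ) (i j : Fin 3) (x : R3) :
    (R⁻¹ ^ 2 * A i j x) ^ 2 + R⁻¹ ^ 2 * gradSq (A i j) x ≤ potentialDensity R A x := by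
  have hnonneg (i j : Fin 3) : 0 ≤ (R⁻¹ ^ 2 * A i j x) ^ 2 + R⁻¹ ^ 2 * gradSq (A i j) x := by
    have := gradSq_nonneg (A i j) x
    positivity
  exact (Finset.single_le_sum (fun j _ => hnonneg i j) (Finset.mem_univ j)).trans
    (Finset.single_le_sum (f := fun i => ∑ j, _)
      (fun i _ => Finset.sum_nonneg fun j _ => hnonneg i j) (Finset.mem_univ i))

theorem potentialDensity_nonneg (R : ℝ) (A : Fin 3 → Fin 3 → R3 → ℝ) (x : R3) :
    0 ≤ potentialDensity R A x :=
  (add_nonneg (sq_nonneg _) (mul_nonneg (sq_nonneg _) (gradSq_nonneg _ _))).trans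
    (le_potentialDensity R A 0 0 x)

theorem abs_le_sqrt_potentialDensity (hR : 0 < R) (i j : Fin 3) (x : R3) :
    R⁻¹ ^ 2 * |A i j x| ≤ √(potentialDensity R A x) := by
  rw [← abs_of_pos (pow_pos (inv_pos.2 hR) 2), ← abs_mul]
  refine Real.abs_le_sqrt ((le_add_of_nonneg_right ?_).trans (le_potentialDensity R A i j x))
  exact mul_nonneg (sq_nonneg _) (gradSq_nonneg _ _)

theorem abs_pd_le_sqrt_potentialDensity (hR : 0 < R) (i j k : Fin 3) (x : R3) :
    R⁻¹ * |pd (A i j) k x| ≤ √(potentialDensity R A x) := by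
  rw [← abs_of_pos (inv_pos.2 hR), ← abs_mul]
  refine Real.abs_le_sqrt (le_trans ?_ (le_potentialDensity R A i j x))
  have hpd : pd (A i j) k x ^ 2 ≤ gradSq (A i j) x :=
    Finset.single_le_sum (f := fun k => pd (A i j) k x ^ 2) (fun _ _ => sq_nonneg _)
      (Finset.mem_univ k)
  rw [mul_pow]
  nlinarith [sq_nonneg (R⁻¹ ^ 2 * A i j x), mul_le_mul_of_nonneg_left hpd (sq_nonneg R⁻¹)]

theorem abs_pd_corrector_le {φ : R3 → ℝ} {c : ℝ} (hR : 0 < R) (hφ : ContDiff ℝ ∞ φ)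
    (hA : ∀ i j, ContDiff ℝ ∞ (A i j)) {x : R3} (h1 : ∀ i, |pd φ i x| ≤ c * R⁻¹)
    (h2 : ∀ i k, |pd (pd φ i) k x| ≤ c * R⁻¹ ^ 2) (j k : Fin 3) :
    |pd (corrector φ A j) k x| ≤ 6 * (c * √(potentialDensity R A x)) := by
  have hc : 0 ≤ c := nonneg_of_mul_nonneg_left ((abs_nonneg _).trans (h1 0)) (inv_pos.2 hR)
  have hterm (i : Fin 3) : |pd φ i x * pd (A i j) k x + pd (pd φ i) k x * A i j x|
      ≤ 2 * (c * √(potentialDensity R A x)) := by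
    calc _ ≤ |pd φ i x| * |pd (A i j) k x| + |pd (pd φ i) k x| * |A i j x| := by
          rw [← abs_mul, ← abs_mul]; exact abs_add_le _ _
      _ ≤ c * R⁻¹ * |pd (A i j) k x| + c * R⁻¹ ^ 2 * |A i j x| := by
          gcongr
          exacts [h1 i, h2 i k]
      _ = c * (R⁻¹ * |pd (A i j) k x| + R⁻¹ ^ 2 * |A i j x|) := by ring
      _ ≤ c * (√(potentialDensity R A x) + √(potentialDensity R A x)) := by
          gcongr
          exacts [abs_pd_le_sqrt_potentialDensity hR i j k x,
            abs_le_sqrt_potentialDensity hR i j x]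
      _ = _ := by ring
  rw [pd_corrector hφ hA]
  refine (Finset.abs_sum_le_sum_abs _ _).trans ((Finset.sum_le_sum fun i _ => hterm i).trans ?_)
  simp
  linarith

end PotentialBounds

namespace IsAnnularCutoff

variable {M R : ℝ} {ψ θ : R3 → ℝ} {A : Fin 3 → Fin 3 → R3 → ℝ} {u v : Fin 3 → R3 → ℝ}

theorem mono {M' : ℝ} (h : IsAnnularCutoff M R ψ) (hM : M ≤ M') (hR : 0 < R) :
    IsAnnularCutoff M' R ψ where
  toIsCutoff := h.toIsCutoff
  one_le := h.one_le.trans hM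
  abs_pd_le j x := (h.abs_pd_le j x).trans (by gcongr)
  abs_pd_pd_le j k x := (h.abs_pd_pd_le j k x).trans (by gcongr)

theorem energyFlux_corrector_le (h : IsAnnularCutoff M R ψ) (hR : 0 < R)
    (hA : ∀ i j, ContDiff ℝ ∞ (A i j)) (x : R3) :
    energyFlux u v θ (fun y => ψ y ^ 6) (corrector (fun y => ψ y ^ 6) A) x
      ≤ 1 / 2 * (ψ x ^ 6 * dissipation u v θ x) + (18 * (36 * M ^ 2) + 162 * (36 * M ^ 2) ^ 2)
        * errorDensity R u v θ ψ (potentialDensity R A) x := by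
  have hψ := h.contDiff
  have hψ4 : ψ x ^ 4 ≤ 1 := pow_le_one₀ (h.nonneg x) (h.le_one x)
  have h1 := fun j => h.abs_pd_pow_six_le hR j x
  have h2 := fun j k => h.abs_pd_pd_pow_six_le j k x
  refine energyFlux_le hR (h.nonneg x) (h.le_one x) (potentialDensity_nonneg R A x)
    (fun j => (h1 j).trans (mul_le_of_le_one_right (by positivity) hψ4))
    (abs_lap_le fun j => (h2 j j).trans (mul_le_of_le_one_right (by positivity) hψ4))
    fun i j => ?_
  refine (abs_pd_corrector_le (c := 36 * M ^ 2 * ψ x ^ 4) hR (by fun_prop) hA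
    (fun j => (h1 j).trans_eq (by ring)) (fun j k => (h2 j k).trans_eq (by ring)) i j).trans_eq ?_
  ring

theorem energyFlux_corrector_eq_zero (h : IsAnnularCutoff M R ψ)
    (hA : ∀ i j, ContDiff ℝ ∞ (A i j)) {x : R3} (hx : x ∉ annulus R) :
    energyFlux u v θ (fun y => ψ y ^ 6) (corrector (fun y => ψ y ^ 6) A) x = 0 := by
  have h6 := h.toIsCutoff.pow (n := 6) (by norm_num)
  have hpd := h6.pd_eq_zero hx
  have hpd2 (i k : Fin 3) : pd (pd (fun y => ψ y ^ 6) i) k x = 0 :=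
    pd_eq_zero_of_notMem_tsupport (fun hx' => hx (h6.tsupport_pd_subset i hx')) k
  simp [energyFlux, pd_corrector h6.contDiff hA, hpd, hpd2, lap]

end IsAnnularCutoff

namespace IsTropicalClimateFlow

variable {u v : Fin 3 → R3 → ℝ} {π θ ψ : R3 → ℝ} {A : Fin 3 → Fin 3 → R3 → ℝ} {M R : ℝ}

theorem integral_pow_six_mul_dissipation_le (h : IsTropicalClimateFlow u v π θ)
    (hψ : IsAnnularCutoff M R ψ) (hR : 0 < R) (hA : IsVectorPotential A u) :
    ∫ x, ψ x ^ 6 * dissipation u v θ x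
      ≤ 2 * (18 * (36 * M ^ 2) + 162 * (36 * M ^ 2) ^ 2)
        * ∫ x in annulus R, errorDensity R u v θ ψ (potentialDensity R A) x := by
  have hA' := hA.contDiff
  have hu := h.contDiff_velocity
  have hv := h.contDiff_baroclinic
  have hθ := h.contDiff_temperature
  have hψ' := hψ.contDiff
  have h6 := hψ.toIsCutoff.pow (n := 6) (by norm_num)
  set K := 18 * (36 * M ^ 2) + 162 * (36 * M ^ 2) ^ 2
  set D := fun x => ψ x ^ 6 * dissipation u v θ x
  set Φ := energyFlux u v θ (fun y => ψ y ^ 6) (corrector (fun y => ψ y ^ 6) A)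
  set E := errorDensity R u v θ ψ (potentialDensity R A)
  have hD : Continuous D := by fun_prop
  have hD_supp : HasCompactSupport D := h6.hasCompactSupport.mul_right
  have hE : Continuous E := by fun_prop
  have hD_int : Integrable D := hD.integrable_of_hasCompactSupport hD_supp
  have hbalance : IsExactDivergence fun x => -D x + Φ x :=
    h.isExactDivergence_energyFlux h6.contDiff h6.hasCompactSupport hA
  have hΦ_int : Integrable Φ :=
    (hbalance.integrable.add hD_int).congr (.of_forall fun x => neg_add_cancel_comm _ _)
  have hD_eq : ∫ x, D x = ∫ x, Φ x := by
    have hneg : Integrable fun x => -D x := hD_int.neg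
    have hzero := hbalance.integral_eq_zero
    rw [integral_add hneg hΦ_int, integral_neg] at hzero
    linarith
  have hE_int : IntegrableOn E (annulus R) :=
    hE.continuousOn.integrableOn_compact (isCompact_annulus R)
  have hhalf_int : Integrable fun x => 1 / 2 * D x := hD_int.const_mul _
  have hΦ_le : ∫ x in annulus R, Φ x ≤ ∫ x in annulus R, (1 / 2 * D x + K * E x) :=
    setIntegral_mono_on hΦ_int.integrableOn (hhalf_int.integrableOn.add (hE_int.const_mul K))
      (isCompact_annulus R).measurableSet fun x _ => hψ.energyFlux_corrector_le hR hA' x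
  rw [integral_add hhalf_int.integrableOn (hE_int.const_mul K), integral_const_mul,
    integral_const_mul, setIntegral_eq_integral_of_forall_compl_eq_zero
      fun x hx => hψ.energyFlux_corrector_eq_zero hA' hx] at hΦ_le
  have hD_le : ∫ x in annulus R, D x ≤ ∫ x, D x :=
    setIntegral_le_integral hD_int (.of_forall fun x =>
      mul_nonneg (h6.nonneg x) (dissipation_nonneg u v θ x))
  linarith

end IsTropicalClimateFlow

theorem exists_localEnergyInequality :
    ∃ C, 0 ≤ C ∧ ∀ (u v : Fin 3 → R3 → ℝ) (π θ : R3 → ℝ), IsTropicalClimateFlow u v π θ →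
      ∀ R : ℝ, 0 < R → ∃ ψ G : R3 → ℝ, IsAnnularCutoff C R ψ ∧ Continuous G ∧ (∀ x, 0 ≤ G x) ∧
        ∫ x in annulus R, G x ≤ C * (R⁻¹ ^ 2 * ∫ x in closedBall (0 : R3) (4 * R), normSq u x) ∧
        ∫ x, ψ x ^ 6 * dissipation u v θ x
          ≤ C * ∫ x in annulus R, errorDensity R u v θ ψ G x := by
  obtain ⟨B, hB, hpotential⟩ := exists_isVectorPotential
  obtain ⟨M, hcutoff⟩ := exists_isAnnularCutoff
  have hM : 1 ≤ M := (hcutoff 1 one_pos).choose_spec.one_le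
  set K := 2 * (18 * (36 * M ^ 2) + 162 * (36 * M ^ 2) ^ 2)
  have hK : 0 ≤ K := by positivity
  refine ⟨B + M + K, by positivity, fun u v π θ h R hR => ?_⟩
  obtain ⟨ψ, hψ⟩ := hcutoff R hR
  obtain ⟨A, hA, hG⟩ := hpotential u h.contDiff_velocity h.incompressible R hR
  have hcont : Continuous (potentialDensity R A) := continuous_potentialDensity hA.contDiff R
  have hG0 := potentialDensity_nonneg R A
  refine ⟨ψ, potentialDensity R A, hψ.mono (by linarith) hR, hcont, hG0, ?_, ?_⟩
  · calc ∫ x in annulus R, potentialDensity R A x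
        ≤ ∫ x in closedBall 0 (2 * R), potentialDensity R A x :=
          setIntegral_mono_set (integrableOn_closedBall hcont _) (.of_forall hG0)
            (annulus_subset_closedBall R).eventuallyLE
      _ ≤ B * (R⁻¹ ^ 2 * ∫ x in closedBall 0 (4 * R), normSq u x) := hG
      _ ≤ _ := by
          gcongr
          · exact mul_nonneg (by positivity) (integral_nonneg (normSq_nonneg u))
          · linarith
  · refine (h.integral_pow_six_mul_dissipation_le hψ hR hA).trans ?_
    gcongr
    · exact integral_nonneg fun x => errorDensity_nonneg hR.le (hG0 x)
    · linarith

/-! ### Decay on annuli -/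

section Holder

variable {α : Type*} [MeasurableSpace α] {μ : Measure α} {f g h : α → ℝ} {a b c : ℝ}

theorem integral_rpow_mul_rpow_mul_rpow_le (hf : Integrable f μ) (hg : Integrable g μ)
    (hh : Integrable h μ) (hf0 : ∀ x, 0 ≤ f x) (hg0 : ∀ x, 0 ≤ g x) (hh0 : ∀ x, 0 ≤ h x)
    (ha : 0 ≤ a) (hb : 0 ≤ b) (hc : 0 ≤ c) (habc : a + b + c = 1) :
    ∫ x, f x ^ a * g x ^ b * h x ^ c ∂μ
      ≤ (∫ x, f x ∂μ) ^ a * (∫ x, g x ∂μ) ^ b * (∫ x, h x ∂μ) ^ c := by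
  have hofReal {r s t : ℝ} (hr : 0 ≤ r) (hs : 0 ≤ s) (ht : 0 ≤ t) :
      ENNReal.ofReal (r ^ a * s ^ b * t ^ c)
        = ENNReal.ofReal r ^ a * ENNReal.ofReal s ^ b * ENNReal.ofReal t ^ c := by
    rw [ENNReal.ofReal_mul (by positivity), ENNReal.ofReal_mul (by positivity),
      ENNReal.ofReal_rpow_of_nonneg hr ha, ENNReal.ofReal_rpow_of_nonneg hs hb,
      ENNReal.ofReal_rpow_of_nonneg ht hc]
  have hint {k : α → ℝ} (hk : Integrable k μ) (hk0 : ∀ x, 0 ≤ k x) :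
      ENNReal.ofReal (∫ x, k x ∂μ) = ∫⁻ x, ENNReal.ofReal (k x) ∂μ :=
    ofReal_integral_eq_lintegral_ofReal hk (.of_forall hk0)
  have hholder := ENNReal.lintegral_prod_norm_pow_le (μ := μ) (Finset.univ : Finset (Fin 3))
    (f := ![fun x => ENNReal.ofReal (f x), fun x => ENNReal.ofReal (g x),
      fun x => ENNReal.ofReal (h x)]) (p := ![a, b, c])
    (by simp [Fin.forall_fin_succ, hf.aemeasurable.ennreal_ofReal,
      hg.aemeasurable.ennreal_ofReal, hh.aemeasurable.ennreal_ofReal])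
    (by simp [Fin.sum_univ_three, habc]) (by simp [Fin.forall_fin_succ, ha, hb, hc])
  simp only [Fin.prod_univ_three, Matrix.cons_val_zero, Matrix.cons_val_one,
    Matrix.cons_val] at hholder
  have hf' := integral_nonneg (μ := μ) (f := f) hf0
  have hg' := integral_nonneg (μ := μ) (f := g) hg0
  have hh' := integral_nonneg (μ := μ) (f := h) hh0
  have hmeas : AEStronglyMeasurable (fun x => f x ^ a * g x ^ b * h x ^ c) μ :=
    (((hf.aemeasurable.pow_const a).mul (hg.aemeasurable.pow_const b)).mul
      (hh.aemeasurable.pow_const c)).aestronglyMeasurable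
  rw [integral_eq_lintegral_of_nonneg_ae (.of_forall fun x => by
    have := hf0 x; have := hg0 x; have := hh0 x; positivity) hmeas]
  refine ENNReal.toReal_le_of_le_ofReal (by positivity) ?_
  rw [hofReal hf' hg' hh', hint hf hf0, hint hg hg0, hint hh hh0]
  simpa only [hofReal (hf0 _) (hg0 _) (hh0 _)] using hholder

theorem integral_rpow_mul_rpow_le [IsFiniteMeasure μ] (hf : Integrable f μ) (hg : Integrable g μ)
    (hf0 : ∀ x, 0 ≤ f x) (hg0 : ∀ x, 0 ≤ g x) (ha : 0 ≤ a) (hb : 0 ≤ b) (hab : a + b ≤ 1) :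
    ∫ x, f x ^ a * g x ^ b ∂μ
      ≤ (∫ x, f x ∂μ) ^ a * (∫ x, g x ∂μ) ^ b * μ.real Set.univ ^ (1 - (a + b)) := by
  simpa using integral_rpow_mul_rpow_mul_rpow_le hf hg (integrable_const 1) hf0 hg0
    (fun _ => zero_le_one) ha hb (sub_nonneg.2 hab) (by ring)

end Holder

/-- The volume of the ball of radius `c`. -/
def ballVolume (c : ℝ) : ℝ := volume.real (closedBall (0 : R3) c)

theorem ballVolume_nonneg (c : ℝ) : 0 ≤ ballVolume c := measureReal_nonneg

theorem ballVolume_mul {c R : ℝ} (hc : 0 ≤ c) (hR : 0 ≤ R) :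
    ballVolume (c * R) = R ^ 3 * ballVolume c := by
  unfold ballVolume
  rw [Measure.addHaar_real_closedBall _ _ (by positivity), Measure.addHaar_real_closedBall _ _ hc,
    finrank_euclideanSpace_fin]
  ring

theorem setIntegral_rpow_mul_rpow_le {S : Set R3} {f g : R3 → ℝ} {a b c R : ℝ} (hc : 0 ≤ c)
    (hR : 0 ≤ R) (hS : S ⊆ closedBall 0 (c * R)) (hf : IntegrableOn f S) (hg : IntegrableOn g S)
    (hf0 : ∀ x, 0 ≤ f x) (hg0 : ∀ x, 0 ≤ g x) (ha : 0 ≤ a) (hb : 0 ≤ b) (hab : a + b ≤ 1) :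
    ∫ x in S, f x ^ a * g x ^ b ≤ (∫ x in S, f x) ^ a * (∫ x in S, g x) ^ b
      * (ballVolume c ^ (1 - (a + b)) * R ^ (3 * (1 - (a + b)))) := by
  have hball : volume (closedBall (0 : R3) (c * R)) < ⊤ := measure_closedBall_lt_top
  have : IsFiniteMeasure (volume.restrict S) :=
    isFiniteMeasure_restrict.2 (measure_mono hS |>.trans_lt hball).ne
  have hf' : 0 ≤ ∫ x in S, f x := integral_nonneg hf0
  have hg' : 0 ≤ ∫ x in S, g x := integral_nonneg hg0
  have hV := ballVolume_nonneg c
  refine (integral_rpow_mul_rpow_le hf hg hf0 hg0 ha hb hab).trans ?_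
  gcongr
  calc (volume.restrict S).real Set.univ ^ (1 - (a + b))
      ≤ ballVolume (c * R) ^ (1 - (a + b)) := by
        rw [measureReal_restrict_apply_univ]
        exact Real.rpow_le_rpow measureReal_nonneg (measureReal_mono hS hball.ne) (by linarith)
    _ = _ := by
        rw [ballVolume_mul hc hR, Real.mul_rpow (by positivity) hV, Real.rpow_mul hR, mul_comm]
        norm_cast

theorem tendsto_setIntegral_annulus {f : R3 → ℝ} (hf : Integrable f) :
    Tendsto (fun R => ∫ x in annulus R, f x) atTop (𝓝 0) := by
  have hmeas (R : ℝ) : MeasurableSet (annulus R) := (isCompact_annulus R).measurableSet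
  simp only [← integral_indicator (hmeas _)]
  rw [← integral_zero R3 ℝ]
  refine tendsto_integral_filter_of_dominated_convergence (fun x => ‖f x‖)
    (.of_forall fun R => hf.aestronglyMeasurable.indicator (hmeas R))
    (.of_forall fun R => .of_forall fun x => norm_indicator_le_norm_self _ _) hf.norm
    (.of_forall fun x => ?_)
  refine tendsto_const_nhds.congr' ?_
  filter_upwards [eventually_gt_atTop ‖x‖] with R hR
  rw [Set.indicator_of_notMem fun hx => hx.2 (mem_ball_zero_iff.2 hR)]

theorem abs_rpow_rpow_div (y : ℝ) {s : ℝ} (hs : 0 < s) (k : ℕ) :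
    (|y| ^ s) ^ (k / s) = |y| ^ k := by
  rw [← Real.rpow_mul (abs_nonneg y), mul_div_cancel₀ _ hs.ne', Real.rpow_natCast]

theorem tendsto_setIntegral_annulus_pow_mul_pow {f g : R3 → ℝ} {s t : ℝ} (hs : 0 < s) (ht : 0 < t)
    (hf : Integrable fun x => |f x| ^ s) (hg : Integrable fun x => |g x| ^ t) {k : ℕ} (hk : k ≠ 0)
    (l : ℕ) {n : ℕ} (h1 : k / s + l / t ≤ 1) (hn : 3 * (1 - (k / s + l / t)) ≤ n) :
    Tendsto (fun R : ℝ => R⁻¹ ^ n * ∫ x in annulus R, |f x| ^ k * |g x| ^ l) atTop (𝓝 0) := by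
  have hf0 (x : R3) : 0 ≤ |f x| ^ s := by positivity
  have hg0 (x : R3) : 0 ≤ |g x| ^ t := by positivity
  have hV := ballVolume_nonneg 2
  let c : ℝ := (∫ x, |g x| ^ t) ^ (l / t) * ballVolume 2 ^ (1 - (k / s + l / t))
  have htail : Tendsto (fun R => (∫ x in annulus R, |f x| ^ s) ^ (k / s) * c) atTop (𝓝 0) := by
    have hks : k / s ≠ 0 := by positivity
    simpa [Real.zero_rpow hks] using
      ((tendsto_setIntegral_annulus hf).rpow_const (p := k / s) (.inr (by positivity))).mul_const c
  refine squeeze_zero' ?_ ?_ htail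
  · filter_upwards [eventually_ge_atTop 0] with R hR
    have : 0 ≤ ∫ x in annulus R, |f x| ^ k * |g x| ^ l := integral_nonneg fun x => by positivity
    positivity
  · filter_upwards [eventually_ge_atTop 1] with R hR
    have hR0 : 0 < R := one_pos.trans_le hR
    have hholder := setIntegral_rpow_mul_rpow_le zero_le_two hR0.le (annulus_subset_closedBall R)
      hf.integrableOn hg.integrableOn hf0 hg0 (a := k / s) (b := l / t) (by positivity)
      (by positivity) h1
    simp only [abs_rpow_rpow_div _ hs, abs_rpow_rpow_div _ ht] at hholder
    have hRn : R ^ (3 * (1 - (k / s + l / t))) ≤ R ^ n := by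
      rw [← Real.rpow_natCast]
      exact Real.rpow_le_rpow_of_exponent_le hR hn
    calc _ ≤ R⁻¹ ^ n * ((∫ x in annulus R, |f x| ^ s) ^ (k / s) * (∫ x, |g x| ^ t) ^ (l / t)
          * (ballVolume 2 ^ (1 - (k / s + l / t)) * R ^ n)) := by
          refine mul_le_mul_of_nonneg_left (hholder.trans ?_) (by positivity)
          gcongr
          · exact .of_forall hg0
          · exact Measure.restrict_le_self
      _ = _ := by
          have hcancel : R⁻¹ ^ n * R ^ n = 1 := by
            rw [← mul_pow, inv_mul_cancel₀ hR0.ne', one_pow]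
          linear_combination ((∫ x in annulus R, |f x| ^ s) ^ (k / s) * c) * hcancel

/-- The exponents `s` for which `R⁻¹ |u| |f|²` is negligible on `annulus R` for large `R`, when
`|u| ∈ Lᵖ` and `f ∈ Lˢ`. -/
structure IsAdmissible (p s : ℝ) : Prop where
  pos : 0 < s
  two_thirds_le : 2 / 3 ≤ 1 / p + 2 / s
  le_one : 1 / p + 2 / s ≤ 1

theorem isAdmissible_self_iff {p : ℝ} (hp : 0 < p) : IsAdmissible p p ↔ 3 ≤ p ∧ p ≤ 9 / 2 := by
  have h3 : 1 / p + 2 / p = 3 / p := by ring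
  have hl : 2 / 3 ≤ 3 / p ↔ p ≤ 9 / 2 := by
    rw [le_div_iff₀ hp]
    constructor <;> intro h <;> linarith
  have hu : 3 / p ≤ 1 ↔ 3 ≤ p := div_le_one hp
  exact ⟨fun h => ⟨hu.1 (h3 ▸ h.le_one), hl.1 (h3 ▸ h.two_thirds_le)⟩,
    fun h => ⟨hp, h3 ▸ hl.2 h.2, h3 ▸ hu.2 h.1⟩⟩

theorem isAdmissible_of_conjExponent_le {p s : ℝ} (hp : 1 < p) (hs : 2 * (p / (p - 1)) ≤ s)
    (h : 2 / 3 ≤ 1 / p + 2 / s) : IsAdmissible p s := by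
  have hs0 : 0 < s := lt_of_lt_of_le (by positivity) hs
  refine ⟨hs0, h, ?_⟩
  calc 1 / p + 2 / s ≤ 1 / p + 2 / (2 * (p / (p - 1))) := by gcongr
    _ = 1 := by field_simp; ring

namespace IsAdmissible

variable {p s : ℝ}

theorem one_third_le (hp : IsAdmissible p p) (hs : IsAdmissible p s) : 1 / 3 ≤ 2 / s := by
  have h := hp.le_one
  have h3 : 1 / p + 2 / p = 3 * (1 / p) := by ring
  linarith [hs.two_thirds_le]

theorem le_seven_ninths (hp : IsAdmissible p p) (hs : IsAdmissible p s) : 2 / s ≤ 7 / 9 := by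
  have h := hp.two_thirds_le
  have h3 : 1 / p + 2 / p = 3 * (1 / p) := by ring
  linarith [hs.le_one]

end IsAdmissible

section EnergyDecay

variable {u v : Fin 3 → R3 → ℝ} {θ : R3 → ℝ} {p q r : ℝ}

theorem tendsto_setIntegral_energyDensity (hu : ∀ i, Continuous (u i)) (hv : ∀ i, Continuous (v i))
    (hθ : Continuous θ) (hp : 0 < p) (hq : 0 < q) (hr : 0 < r)
    (hLu : Integrable fun x => |fieldNorm u x| ^ p) (hLv : Integrable fun x => |fieldNorm v x| ^ q)
    (hLθ : Integrable fun x => |θ x| ^ r) {l n : ℕ}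
    (h1 : ∀ s ∈ ({p, q, r} : Set ℝ), 2 / s + l / p ≤ 1)
    (hn : ∀ s ∈ ({p, q, r} : Set ℝ), 3 * (1 - (2 / s + l / p)) ≤ n) :
    Tendsto (fun R : ℝ => R⁻¹ ^ n * ∫ x in annulus R, fieldNorm u x ^ l * energyDensity u v θ x)
      atTop (𝓝 0) := by
  have hterm {f : R3 → ℝ} {s : ℝ} (hs : 0 < s) (hf : Integrable fun x => |f x| ^ s)
      (hmem : s ∈ ({p, q, r} : Set ℝ)) :
      Tendsto (fun R : ℝ => R⁻¹ ^ n * ∫ x in annulus R, |f x| ^ 2 * |fieldNorm u x| ^ l)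
        atTop (𝓝 0) :=
    tendsto_setIntegral_annulus_pow_mul_pow hs hp hf hLu two_ne_zero l (by exact_mod_cast h1 s hmem)
      (by exact_mod_cast hn s hmem)
  have hint (R : ℝ) {g : R3 → ℝ} (hg : Continuous g) : IntegrableOn g (annulus R) :=
    hg.continuousOn.integrableOn_compact (isCompact_annulus R)
  have hsum := ((hterm hp hLu (by simp)).add (hterm hq hLv (by simp))).add (hterm hr hLθ (by simp))
  simp only [add_zero] at hsum
  refine hsum.congr fun R => ?_
  rw [← mul_add, ← mul_add, ← integral_add (hint R (by fun_prop)) (hint R (by fun_prop)),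
    ← integral_add (hint R (by fun_prop)) (hint R (by fun_prop))]
  congr 2 with x
  simp only [energyDensity, sq_abs, fieldNorm_sq, abs_of_nonneg (fieldNorm_nonneg u x)]
  ring

end EnergyDecay

section Sobolev

variable {f ψ : R3 → ℝ} {M R : ℝ}

theorem hasCompactSupport_gradSq (hf : HasCompactSupport f) : HasCompactSupport (gradSq f) := by
  unfold gradSq
  exact hasCompactSupport_sum fun j _ =>
    (hasCompactSupport_pd hf j).comp_left (g := fun y => y ^ 2) (by norm_num)

theorem exists_integral_pow_six_le :
    ∃ C, 0 ≤ C ∧ ∀ g : R3 → ℝ, ContDiff ℝ ∞ g → HasCompactSupport g →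
      ∫ x, g x ^ 6 ≤ C * (∫ x, gradSq g x) ^ 3 := by
  let c : NNReal := SNormLESNormFDerivOfEqConst ℝ (volume : Measure R3) ((2 : NNReal) : ℝ)
  refine ⟨(c : ℝ) ^ 6, by positivity, fun g hg hc => ?_⟩
  have hg1 : ContDiff ℝ 1 g := hg.of_le (by exact_mod_cast le_top)
  have hfderiv : Continuous (fderiv ℝ g) := hg1.continuous_fderiv (by norm_num)
  have hgrad := continuous_gradSq hg
  have hsobolev : eLpNorm g 6 volume ≤ c * eLpNorm (fderiv ℝ g) 2 volume :=
    eLpNorm_le_eLpNorm_fderiv_of_eq (p := 2) (p' := 6) volume hg1 hc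
      (by norm_num) (by simp) (by simp; norm_num)
  have h6 : eLpNorm g 6 volume = ENNReal.ofReal ((∫ x, g x ^ 6) ^ (6 : ℝ)⁻¹) := by
    rw [(hg.continuous.memLp_of_hasCompactSupport hc).eLpNorm_eq_integral_rpow_norm
      (by norm_num) (by norm_num)]
    norm_num [(show Even 6 by decide).pow_abs]
  have h2 : eLpNorm (fderiv ℝ g) 2 volume
      = ENNReal.ofReal ((∫ x, ‖fderiv ℝ g x‖ ^ 2) ^ (2 : ℝ)⁻¹) := by
    rw [(hfderiv.memLp_of_hasCompactSupport (hc.fderiv ℝ)).eLpNorm_eq_integral_rpow_norm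
      (by norm_num) (by norm_num)]
    norm_num
  have hle : ∫ x, ‖fderiv ℝ g x‖ ^ 2 ≤ ∫ x, gradSq g x :=
    integral_mono_of_nonneg (.of_forall fun x => sq_nonneg _)
      (hgrad.integrable_of_hasCompactSupport (hasCompactSupport_gradSq hc))
      (.of_forall fun x => norm_fderiv_sq_le_gradSq g x)
  have hB : 0 ≤ ∫ x, ‖fderiv ℝ g x‖ ^ 2 := integral_nonneg fun x => sq_nonneg _
  have hA : 0 ≤ ∫ x, g x ^ 6 := integral_nonneg fun x => by positivity
  rw [h6, h2, ← ENNReal.ofReal_coe_nnreal, ← ENNReal.ofReal_mul (by positivity),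
    ENNReal.ofReal_le_ofReal_iff (by positivity)] at hsobolev
  calc ∫ x, g x ^ 6 = ((∫ x, g x ^ 6) ^ (6 : ℝ)⁻¹) ^ 6 :=
        (Real.rpow_inv_natCast_pow hA (by norm_num)).symm
    _ ≤ (c * (∫ x, ‖fderiv ℝ g x‖ ^ 2) ^ (2 : ℝ)⁻¹) ^ 6 := by gcongr
    _ = c ^ 6 * (((∫ x, ‖fderiv ℝ g x‖ ^ 2) ^ (2 : ℝ)⁻¹) ^ 2) ^ 3 := by ring
    _ = c ^ 6 * (∫ x, ‖fderiv ℝ g x‖ ^ 2) ^ 3 := by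
        congr 2
        exact Real.rpow_inv_natCast_pow hB two_ne_zero
    _ ≤ _ := by gcongr

namespace IsAnnularCutoff

theorem gradSq_cube_mul_le (h : IsAnnularCutoff M R ψ) (hf : ContDiff ℝ ∞ f) (x : R3) :
    gradSq (fun y => ψ y ^ 3 * f y) x
      ≤ 54 * M ^ 2 * (R⁻¹ ^ 2 * f x ^ 2) + 2 * (ψ x ^ 6 * gradSq f x) := by
  have hψ := h.contDiff
  have hterm (j : Fin 3) : pd (fun y => ψ y ^ 3 * f y) j x ^ 2
      ≤ 18 * M ^ 2 * (R⁻¹ ^ 2 * f x ^ 2) + 2 * (ψ x ^ 6 * pd f j x ^ 2) := by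
    have hψ4 : ψ x ^ 4 ≤ 1 := pow_le_one₀ (h.nonneg x) (h.le_one x)
    have hd : pd ψ j x ^ 2 ≤ (M * R⁻¹) ^ 2 := sq_le_sq.2 ((h.abs_pd_le j x).trans (le_abs_self _))
    have hprod : ψ x ^ 4 * pd ψ j x ^ 2 * f x ^ 2 ≤ 1 * (M * R⁻¹) ^ 2 * f x ^ 2 := by gcongr
    simp (disch := fun_prop) only [pd_mul, pd_pow]
    push_cast
    nlinarith [sq_nonneg (3 * ψ x ^ 2 * pd ψ j x * f x - ψ x ^ 3 * pd f j x)]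
  simp only [gradSq, Fin.sum_univ_three]
  linarith [hterm 0, hterm 1, hterm 2]

theorem integral_gradSq_cube_mul_le (h : IsAnnularCutoff M R ψ) (hf : ContDiff ℝ ∞ f) :
    ∫ x, gradSq (fun y => ψ y ^ 3 * f y) x
      ≤ 54 * M ^ 2 * (R⁻¹ ^ 2 * ∫ x in annulus R, f x ^ 2) + 2 * ∫ x, ψ x ^ 6 * gradSq f x := by
  have hψ := h.contDiff
  have hψc := hψ.continuous
  have hfc := hf.continuous
  have hint : Integrable fun x => ψ x ^ 6 * gradSq f x :=
    Continuous.integrable_of_hasCompactSupport (by fun_prop)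
      (h.pow (n := 6) (by norm_num)).hasCompactSupport.mul_right
  have hint' : Integrable fun x => gradSq (fun y => ψ y ^ 3 * f y) x :=
    (continuous_gradSq (by fun_prop)).integrable_of_hasCompactSupport
      (hasCompactSupport_gradSq (h.pow (n := 3) (by norm_num)).hasCompactSupport.mul_right)
  have hψ6 (x : R3) : 0 ≤ ψ x ^ 6 * gradSq f x :=
    mul_nonneg (pow_nonneg (h.nonneg x) 6) (gradSq_nonneg f x)
  have hle : ∫ x, (gradSq (fun y => ψ y ^ 3 * f y) x - ψ x ^ 6 * gradSq f x)
      ≤ ∫ x in annulus R, (54 * M ^ 2 * (R⁻¹ ^ 2 * f x ^ 2) + ψ x ^ 6 * gradSq f x) := by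
    refine integral_le_setIntegral_of_eq_zero (isCompact_annulus R) (by fun_prop) (by fun_prop)
      (fun x hx => ?_) fun x _ => by linarith [h.gradSq_cube_mul_le hf x]
    simp (disch := fun_prop) only [gradSq, pd_mul, pd_pow, h.pd_eq_zero hx, Finset.mul_sum,
      mul_zero, zero_mul, add_zero, mul_pow, ← pow_mul, sub_self]
  rw [integral_sub hint' hint, integral_add _ hint.integrableOn] at hle
  · simp only [integral_const_mul] at hle
    linarith [setIntegral_le_integral (s := annulus R) hint (.of_forall hψ6)]
  · exact Continuous.continuousOn (by fun_prop) |>.integrableOn_compact (isCompact_annulus R)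

end IsAnnularCutoff

end Sobolev

section OneAdd

variable {α : Type*} {l : Filter α} {f g : α → ℝ}

theorem isBigO_one_add_of_le (hf : ∀ᶠ x in l, 0 ≤ f x) (hfg : ∀ᶠ x in l, f x ≤ g x) :
    (fun x => 1 + f x) =O[l] fun x => 1 + g x := by
  refine .of_bound 1 ?_
  filter_upwards [hf, hfg] with x hf hfg
  rw [one_mul, Real.norm_of_nonneg (by linarith), Real.norm_of_nonneg (by linarith)]
  linarith

theorem isBigO_one_one_add (hf : ∀ᶠ x in l, 0 ≤ f x) :
    (fun _ => (1 : ℝ)) =O[l] fun x => 1 + f x := by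
  simpa using isBigO_one_add_of_le (f := fun _ => 0) (.of_forall fun _ => le_rfl) hf

theorem tendsto_zero_of_isLittleO_one_add (h : f =o[l] fun x => 1 + f x) : Tendsto f l (𝓝 0) := by
  have hbounded := h.right_isBigO_sub
  simp only [add_sub_cancel_right] at hbounded
  exact (Asymptotics.isLittleO_one_iff ℝ).1 (h.trans_isBigO hbounded)

end OneAdd

section PotentialTerm

theorem exists_interpolation_exponents {s : ℝ} (hs : 12 / 5 ≤ s) (hs4 : s ≤ 4) :
    ∃ a b : ℝ, 0 ≤ a ∧ 0 ≤ b ∧ a + b = 1 / 2 ∧ s * a + 6 * b = 2 ∧ 18 * b ≤ 4 := by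
  have hs6 : 0 < 6 - s := by linarith
  refine ⟨1 / (6 - s), (4 - s) / (2 * (6 - s)), by positivity,
    div_nonneg (by linarith) (by positivity), ?_, ?_, ?_⟩
  · field_simp
    ring
  · field_simp
    ring
  · rw [← mul_div_assoc, div_le_iff₀ (by positivity)]
    linarith

theorem pow_four_mul_sqrt_mul_sq_le {P y G s a b : ℝ} (hP0 : 0 ≤ P) (hP1 : P ≤ 1) (hs : 0 ≤ s)
    (ha : 0 ≤ a) (hb : 0 ≤ b) (hab : s * a + 6 * b = 2) (hb4 : 18 * b ≤ 4) :
    P ^ 4 * √G * y ^ 2 ≤ (|y| ^ s) ^ a * ((P ^ 3 * y) ^ 6) ^ b * G ^ (1 / 2 : ℝ) := by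
  have hy := abs_nonneg y
  have hfactor : (|y| ^ s) ^ a * ((P ^ 3 * y) ^ 6) ^ b = P ^ (18 * b) * y ^ 2 := by
    have hpow : (P ^ 3 * y) ^ 6 = P ^ (18 : ℝ) * |y| ^ (6 : ℝ) := by
      norm_cast
      rw [(show Even 6 by decide).pow_abs]
      ring
    rw [hpow, Real.mul_rpow (by positivity) (by positivity), ← Real.rpow_mul hP0,
      ← Real.rpow_mul hy, ← Real.rpow_mul hy, mul_left_comm,
      ← Real.rpow_add_of_nonneg hy (by positivity) (by positivity), hab, Real.rpow_two, sq_abs]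
  have hP : P ^ 4 ≤ P ^ (18 * b) := by
    rw [← Real.rpow_natCast]
    exact Real.rpow_le_rpow_of_exponent_ge' hP0 hP1 (by positivity) (by exact_mod_cast hb4)
  rw [hfactor, ← Real.sqrt_eq_rpow, mul_right_comm]
  gcongr

namespace IsAnnularCutoff

variable {M R s : ℝ} {ψ f G : R3 → ℝ}

theorem setIntegral_pow_four_mul_sqrt_mul_sq_le_of_four_le (h : IsAnnularCutoff M R ψ)
    (hR : 0 ≤ R) (hf : Continuous f) (hL : Integrable fun x => |f x| ^ s) (hs : 4 ≤ s)
    (hGc : Continuous G) (hG0 : ∀ x, 0 ≤ G x) :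
    ∫ x in annulus R, ψ x ^ 4 * √(G x) * f x ^ 2
      ≤ (∫ x in annulus R, |f x| ^ s) ^ (2 / s) * (∫ x in annulus R, G x) ^ (1 / 2 : ℝ)
        * (ballVolume 2 ^ (1 - (2 / s + 1 / 2)) * R ^ (3 * (1 - (2 / s + 1 / 2)))) := by
  have hψ := h.contDiff.continuous
  have hs0 : 0 < s := by linarith
  have hs2 : 2 / s + 1 / 2 ≤ 1 := by
    have : 2 / s ≤ 2 / 4 := by gcongr
    linarith
  have hsq (x : R3) : (|f x| ^ s) ^ (2 / s) = f x ^ 2 := by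
    simpa using abs_rpow_rpow_div (f x) hs0 2
  calc _ ≤ ∫ x in annulus R, (|f x| ^ s) ^ (2 / s) * G x ^ (1 / 2 : ℝ) := by
        simp only [hsq, ← Real.sqrt_eq_rpow]
        refine setIntegral_mono_of_continuous (isCompact_annulus R) (by fun_prop) (by fun_prop)
          fun x _ => ?_
        rw [mul_assoc, mul_comm (f x ^ 2)]
        exact mul_le_of_le_one_left (by positivity) (pow_le_one₀ (h.nonneg x) (h.le_one x))
    _ ≤ _ := setIntegral_rpow_mul_rpow_le zero_le_two hR (annulus_subset_closedBall R)
        hL.integrableOn (hGc.continuousOn.integrableOn_compact (isCompact_annulus R))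
        (fun x => by positivity) hG0 (by positivity) (by norm_num) hs2

theorem setIntegral_pow_four_mul_sqrt_mul_sq_le_of_exponents (h : IsAnnularCutoff M R ψ)
    (hf : Continuous f) (hL : Integrable fun x => |f x| ^ s) (hs : 0 ≤ s) {a b : ℝ} (ha : 0 ≤ a)
    (hb : 0 ≤ b) (hsum : a + b = 1 / 2) (hab : s * a + 6 * b = 2) (hb4 : 18 * b ≤ 4)
    (hGc : Continuous G) (hG0 : ∀ x, 0 ≤ G x) :
    ∫ x in annulus R, ψ x ^ 4 * √(G x) * f x ^ 2
      ≤ (∫ x, |f x| ^ s) ^ a * (∫ x, (ψ x ^ 3 * f x) ^ 6) ^ b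
        * (∫ x in annulus R, G x) ^ (1 / 2 : ℝ) := by
  have hψ := h.contDiff.continuous
  have hfs0 (x : R3) : 0 ≤ |f x| ^ s := by positivity
  have hψf0 (x : R3) : 0 ≤ (ψ x ^ 3 * f x) ^ 6 := by positivity
  have hψf : Integrable fun x => (ψ x ^ 3 * f x) ^ 6 :=
    Continuous.integrable_of_hasCompactSupport (by fun_prop)
      ((h.pow (n := 3) (by norm_num)).hasCompactSupport.mul_right.comp_left
        (g := fun y : ℝ => y ^ 6) (by norm_num))
  have hprod : Continuous fun x =>
      (|f x| ^ s) ^ a * ((ψ x ^ 3 * f x) ^ 6) ^ b * G x ^ (1 / 2 : ℝ) :=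
    (((hf.abs.rpow_const fun _ => .inr hs).rpow_const fun _ => .inr ha).mul
      (Continuous.rpow_const (by fun_prop) fun _ => .inr hb)).mul
      (hGc.rpow_const fun _ => .inr (by norm_num))
  have hG : 0 ≤ ∫ x in annulus R, G x := integral_nonneg hG0
  calc _ ≤ ∫ x in annulus R, (|f x| ^ s) ^ a * ((ψ x ^ 3 * f x) ^ 6) ^ b * G x ^ (1 / 2 : ℝ) :=
        setIntegral_mono_of_continuous (isCompact_annulus R) (by fun_prop) hprod fun x _ =>
          pow_four_mul_sqrt_mul_sq_le (h.nonneg x) (h.le_one x) hs ha hb hab hb4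
    _ ≤ (∫ x in annulus R, |f x| ^ s) ^ a * (∫ x in annulus R, (ψ x ^ 3 * f x) ^ 6) ^ b
          * (∫ x in annulus R, G x) ^ (1 / 2 : ℝ) :=
        integral_rpow_mul_rpow_mul_rpow_le hL.integrableOn hψf.integrableOn
          (hGc.continuousOn.integrableOn_compact (isCompact_annulus R)) hfs0 hψf0
          hG0 ha hb (by norm_num) (by linarith)
    _ ≤ _ := by
        have hle₁ := setIntegral_le_integral (s := annulus R) hL (.of_forall hfs0)
        have hle₂ := setIntegral_le_integral (s := annulus R) hψf (.of_forall hψf0)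
        gcongr

theorem integral_pow_six_mul_gradSq_nonneg (h : IsAnnularCutoff M R ψ) (f : R3 → ℝ) :
    0 ≤ ∫ x, ψ x ^ 6 * gradSq f x :=
  integral_nonneg fun x => mul_nonneg (pow_nonneg (h.nonneg x) 6) (gradSq_nonneg f x)

end IsAnnularCutoff

variable {M K m s : ℝ} {f : R3 → ℝ} {ψ G : ℝ → R3 → ℝ}

theorem eventually_integral_cube_mul_pow_six_le (hψ : ∀ R, 0 < R → IsAnnularCutoff M R (ψ R))
    (hf : ContDiff ℝ ∞ f)
    (hdecay : Tendsto (fun R : ℝ => R⁻¹ ^ 2 * ∫ x in annulus R, f x ^ 2) atTop (𝓝 0)) :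
    ∃ C, 0 ≤ C ∧ ∀ᶠ R in atTop,
      ∫ x, (ψ R x ^ 3 * f x) ^ 6 ≤ C * (1 + ∫ x, ψ R x ^ 6 * gradSq f x) ^ 3 := by
  obtain ⟨C, hC, hsobolev⟩ := exists_integral_pow_six_le
  refine ⟨C * 2 ^ 3, by positivity, ?_⟩
  have hsmall : ∀ᶠ R : ℝ in atTop, 54 * M ^ 2 * (R⁻¹ ^ 2 * ∫ x in annulus R, f x ^ 2) ≤ 2 := by
    have h := hdecay.const_mul (54 * M ^ 2)
    rw [mul_zero] at h
    exact h.eventually_le_const two_pos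
  filter_upwards [eventually_gt_atTop 0, hsmall] with R hR hle
  have hψR := (hψ R hR).contDiff
  have hgrad0 : 0 ≤ ∫ x, gradSq (fun y => ψ R y ^ 3 * f y) x :=
    integral_nonneg fun x => gradSq_nonneg _ x
  have hgrad : ∫ x, gradSq (fun y => ψ R y ^ 3 * f y) x
      ≤ 2 * (1 + ∫ x, ψ R x ^ 6 * gradSq f x) := by
    linarith [(hψ R hR).integral_gradSq_cube_mul_le hf]
  have hsupp : HasCompactSupport fun x => ψ R x ^ 3 * f x :=
    ((hψ R hR).pow (n := 3) (by norm_num)).hasCompactSupport.mul_right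
  have hsix : ∫ x, (ψ R x ^ 3 * f x) ^ 6 ≤ C * (∫ x, gradSq (fun y => ψ R y ^ 3 * f y) x) ^ 3 :=
    hsobolev _ (by fun_prop) hsupp
  rw [mul_assoc, ← mul_pow]
  exact hsix.trans (mul_le_mul_of_nonneg_left (pow_le_pow_left₀ hgrad0 hgrad 3) hC)

/-- Annular cutoffs `ψ R` with a common constant `M`, and weights `G R` whose integral over
`annulus R` is at most `(K R ^ m) ^ 2`. -/
structure IsWeightedCutoffFamily (M K m : ℝ) (ψ G : ℝ → R3 → ℝ) : Prop where
  isAnnularCutoff : ∀ R, 0 < R → IsAnnularCutoff M R (ψ R)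
  continuous : ∀ R, 0 < R → Continuous (G R)
  nonneg : ∀ R, 0 < R → ∀ x, 0 ≤ G R x
  rpow_setIntegral_le : ∀ R, 0 < R → (∫ x in annulus R, G R x) ^ (1 / 2 : ℝ) ≤ K * R ^ m

namespace IsWeightedCutoffFamily

theorem const_nonneg (h : IsWeightedCutoffFamily M K m ψ G) : 0 ≤ K := by
  simpa using (Real.rpow_nonneg (integral_nonneg (h.nonneg 1 one_pos)) _).trans
    (h.rpow_setIntegral_le 1 one_pos)

theorem tendsto_setIntegral_pow_four_mul_sqrt_mul_sq (h : IsWeightedCutoffFamily M K m ψ G)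
    (hf : Continuous f) (hL : Integrable fun x => |f x| ^ s) (hs : 4 ≤ s)
    (hm : m + 3 * (1 / 2 - 2 / s) ≤ 0) :
    Tendsto (fun R => ∫ x in annulus R, ψ R x ^ 4 * √(G R x) * f x ^ 2) atTop (𝓝 0) := by
  have hpow : 0 < 2 / s := by positivity
  let c : ℝ := K * ballVolume 2 ^ (1 - (2 / s + 1 / 2))
  have hc : 0 ≤ c := mul_nonneg h.const_nonneg (Real.rpow_nonneg (ballVolume_nonneg 2) _)
  have htail : Tendsto (fun R => (∫ x in annulus R, |f x| ^ s) ^ (2 / s) * c) atTop (𝓝 0) := by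
    simpa [Real.zero_rpow hpow.ne'] using
      ((tendsto_setIntegral_annulus hL).rpow_const (p := 2 / s) (.inr hpow.le)).mul_const c
  refine squeeze_zero' ?_ ?_ htail
  · filter_upwards [eventually_gt_atTop 0] with R hR
    exact integral_nonneg fun x => by have := (h.isAnnularCutoff R hR).nonneg x; positivity
  · filter_upwards [eventually_ge_atTop 1] with R hR
    have hR0 : 0 < R := one_pos.trans_le hR
    have hV := ballVolume_nonneg 2
    calc _ ≤ (∫ x in annulus R, |f x| ^ s) ^ (2 / s) * (K * R ^ m)
          * (ballVolume 2 ^ (1 - (2 / s + 1 / 2)) * R ^ (3 * (1 - (2 / s + 1 / 2)))) := by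
          refine ((h.isAnnularCutoff R hR0).setIntegral_pow_four_mul_sqrt_mul_sq_le_of_four_le
            hR0.le hf hL hs (h.continuous R hR0) (h.nonneg R hR0)).trans ?_
          gcongr
          exact h.rpow_setIntegral_le R hR0
      _ = (∫ x in annulus R, |f x| ^ s) ^ (2 / s) * c * R ^ (m + 3 * (1 / 2 - 2 / s)) := by
          rw [Real.rpow_add hR0, show 3 * (1 - (2 / s + 1 / 2)) = 3 * (1 / 2 - 2 / s) by ring]
          simp only [c]
          ring
      _ ≤ _ := mul_le_of_le_one_right (by positivity)
          (Real.rpow_le_one_of_one_le_of_nonpos hR hm)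

theorem isLittleO_setIntegral_pow_four_mul_sqrt_mul_sq_of_le_four
    (h : IsWeightedCutoffFamily M K m ψ G) (hm : m < 0)
    (hf : ContDiff ℝ ∞ f) (hL : Integrable fun x => |f x| ^ s) (hs : 12 / 5 ≤ s) (hs4 : s ≤ 4)
    (hdecay : Tendsto (fun R : ℝ => R⁻¹ ^ 2 * ∫ x in annulus R, f x ^ 2) atTop (𝓝 0)) :
    (fun R => ∫ x in annulus R, ψ R x ^ 4 * √(G R x) * f x ^ 2)
      =o[atTop] fun R => 1 + ∫ x, ψ R x ^ 6 * gradSq f x := by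
  obtain ⟨a, b, ha, hb, hsum, hab, hb4⟩ := exists_interpolation_exponents hs hs4
  obtain ⟨C, hC, hsix⟩ := eventually_integral_cube_mul_pow_six_le h.isAnnularCutoff hf hdecay
  have hbound : ∀ᶠ R in atTop, ∫ x in annulus R, ψ R x ^ 4 * √(G R x) * f x ^ 2
      ≤ (∫ x, |f x| ^ s) ^ a * C ^ b * K * (R ^ m * (1 + ∫ x, ψ R x ^ 6 * gradSq f x)) := by
    filter_upwards [hsix, eventually_gt_atTop 0] with R hsix hR
    have hD := (h.isAnnularCutoff R hR).integral_pow_six_mul_gradSq_nonneg f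
    have hGR : 0 ≤ (∫ x in annulus R, G R x) ^ (1 / 2 : ℝ) :=
      Real.rpow_nonneg (integral_nonneg (h.nonneg R hR)) _
    have hsix0 : 0 ≤ ∫ x, (ψ R x ^ 3 * f x) ^ 6 := integral_nonneg fun x => by positivity
    have hpow : (∫ x, (ψ R x ^ 3 * f x) ^ 6) ^ b
        ≤ C ^ b * (1 + ∫ x, ψ R x ^ 6 * gradSq f x) := by
      refine (Real.rpow_le_rpow hsix0 hsix hb).trans ?_
      rw [Real.mul_rpow hC (by positivity), ← Real.rpow_natCast, ← Real.rpow_mul (by positivity)]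
      gcongr
      exact Real.rpow_le_self_of_one_le (by linarith) (by push_cast; linarith)
    calc _ ≤ (∫ x, |f x| ^ s) ^ a * (C ^ b * (1 + ∫ x, ψ R x ^ 6 * gradSq f x)) * (K * R ^ m) := by
          refine ((h.isAnnularCutoff R hR).setIntegral_pow_four_mul_sqrt_mul_sq_le_of_exponents
            hf.continuous hL (by linarith) ha hb hsum hab hb4 (h.continuous R hR)
            (h.nonneg R hR)).trans ?_
          gcongr
          exact h.rpow_setIntegral_le R hR
      _ = _ := by ring
  have hRm : (fun R : ℝ => R ^ m) =o[atTop] fun _ => (1 : ℝ) :=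
    (Asymptotics.isLittleO_one_iff ℝ).2 (by simpa using tendsto_rpow_neg_atTop (neg_pos.2 hm))
  refine (Asymptotics.IsBigO.of_bound ((∫ x, |f x| ^ s) ^ a * C ^ b * K) ?_).trans_isLittleO
    (by simpa using hRm.mul_isBigO (Asymptotics.isBigO_refl _ _))
  filter_upwards [hbound, eventually_gt_atTop 0] with R hle hR
  have hD := (h.isAnnularCutoff R hR).integral_pow_six_mul_gradSq_nonneg f
  have hψ := (h.isAnnularCutoff R hR).nonneg
  rw [Real.norm_of_nonneg (integral_nonneg fun x => by have := hψ x; positivity),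
    Real.norm_of_nonneg (by positivity)]
  exact hle

theorem isLittleO_setIntegral_pow_four_mul_sqrt_mul_sq {p : ℝ}
    (h : IsWeightedCutoffFamily M K (1 / 2 - 3 / p) ψ G) (hp : IsAdmissible p p)
    (hs : IsAdmissible p s) (hf : ContDiff ℝ ∞ f) (hL : Integrable fun x => |f x| ^ s) :
    (fun R => ∫ x in annulus R, ψ R x ^ 4 * √(G R x) * f x ^ 2)
      =o[atTop] fun R => 1 + ∫ x, ψ R x ^ 6 * gradSq f x := by
  rcases le_total 4 s with h4 | h4
  · have hone : (fun _ => (1 : ℝ)) =O[atTop] fun R => 1 + ∫ x, ψ R x ^ 6 * gradSq f x :=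
      isBigO_one_one_add ((eventually_gt_atTop 0).mono fun R hR =>
        (h.isAnnularCutoff R hR).integral_pow_six_mul_gradSq_nonneg f)
    have hm : 1 / 2 - 3 / p + 3 * (1 / 2 - 2 / s) = 2 - 3 * (1 / p + 2 / s) := by ring
    exact ((Asymptotics.isLittleO_one_iff ℝ).2 (h.tendsto_setIntegral_pow_four_mul_sqrt_mul_sq
      hf.continuous hL h4 (by linarith [hs.two_thirds_le]))).trans_isBigO hone
  · have hs' : 12 / 5 ≤ s := by
      have := (div_le_iff₀ hs.pos).1 (hp.le_seven_ninths hs)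
      linarith
    have hp3 : 1 / p + 2 / p = 3 / p := by ring
    refine h.isLittleO_setIntegral_pow_four_mul_sqrt_mul_sq_of_le_four
      (by linarith [hp.two_thirds_le]) hf hL hs' h4 ?_
    have hexp : ((2 : ℕ) : ℝ) / s + ((0 : ℕ) : ℝ) / s = 2 / s := by simp
    simpa using tendsto_setIntegral_annulus_pow_mul_pow hs.pos hs.pos hL hL two_ne_zero 0 (n := 2)
      (by rw [hexp]; linarith [hp.le_seven_ninths hs])
      (by rw [hexp]; push_cast; linarith [hp.one_third_le hs])

end IsWeightedCutoffFamily

end PotentialTerm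

theorem integrable_rpow_abs_component {F : Fin 3 → R3 → ℝ} (hF : ∀ i, Continuous (F i)) {s : ℝ}
    (hs : 0 ≤ s) (hL : Integrable fun x => |fieldNorm F x| ^ s) (i : Fin 3) :
    Integrable fun x => |F i x| ^ s := by
  have hcont : Continuous fun x => |F i x| ^ s := (hF i).abs.rpow_const fun _ => .inr hs
  refine hL.mono' hcont.aestronglyMeasurable (.of_forall fun x => ?_)
  rw [Real.norm_of_nonneg (by positivity)]
  exact Real.rpow_le_rpow (abs_nonneg _) ((abs_le_fieldNorm F i x).trans (le_abs_self _)) hs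

namespace IsWeightedCutoffFamily

variable {M K p s : ℝ} {ψ G : ℝ → R3 → ℝ}

theorem isLittleO_setIntegral_pow_four_mul_sqrt_mul_normSq {F : Fin 3 → R3 → ℝ} {D : R3 → ℝ}
    (h : IsWeightedCutoffFamily M K (1 / 2 - 3 / p) ψ G) (hp : IsAdmissible p p)
    (hs : IsAdmissible p s) (hF : ∀ i, ContDiff ℝ ∞ (F i))
    (hL : Integrable fun x => |fieldNorm F x| ^ s) (hD : Continuous D)
    (hle : ∀ i x, gradSq (F i) x ≤ D x) :
    (fun R => ∫ x in annulus R, ψ R x ^ 4 * √(G R x) * normSq F x)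
      =o[atTop] fun R => 1 + ∫ x, ψ R x ^ 6 * D x := by
  have hFc (i : Fin 3) := (hF i).continuous
  have hdom (i : Fin 3) : (fun R => 1 + ∫ x, ψ R x ^ 6 * gradSq (F i) x)
      =O[atTop] fun R => 1 + ∫ x, ψ R x ^ 6 * D x := by
    refine isBigO_one_add_of_le ?_ ?_ <;>
      filter_upwards [eventually_gt_atTop 0] with R hR <;>
      have hψ := h.isAnnularCutoff R hR
    · exact hψ.integral_pow_six_mul_gradSq_nonneg (F i)
    · have hψc := hψ.contDiff.continuous
      exact integral_mono_of_nonneg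
        (.of_forall fun x => mul_nonneg (pow_nonneg (hψ.nonneg x) 6) (gradSq_nonneg _ x))
        (Continuous.integrable_of_hasCompactSupport (by fun_prop)
          (hψ.pow (n := 6) (by norm_num)).hasCompactSupport.mul_right)
        (.of_forall fun x => mul_le_mul_of_nonneg_left (hle i x) (pow_nonneg (hψ.nonneg x) 6))
  refine (Asymptotics.IsLittleO.sum (s := Finset.univ) fun i _ =>
    (h.isLittleO_setIntegral_pow_four_mul_sqrt_mul_sq hp hs (hF i)
      (integrable_rpow_abs_component hFc hs.pos.le hL i)).trans_isBigO (hdom i)).congr' ?_ .rfl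
  filter_upwards [eventually_gt_atTop 0] with R hR
  have hψc := (h.isAnnularCutoff R hR).contDiff.continuous
  have hGc := h.continuous R hR
  rw [Finset.sum_apply, ← integral_finsetSum _ fun i _ => (Continuous.continuousOn
    (by fun_prop)).integrableOn_compact (isCompact_annulus R)]
  simp only [normSq, Finset.mul_sum]

theorem tendsto_setIntegral_zero (h : IsWeightedCutoffFamily M K (1 / 2 - 3 / p) ψ G)
    (hp : IsAdmissible p p) : Tendsto (fun R => ∫ x in annulus R, G R x) atTop (𝓝 0) := by
  have hp3 : 1 / p + 2 / p = 3 / p := by ring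
  have hm : 0 < 3 / p - 1 / 2 := by linarith [hp.two_thirds_le]
  have htail : Tendsto (fun R : ℝ => (K * R ^ (1 / 2 - 3 / p)) ^ 2) atTop (𝓝 0) := by
    simpa using ((tendsto_rpow_neg_atTop hm).const_mul K).pow 2
  refine squeeze_zero' ?_ ?_ htail
  · filter_upwards [eventually_gt_atTop 0] with R hR
    exact integral_nonneg (h.nonneg R hR)
  · filter_upwards [eventually_gt_atTop 0] with R hR
    have hG : 0 ≤ ∫ x in annulus R, G R x := integral_nonneg (h.nonneg R hR)
    have hle := h.rpow_setIntegral_le R hR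
    rw [← Real.sqrt_eq_rpow] at hle
    exact (Real.sq_sqrt hG).symm.le.trans (pow_le_pow_left₀ (Real.sqrt_nonneg _) hle 2)

end IsWeightedCutoffFamily

theorem exists_setIntegral_closedBall_normSq_le {F : Fin 3 → R3 → ℝ} {s : ℝ} (hs : 2 ≤ s)
    (hL : Integrable fun x => |fieldNorm F x| ^ s) :
    ∃ K, 0 ≤ K ∧ ∀ R : ℝ, 0 < R →
      R⁻¹ ^ 2 * ∫ x in closedBall (0 : R3) (4 * R), normSq F x ≤ K * R ^ (1 - 6 / s) := by
  have hs0 : 0 < s := by linarith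
  have hV := ballVolume_nonneg 4
  refine ⟨(∫ x, |fieldNorm F x| ^ s) ^ (2 / s) * ballVolume 4 ^ (1 - 2 / s), by positivity,
    fun R hR => ?_⟩
  have hsq (x : R3) : (|fieldNorm F x| ^ s) ^ (2 / s) = normSq F x := by
    simpa [fieldNorm_sq] using abs_rpow_rpow_div (fieldNorm F x) hs0 2
  have hholder : ∫ x in closedBall 0 (4 * R), normSq F x
      ≤ (∫ x in closedBall 0 (4 * R), |fieldNorm F x| ^ s) ^ (2 / s)
        * (ballVolume 4 ^ (1 - 2 / s) * R ^ (3 * (1 - 2 / s))) := by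
    simpa [hsq] using setIntegral_rpow_mul_rpow_le (f := fun x => |fieldNorm F x| ^ s) (g := 0)
      (a := 2 / s) (b := 0) zero_le_four hR.le subset_rfl hL.integrableOn integrableOn_zero
      (fun _ => by positivity) (fun _ => le_rfl) (by positivity) le_rfl
      (by rw [add_zero]; exact (div_le_one hs0).2 hs)
  have hmono : ∫ x in closedBall 0 (4 * R), |fieldNorm F x| ^ s ≤ ∫ x, |fieldNorm F x| ^ s :=
    setIntegral_le_integral hL (.of_forall fun x => by positivity)
  calc _ ≤ R⁻¹ ^ 2 * ((∫ x, |fieldNorm F x| ^ s) ^ (2 / s)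
        * (ballVolume 4 ^ (1 - 2 / s) * R ^ (3 * (1 - 2 / s)))) := by
        refine mul_le_mul_of_nonneg_left (hholder.trans ?_) (by positivity)
        gcongr
    _ = (∫ x, |fieldNorm F x| ^ s) ^ (2 / s) * ballVolume 4 ^ (1 - 2 / s)
        * (R ^ (-2 : ℝ) * R ^ (3 * (1 - 2 / s))) := by
        rw [Real.rpow_neg hR.le, Real.rpow_two]
        ring
    _ = _ := by
        rw [← Real.rpow_add hR]
        ring_nf

theorem IsTropicalClimateFlow.exists_isWeightedCutoffFamily {u v : Fin 3 → R3 → ℝ}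
    {π θ : R3 → ℝ} (h : IsTropicalClimateFlow u v π θ) {p : ℝ} (hp : 2 ≤ p)
    (hLu : Integrable fun x => |fieldNorm u x| ^ p) :
    ∃ C K ψ G, IsWeightedCutoffFamily C K (1 / 2 - 3 / p) ψ G ∧
      ∀ R, 0 < R → ∫ x, ψ R x ^ 6 * dissipation u v θ x
        ≤ C * ∫ x in annulus R, errorDensity R u v θ (ψ R) (G R) x := by
  obtain ⟨C, hC, henergy⟩ := exists_localEnergyInequality
  obtain ⟨K, hK, hball⟩ := exists_setIntegral_closedBall_normSq_le hp hLu
  choose! ψ G hψ hGc hG0 hG hle using henergy u v π θ h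
  refine ⟨C, (C * K) ^ (1 / 2 : ℝ), ψ, G, ⟨hψ, hGc, hG0, fun R hR => ?_⟩, hle⟩
  calc _ ≤ (C * K * R ^ (1 - 6 / p)) ^ (1 / 2 : ℝ) := by
        refine Real.rpow_le_rpow (integral_nonneg (hG0 R hR)) ((hG R hR).trans ?_) (by norm_num)
        rw [mul_assoc]
        exact mul_le_mul_of_nonneg_left (hball R hR) hC
    _ = _ := by
        rw [Real.mul_rpow (by positivity) (by positivity), ← Real.rpow_mul hR.le]
        ring_nf

section Dissipation

variable {u v : Fin 3 → R3 → ℝ} {θ : R3 → ℝ} {p q r C K : ℝ} {ψ G : ℝ → R3 → ℝ}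

theorem setIntegral_errorDensity {ψ G : R3 → ℝ} (hu : ∀ i, Continuous (u i))
    (hv : ∀ i, Continuous (v i)) (hθ : Continuous θ) (hψ : Continuous ψ) (hG : Continuous G)
    (R : ℝ) : ∫ x in annulus R, errorDensity R u v θ ψ G x
      = R⁻¹ ^ 2 * (∫ x in annulus R, energyDensity u v θ x)
        + R⁻¹ * (∫ x in annulus R, fieldNorm u x * energyDensity u v θ x)
        + R⁻¹ * (∫ x in annulus R, |θ x| * fieldNorm v x)
        + ((∫ x in annulus R, ψ x ^ 4 * √(G x) * normSq u x)
          + ∫ x in annulus R, ψ x ^ 4 * √(G x) * normSq v x)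
        + ∫ x in annulus R, G x := by
  have hint {g : R3 → ℝ} (hg : Continuous g) : IntegrableOn g (annulus R) :=
    hg.continuousOn.integrableOn_compact (isCompact_annulus R)
  simp only [errorDensity, energyDensity, mul_add (_ * √_)]
  rw [integral_add, integral_add, integral_add, integral_add, integral_add, integral_const_mul,
    integral_const_mul, integral_const_mul] <;> exact hint (by fun_prop)

theorem tendsto_setIntegral_energyDensity_add_coupling (hu : ∀ i, Continuous (u i))
    (hv : ∀ i, Continuous (v i)) (hθ : Continuous θ) (hp : IsAdmissible p p)
    (hq : IsAdmissible p q) (hr : IsAdmissible p r) (hqr : 2 / 3 ≤ 1 / q + 1 / r)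
    (hLu : Integrable fun x => |fieldNorm u x| ^ p) (hLv : Integrable fun x => |fieldNorm v x| ^ q)
    (hLθ : Integrable fun x => |θ x| ^ r) :
    Tendsto (fun R => R⁻¹ ^ 2 * (∫ x in annulus R, energyDensity u v θ x)
        + R⁻¹ * (∫ x in annulus R, fieldNorm u x * energyDensity u v θ x)
        + R⁻¹ * (∫ x in annulus R, |θ x| * fieldNorm v x)) atTop (𝓝 0) := by
  have hmem {P : ℝ → Prop} (hP : ∀ s, IsAdmissible p s → P s) :
      ∀ s ∈ ({p, q, r} : Set ℝ), P s := by
    rintro s (rfl | rfl | rfl)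
    exacts [hP _ hp, hP _ hq, hP _ hr]
  have hviscous := tendsto_setIntegral_energyDensity hu hv hθ hp.pos hq.pos hr.pos hLu hLv hLθ
    (l := 0) (n := 2)
    (hmem fun s hs => by
      simp only [Nat.cast_zero, zero_div, add_zero]
      linarith [hp.le_seven_ninths hs])
    (hmem fun s hs => by
      simp only [Nat.cast_zero, zero_div, add_zero, Nat.cast_ofNat]
      linarith [hp.one_third_le hs])
  have htransport := tendsto_setIntegral_energyDensity hu hv hθ hp.pos hq.pos hr.pos hLu hLv hLθ
    (l := 1) (n := 1)
    (hmem fun s hs => by push_cast; linarith [hs.le_one])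
    (hmem fun s hs => by push_cast; linarith [hs.two_thirds_le])
  have hq2 : 2 / q = 2 * (1 / q) := by ring
  have hr2 : 2 / r = 2 * (1 / r) := by ring
  have hcoupling := tendsto_setIntegral_annulus_pow_mul_pow hr.pos hq.pos hLθ hLv one_ne_zero 1
    (n := 1) (by push_cast; linarith [hp.le_seven_ninths hq, hp.le_seven_ninths hr])
    (by push_cast; linarith)
  simp only [pow_zero, one_mul] at hviscous
  simp only [pow_one] at htransport hcoupling
  simpa only [add_zero, abs_of_nonneg (fieldNorm_nonneg v _)] using
    (hviscous.add htransport).add hcoupling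

theorem gradSq_le_dissipation (u v : Fin 3 → R3 → ℝ) (θ : R3 → ℝ) (x : R3) :
    (∀ i, gradSq (u i) x ≤ dissipation u v θ x) ∧ (∀ i, gradSq (v i) x ≤ dissipation u v θ x) ∧
      gradSq θ x ≤ dissipation u v θ x := by
  have hsum (F : Fin 3 → R3 → ℝ) : 0 ≤ ∑ i, gradSq (F i) x :=
    Finset.sum_nonneg fun i _ => gradSq_nonneg (F i) x
  have hle (F : Fin 3 → R3 → ℝ) (i : Fin 3) : gradSq (F i) x ≤ ∑ i, gradSq (F i) x :=
    Finset.single_le_sum (fun i _ => gradSq_nonneg (F i) x) (Finset.mem_univ i)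
  unfold dissipation
  have hθ := gradSq_nonneg θ x
  exact ⟨fun i => by linarith [hsum v, hle u i], fun i => by linarith [hsum u, hle v i],
    by linarith [hsum u, hsum v]⟩

theorem isLittleO_setIntegral_errorDensity (h : IsWeightedCutoffFamily C K (1 / 2 - 3 / p) ψ G)
    (hu : ∀ i, ContDiff ℝ ∞ (u i)) (hv : ∀ i, ContDiff ℝ ∞ (v i)) (hθ : ContDiff ℝ ∞ θ)
    (hp : IsAdmissible p p) (hq : IsAdmissible p q) (hr : IsAdmissible p r)
    (hqr : 2 / 3 ≤ 1 / q + 1 / r) (hLu : Integrable fun x => |fieldNorm u x| ^ p)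
    (hLv : Integrable fun x => |fieldNorm v x| ^ q) (hLθ : Integrable fun x => |θ x| ^ r) :
    (fun R => ∫ x in annulus R, errorDensity R u v θ (ψ R) (G R) x)
      =o[atTop] fun R => 1 + ∫ x, ψ R x ^ 6 * dissipation u v θ x := by
  have huc (i : Fin 3) := (hu i).continuous
  have hvc (i : Fin 3) := (hv i).continuous
  have hθc := hθ.continuous
  have hD := continuous_dissipation hu hv hθ
  have hone : (fun _ => (1 : ℝ)) =O[atTop] fun R => 1 + ∫ x, ψ R x ^ 6 * dissipation u v θ x :=
    isBigO_one_one_add ((eventually_gt_atTop 0).mono fun R hR => integral_nonneg fun x =>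
      mul_nonneg (pow_nonneg ((h.isAnnularCutoff R hR).nonneg x) 6) (dissipation_nonneg u v θ x))
  have hsmall {e : ℝ → ℝ} (he : Tendsto e atTop (𝓝 0)) :=
    ((Asymptotics.isLittleO_one_iff ℝ).2 he).trans_isBigO hone
  have hpotential_u := h.isLittleO_setIntegral_pow_four_mul_sqrt_mul_normSq hp hp hu hLu hD
    fun i x => (gradSq_le_dissipation u v θ x).1 i
  have hpotential_v := h.isLittleO_setIntegral_pow_four_mul_sqrt_mul_normSq hp hq hv hLv hD
    fun i x => (gradSq_le_dissipation u v θ x).2.1 i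
  have hlower := hsmall
    (tendsto_setIntegral_energyDensity_add_coupling huc hvc hθc hp hq hr hqr hLu hLv hLθ)
  refine ((hlower.add (hpotential_u.add hpotential_v)).add
    (hsmall (h.tendsto_setIntegral_zero hp))).congr' ?_ .rfl
  filter_upwards [eventually_gt_atTop 0] with R hR
  exact (setIntegral_errorDensity huc hvc hθc (h.isAnnularCutoff R hR).contDiff.continuous
    (h.continuous R hR) R).symm

end Dissipation

section Vanishing

theorem eq_zero_of_gradSq_eq_zero {f : R3 → ℝ} {s : ℝ} (hf : ContDiff ℝ ∞ f) (hs : s ≠ 0)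
    (hL : Integrable fun x => |f x| ^ s) (hgrad : ∀ x, gradSq f x = 0) (x : R3) : f x = 0 := by
  have hfderiv (y : R3) : fderiv ℝ f y = 0 := by
    have hle := norm_fderiv_sq_le_gradSq f y
    rw [hgrad y] at hle
    exact norm_eq_zero.1 (pow_eq_zero_iff two_ne_zero |>.1 (hle.antisymm (sq_nonneg _)))
  have hconst (y : R3) : f y = f x :=
    is_const_of_fderiv_eq_zero (hf.differentiable (by norm_num)) hfderiv y x
  simp only [hconst, integrable_const_iff] at hL
  rcases hL with h0 | hfinite
  · exact abs_eq_zero.1 ((Real.rpow_eq_zero (abs_nonneg _) hs).1 h0)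
  · exact absurd (measure_lt_top (volume : Measure R3) Set.univ) (by simp)

theorem eq_zero_of_tendsto_integral_pow_six_mul {D : R3 → ℝ} {M : ℝ} {ψ : ℝ → R3 → ℝ}
    (hψ : ∀ R, 0 < R → IsAnnularCutoff M R (ψ R)) (hD : Continuous D) (hD0 : ∀ x, 0 ≤ D x)
    (hlim : Tendsto (fun R => ∫ x, ψ R x ^ 6 * D x) atTop (𝓝 0)) (x : R3) : D x = 0 := by
  by_contra hx
  have hρ : 0 < ‖x‖ + 1 := by positivity
  have hnonneg {R : ℝ} (hR : 0 < R) (y : R3) : 0 ≤ ψ R y ^ 6 * D y :=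
    mul_nonneg (pow_nonneg ((hψ R hR).nonneg y) 6) (hD0 y)
  have hcont {R : ℝ} (hR : 0 < R) : Continuous fun y => ψ R y ^ 6 * D y :=
    ((hψ R hR).contDiff.continuous.pow 6).mul hD
  have hsupp {R : ℝ} (hR : 0 < R) : HasCompactSupport fun y => ψ R y ^ 6 * D y :=
    ((hψ R hR).pow (n := 6) (by norm_num)).hasCompactSupport.mul_right
  have hpos : 0 < ∫ y, ψ (‖x‖ + 1) y ^ 6 * D y := by
    refine (hcont hρ).integral_pos_of_hasCompactSupport_nonneg_nonzero (hsupp hρ) (hnonneg hρ)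
      (x := x) ?_
    rw [(hψ _ hρ).eq_one x (by simp), one_pow, one_mul]
    exact hx
  refine hpos.not_ge (ge_of_tendsto hlim ?_)
  filter_upwards [eventually_ge_atTop (2 * (‖x‖ + 1))] with R hR
  have hR0 : 0 < R := by linarith
  refine integral_mono ((hcont hρ).integrable_of_hasCompactSupport (hsupp hρ))
    ((hcont hR0).integrable_of_hasCompactSupport (hsupp hR0)) fun y => ?_
  by_cases hy : y ∈ closedBall (0 : R3) (2 * (‖x‖ + 1))
  · rw [(hψ R hR0).eq_one y (closedBall_subset_closedBall hR hy), one_pow, one_mul]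
    exact mul_le_of_le_one_left (hD0 y)
      (pow_le_one₀ ((hψ _ hρ).nonneg y) ((hψ _ hρ).le_one y))
  · rw [(hψ _ hρ).eq_zero hy]
    simpa using hnonneg hR0 y

end Vanishing

theorem IsTropicalClimateFlow.eq_zero {u v : Fin 3 → R3 → ℝ} {π θ : R3 → ℝ} {p q r : ℝ}
    (h : IsTropicalClimateFlow u v π θ) (hp : IsAdmissible p p) (hq : IsAdmissible p q)
    (hr : IsAdmissible p r) (hqr : 2 / 3 ≤ 1 / q + 1 / r)
    (hLu : Integrable fun x => |fieldNorm u x| ^ p) (hLv : Integrable fun x => |fieldNorm v x| ^ q)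
    (hLθ : Integrable fun x => |θ x| ^ r) :
    (∀ i x, u i x = 0) ∧ (∀ i x, v i x = 0) ∧ ∀ x, θ x = 0 := by
  have hu := h.contDiff_velocity
  have hv := h.contDiff_baroclinic
  have hθ := h.contDiff_temperature
  have hp3 := ((isAdmissible_self_iff hp.pos).1 hp).1
  obtain ⟨C, K, ψ, G, hfamily, henergy⟩ := h.exists_isWeightedCutoffFamily (by linarith) hLu
  have hle : (fun R => ∫ x, ψ R x ^ 6 * dissipation u v θ x)
      =O[atTop] fun R => ∫ x in annulus R, errorDensity R u v θ (ψ R) (G R) x := by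
    refine .of_bound C ?_
    filter_upwards [eventually_gt_atTop 0] with R hR
    have hψ := hfamily.isAnnularCutoff R hR
    rw [Real.norm_of_nonneg (integral_nonneg fun x =>
        mul_nonneg (pow_nonneg (hψ.nonneg x) 6) (dissipation_nonneg u v θ x)),
      Real.norm_of_nonneg (integral_nonneg fun x =>
        errorDensity_nonneg hR.le (hfamily.nonneg R hR x))]
    exact henergy R hR
  have hdissipation (x : R3) : dissipation u v θ x = 0 :=
    eq_zero_of_tendsto_integral_pow_six_mul hfamily.isAnnularCutoff
      (continuous_dissipation hu hv hθ) (dissipation_nonneg u v θ)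
      (tendsto_zero_of_isLittleO_one_add (hle.trans_isLittleO
        (isLittleO_setIntegral_errorDensity hfamily hu hv hθ hp hq hr hqr hLu hLv hLθ))) x
  have hgrad {f : R3 → ℝ} (hf : ∀ x, gradSq f x ≤ dissipation u v θ x) (x : R3) : gradSq f x = 0 :=
    ((hf x).trans_eq (hdissipation x)).antisymm (gradSq_nonneg f x)
  refine ⟨fun i => eq_zero_of_gradSq_eq_zero (hu i) hp.pos.ne'
      (integrable_rpow_abs_component (fun i => (hu i).continuous) hp.pos.le hLu i)
      (hgrad fun x => (gradSq_le_dissipation u v θ x).1 i),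
    fun i => eq_zero_of_gradSq_eq_zero (hv i) hq.pos.ne'
      (integrable_rpow_abs_component (fun i => (hv i).continuous) hq.pos.le hLv i)
      (hgrad fun x => (gradSq_le_dissipation u v θ x).2.1 i),
    eq_zero_of_gradSq_eq_zero hθ hr.pos.ne' hLθ
      (hgrad fun x => (gradSq_le_dissipation u v θ x).2.2)⟩

theorem fieldNorm_components (F : R3 → R3) (x : R3) : fieldNorm (fun i y => F y i) x = ‖F x‖ := by
  simp only [fieldNorm, normSq, EuclideanSpace.norm_eq, Real.norm_eq_abs, sq_abs]

theorem contDiff_component {F : R3 → R3} (hF : ContDiff ℝ ∞ F) (i : Fin 3) :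
    ContDiff ℝ ∞ fun y => F y i :=
  (EuclideanSpace.proj i : R3 →L[ℝ] ℝ).contDiff.comp hF

theorem TCM.isTropicalClimateFlow {u v : R3 → R3} {π θ : R3 → ℝ} (h : TCM u v π θ)
    (hu : ContDiff ℝ ∞ u) (hv : ContDiff ℝ ∞ v) (hπ : ContDiff ℝ ∞ π) (hθ : ContDiff ℝ ∞ θ) :
    IsTropicalClimateFlow (fun i y => u y i) (fun i y => v y i) π θ where
  contDiff_velocity := contDiff_component hu
  contDiff_baroclinic := contDiff_component hv
  contDiff_pressure := hπ
  contDiff_temperature := hθ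
  velocity_eq := h.1
  baroclinic_eq := h.2.1
  temperature_eq := h.2.2.1
  incompressible := h.2.2.2

theorem integrable_rpow_abs_of_lintegral_lt_top {f : R3 → ℝ} {s : ℝ} (hf : Continuous f)
    (hs : 0 ≤ s) (h : ∫⁻ x, ENNReal.ofReal (|f x| ^ s) < ⊤) :
    Integrable fun x => |f x| ^ s :=
  ⟨(hf.abs.rpow_const fun _ => .inr hs).aestronglyMeasurable,
    (hasFiniteIntegral_iff_ofReal (.of_forall fun x => by positivity)).2 h⟩

theorem integrable_rpow_fieldNorm_of_lintegral_lt_top {F : R3 → R3} {s : ℝ} (hF : Continuous F)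
    (hs : 0 ≤ s) (h : ∫⁻ x, ENNReal.ofReal (‖F x‖ ^ s) < ⊤) :
    Integrable fun x => |fieldNorm (fun i y => F y i) x| ^ s := by
  simp only [fieldNorm_components]
  exact integrable_rpow_abs_of_lintegral_lt_top hF.norm hs (by simpa only [abs_norm] using h)

theorem liouville_tcm_B8 (u v : R3 → R3) (pr θ : R3 → ℝ)
    (hu : ContDiff ℝ (⊤ : ℕ∞) u) (hv : ContDiff ℝ (⊤ : ℕ∞) v)
    (hpr : ContDiff ℝ (⊤ : ℕ∞) pr) (hθ : ContDiff ℝ (⊤ : ℕ∞) θ)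
    (hsol : TCM u v pr θ)
    (p q r : ℝ)
    (hp1 : 3 ≤ p) (hp2 : p ≤ 9 / 2)
    (hq1 : 2 * (p / (p - 1)) ≤ q) (hq2 : q ≤ 6)
    (hr1 : 2 * (p / (p - 1)) ≤ r) (hr2 : r ≤ 6)
    (hpq : 2 / 3 ≤ 1 / p + 2 / q) (hpr2 : 2 / 3 ≤ 1 / p + 2 / r)
    (hqr : 2 / 3 ≤ 1 / q + 1 / r)
    (hLu : (∫⁻ x : R3, ENNReal.ofReal (‖u x‖ ^ p)) < ⊤)
    (hLv : (∫⁻ x : R3, ENNReal.ofReal (‖v x‖ ^ q)) < ⊤)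
    (hLθ : (∫⁻ x : R3, ENNReal.ofReal (|θ x| ^ r)) < ⊤) :
    (∀ x, u x = 0) ∧ (∀ x, v x = 0) ∧ (∀ x, θ x = 0) := by
  have hp : IsAdmissible p p := (isAdmissible_self_iff (by linarith)).2 ⟨hp1, hp2⟩
  have hq : IsAdmissible p q := isAdmissible_of_conjExponent_le (by linarith) hq1 hpq
  have hr : IsAdmissible p r := isAdmissible_of_conjExponent_le (by linarith) hr1 hpr2
  obtain ⟨hu0, hv0, hθ0⟩ := (hsol.isTropicalClimateFlow hu hv hpr hθ).eq_zero hp hq hr hqr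
    (integrable_rpow_fieldNorm_of_lintegral_lt_top hu.continuous hp.pos.le hLu)
    (integrable_rpow_fieldNorm_of_lintegral_lt_top hv.continuous hq.pos.le hLv)
    (integrable_rpow_abs_of_lintegral_lt_top hθ.continuous hr.pos.le hLθ)
  exact ⟨fun x => by ext i; exact hu0 i x, fun x => by ext i; exact hv0 i x, hθ0⟩
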